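/- For every ε > 0 there exists N such that for all n ≥ N, every truly n-variate Boolean function f : {0,1}^n → {0,1} satisfies pdeg(f) ≥ (log₂ n)^{1/3−ε}. -/

import Mathlib

open scoped Classical

noncomputable def evalBool {ι : Type} (a : ι → Bool) (P : MvPolynomial ι ℝ) : ℝ :=
  MvPolynomial.eval (fun i => if a i then (1:ℝ) else 0) P

def HasProbPoly {ι : Type} (f : (ι → Bool) → Bool) (ε : ℝ) (d : ℕ) : Prop :=
  ∃ (k : ℕ) (w : Fin k → ℝ) (P : Fin k → MvPolynomial ι ℝ),
    (∀ i, 0 ≤ w i) ∧ (∑ i, w i = 1) ∧ (∀ i, (P i).totalDegree ≤ d) ∧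
    ∀ a : ι → Bool,
      ∑ i ∈ Finset.univ.filter
          (fun i => evalBool a (P i) ≠ (if f a then (1:ℝ) else 0)), w i ≤ ε

noncomputable def pdeg {ι : Type} (ε : ℝ) (f : (ι → Bool) → Bool) : ℕ :=
  sInf {d | HasProbPoly f ε d}

def TrulyVariate {ι : Type} (f : (ι → Bool) → Bool) : Prop :=
  ∀ i : ι, ∃ a, f (Function.update a i (!(a i))) ≠ f a

def ORf (n : ℕ) : (Fin n → Bool) → Bool := fun a => decide (∃ i, a i = true)

noncomputable def sensitivity {n : ℕ} (f : (Fin n → Bool) → Bool) : ℕ :=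
  Finset.univ.sup (fun a : Fin n → Bool =>
    (Finset.univ.filter (fun i : Fin n => f (Function.update a i (!(a i))) ≠ f a)).card)

/-!
By taking majorities, a probabilistic polynomial of degree `d` for `f` yields, under every
distribution on the cube, a polynomial of degree `D = O(d)` that differs from `f` with probability
at most `1 / 100`. The proof bounds the number of variables of such an `f` by `D ^ O(D ^ 3)`.

* A polynomial of degree `D` in which no variable is influential takes any given value with
  probability bounded away from `1`: by the invariance principle it can be rotated by a small angle,
  along which it does not stay small, and by hypercontractivity of the noise operator it then cannot
  vanish too often. Restricting the influential variables repeatedly shows that a polynomial with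
  `D ^ O(D)` disjoint monomials of top degree is anticoncentrated. The top-degree monomials of any
  other polynomial are hit by few variables.
* Suppose that flipping any of the `D ^ O(D ^ 2)` bits of the zero vector changes `f`. Arrange the
  bits as the leaves of a tree of depth `2 * D + 2`, and truncate an approximation of `f` to the
  subtrees along a random path. The degree of the truncation can drop at most `D` times, so at some
  level it persists. There the truncation is anticoncentrated, hence a bad approximation, unless
  the path has run into one of the few subtrees that meet the hitting set, which is unlikely.
  Hence the block sensitivity and the certificates of `f` are of size `D ^ O(D ^ 2)`.
* Hash the variables into few buckets. For a variable `i` whose certificates are hashed injectively,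
  one can fix the other buckets to constants so that `f` depends only on the bit at `i`.
  The values of an approximation at these points form vectors in a subspace whose dimension does not
  depend on the number of variables, but which are close to all vectors of the Boolean cube.
-/

/-! ### Finite probability spaces -/

section Expectation

variable {Ω Ω' κ : Type*} [Fintype Ω] [Fintype Ω']

/-- The expectation of `F` under the weights `w`, a probability measure on the finite type `Ω` when
`w ∈ stdSimplex ℝ Ω`. -/
def expect (w F : Ω → ℝ) : ℝ := ∑ ω, w ω * F ω

/-- The probability of the event `p` under the weights `w`. -/
noncomputable def prob (w : Ω → ℝ) (p : Ω → Prop) : ℝ := ∑ ω with p ω, w ω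

/-- The uniform probability weights on a nonempty finite type. -/
noncomputable def uniformWeight (Ω : Type*) [Fintype Ω] : Ω → ℝ := fun _ ↦ (Fintype.card Ω : ℝ)⁻¹

lemma uniformWeight_mem_stdSimplex [Nonempty Ω] : uniformWeight Ω ∈ stdSimplex ℝ Ω :=
  ⟨fun _ ↦ by simp only [uniformWeight]; positivity, by simp [uniformWeight]⟩

lemma expect_add (w F G : Ω → ℝ) :
    expect w (fun ω ↦ F ω + G ω) = expect w F + expect w G := by
  simp [expect, mul_add, Finset.sum_add_distrib]

lemma expect_sub (w F G : Ω → ℝ) :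
    expect w (fun ω ↦ F ω - G ω) = expect w F - expect w G := by
  simp [expect, mul_sub, Finset.sum_sub_distrib]

lemma expect_mul_left (w : Ω → ℝ) (r : ℝ) (F : Ω → ℝ) :
    expect w (fun ω ↦ r * F ω) = r * expect w F := by
  simp only [expect, Finset.mul_sum, mul_left_comm]

lemma expect_mul_right (w F : Ω → ℝ) (r : ℝ) :
    expect w (fun ω ↦ F ω * r) = expect w F * r := by
  simp only [expect, Finset.sum_mul, mul_assoc]

lemma expect_sum (w : Ω → ℝ) (s : Finset κ) (F : κ → Ω → ℝ) :
    expect w (fun ω ↦ ∑ k ∈ s, F k ω) = ∑ k ∈ s, expect w (F k) := by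
  simp only [expect, Finset.mul_sum]
  exact Finset.sum_comm

lemma prob_eq_expect (w : Ω → ℝ) (p : Ω → Prop) [DecidablePred p] :
    prob w p = expect w fun ω ↦ if p ω then 1 else 0 := by
  simp only [prob, expect, mul_ite, mul_one, mul_zero, ← Finset.sum_filter]
  congr!

variable {w F G : Ω → ℝ}

lemma expect_const (hw : w ∈ stdSimplex ℝ Ω) (r : ℝ) : expect w (fun _ ↦ r) = r := by
  rw [expect, ← Finset.sum_mul, hw.2, one_mul]

lemma expect_mono (hw : w ∈ stdSimplex ℝ Ω) (h : ∀ ω, F ω ≤ G ω) : expect w F ≤ expect w G :=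
  Finset.sum_le_sum fun ω _ ↦ mul_le_mul_of_nonneg_left (h ω) (hw.1 ω)

lemma expect_nonneg (hw : w ∈ stdSimplex ℝ Ω) (h : ∀ ω, 0 ≤ F ω) : 0 ≤ expect w F :=
  Finset.sum_nonneg fun ω _ ↦ mul_nonneg (hw.1 ω) (h ω)

lemma abs_expect_le (hw : w ∈ stdSimplex ℝ Ω) (F : Ω → ℝ) :
    |expect w F| ≤ expect w fun ω ↦ |F ω| := by
  refine (Finset.abs_sum_le_sum_abs _ _).trans_eq (Finset.sum_congr rfl fun ω _ ↦ ?_)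
  rw [abs_mul, abs_of_nonneg (hw.1 ω)]

lemma exists_le_expect (hw : w ∈ stdSimplex ℝ Ω) (F : Ω → ℝ) : ∃ ω, F ω ≤ expect w F := by
  have : Nonempty Ω := by
    by_contra h
    have := not_nonempty_iff.1 h
    simpa using hw.2
  obtain ⟨ω₀, hω₀⟩ := Finite.exists_min F
  exact ⟨ω₀, (expect_const hw _).symm.trans_le (expect_mono hw hω₀)⟩

lemma sq_expect_mul_le (hw : w ∈ stdSimplex ℝ Ω) (F G : Ω → ℝ) :
    expect w (fun ω ↦ F ω * G ω) ^ 2 ≤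
      expect w (fun ω ↦ F ω ^ 2) * expect w (fun ω ↦ G ω ^ 2) :=
  Finset.sum_sq_le_sum_mul_sum_of_sq_le_mul _ (fun ω _ ↦ mul_nonneg (hw.1 ω) (sq_nonneg _))
    (fun ω _ ↦ mul_nonneg (hw.1 ω) (sq_nonneg _)) fun ω _ ↦ le_of_eq (by ring)

lemma prob_nonneg (hw : w ∈ stdSimplex ℝ Ω) (p : Ω → Prop) : 0 ≤ prob w p :=
  Finset.sum_nonneg fun ω _ ↦ hw.1 ω

lemma prob_not (hw : w ∈ stdSimplex ℝ Ω) (p : Ω → Prop) :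
    prob w (fun ω ↦ ¬ p ω) = 1 - prob w p := by
  rw [eq_sub_iff_add_eq', ← hw.2, prob, prob]
  convert Finset.sum_filter_add_sum_filter_not Finset.univ p w

lemma prob_le_prob_add_prob (hw : w ∈ stdSimplex ℝ Ω) {p q r : Ω → Prop}
    (h : ∀ ω, p ω → q ω ∨ r ω) : prob w p ≤ prob w q + prob w r := by
  simp only [prob_eq_expect, ← expect_add]
  refine expect_mono hw fun ω ↦ ?_
  have := h ω
  split_ifs <;> simp_all

lemma prob_mono (hw : w ∈ stdSimplex ℝ Ω) {p q : Ω → Prop} (h : ∀ ω, p ω → q ω) :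
    prob w p ≤ prob w q :=
  Finset.sum_le_sum_of_subset_of_nonneg
    (fun ω hω ↦ by simpa using h ω (by simpa using hω)) fun ω _ _ ↦ hw.1 ω

lemma prob_le_one (hw : w ∈ stdSimplex ℝ Ω) (p : Ω → Prop) : prob w p ≤ 1 :=
  (Finset.sum_le_univ_sum_of_nonneg hw.1).trans_eq hw.2

lemma mul_prob_le_expect (hw : w ∈ stdSimplex ℝ Ω) (hF : ∀ ω, 0 ≤ F ω) (t : ℝ) :
    t * prob w (fun ω ↦ t ≤ F ω) ≤ expect w F := by
  rw [prob_eq_expect, ← expect_mul_left]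
  refine expect_mono hw fun ω ↦ ?_
  split_ifs with h
  · simpa using h
  · simpa using hF ω

/-- The Paley–Zygmund inequality. -/
lemma sq_expect_sub_le (hw : w ∈ stdSimplex ℝ Ω) {t : ℝ} (ht : 0 ≤ t) (htF : t ≤ expect w F) :
    (expect w F - t) ^ 2 ≤ expect w (fun ω ↦ F ω ^ 2) * prob w fun ω ↦ t ≤ F ω := by
  have tail : expect w F ≤ t + expect w fun ω ↦ F ω * if t ≤ F ω then 1 else 0 := by
    rw [← expect_const hw t, ← expect_add]
    refine expect_mono hw fun ω ↦ ?_
    rw [expect_const hw]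
    split_ifs with h
    · linarith
    · linarith [not_le.1 h]
  calc (expect w F - t) ^ 2
      ≤ expect w (fun ω ↦ F ω * if t ≤ F ω then 1 else 0) ^ 2 :=
        pow_le_pow_left₀ (sub_nonneg.2 htF) (sub_le_iff_le_add'.2 tail) 2
    _ ≤ _ := sq_expect_mul_le hw _ _
    _ = _ := by simp [prob_eq_expect]

lemma one_le_two_mul_prob_of_expect_sq_le (hw : w ∈ stdSimplex ℝ Ω) {C t : ℝ}
    (hC : expect w (fun ω ↦ F ω ^ 2) ≤ C * expect w F ^ 2) (hpos : 0 < expect w F)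
    (ht : t ≤ expect w F / 4) : 1 ≤ 2 * C * prob w fun ω ↦ t ≤ F ω := by
  have quarter : (3 / 4 * expect w F) ^ 2 ≤
      C * expect w F ^ 2 * prob w fun ω ↦ expect w F / 4 ≤ F ω :=
    calc (3 / 4 * expect w F) ^ 2 = (expect w F - expect w F / 4) ^ 2 := by ring
      _ ≤ _ := sq_expect_sub_le hw (by linarith) (by linarith)
      _ ≤ _ := mul_le_mul_of_nonneg_right hC (prob_nonneg hw _)
  have hC0 : 0 ≤ C :=
    nonneg_of_mul_nonneg_left ((expect_nonneg hw fun ω ↦ sq_nonneg (F ω)).trans hC) (by positivity)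
  have hprob := prob_mono hw (q := fun ω ↦ t ≤ F ω) fun ω (h : expect w F / 4 ≤ F ω) ↦ ht.trans h
  nlinarith [le_of_mul_le_mul_left (a := expect w F ^ 2) (b := 9 / 16)
    (c := C * prob w fun ω ↦ expect w F / 4 ≤ F ω) (by nlinarith) (by positivity),
    mul_le_mul_of_nonneg_left hprob hC0]

lemma expect_sum_sq_le (hw : w ∈ stdSimplex ℝ Ω) {s : Finset κ} {F : κ → Ω → ℝ}
    (hF : ∀ k ω, 0 ≤ F k ω) {C : ℝ} (hC0 : 0 ≤ C)
    (hC : ∀ k ∈ s, expect w (fun ω ↦ F k ω ^ 2) ≤ C * expect w (F k) ^ 2) :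
    expect w (fun ω ↦ (∑ k ∈ s, F k ω) ^ 2) ≤ C * (∑ k ∈ s, expect w (F k)) ^ 2 := by
  have cross : ∀ k ∈ s, ∀ l ∈ s,
      expect w (fun ω ↦ F k ω * F l ω) ≤ C * (expect w (F k) * expect w (F l)) := by
    intro k hk l hl
    have hk0 := expect_nonneg hw (hF k)
    have hl0 := expect_nonneg hw (hF l)
    refine (abs_le_of_sq_le_sq' ?_ (by positivity)).2
    calc expect w (fun ω ↦ F k ω * F l ω) ^ 2
        ≤ expect w (fun ω ↦ F k ω ^ 2) * expect w (fun ω ↦ F l ω ^ 2) := sq_expect_mul_le hw _ _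
      _ ≤ C * expect w (F k) ^ 2 * (C * expect w (F l) ^ 2) :=
          mul_le_mul (hC k hk) (hC l hl) (expect_nonneg hw fun ω ↦ sq_nonneg _) (by positivity)
      _ = _ := by ring
  simp only [sq, Finset.sum_mul_sum]
  simp only [expect_sum, Finset.mul_sum]
  exact Finset.sum_le_sum fun k hk ↦ Finset.sum_le_sum fun l hl ↦ cross k hk l hl

end Expectation

section ProductWeight

variable {V Ω Ω' : Type*} [Fintype V] [DecidableEq V] [Fintype Ω] [Fintype Ω'] {w : Ω → ℝ}

/-- The weights on `V → Ω` under which the coordinates are independent with weights `w`. -/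
def prodWeight (w : Ω → ℝ) (ω : V → Ω) : ℝ := ∏ i, w (ω i)

lemma prodWeight_mem_stdSimplex (hw : w ∈ stdSimplex ℝ Ω) :
    prodWeight w ∈ stdSimplex ℝ (V → Ω) := by
  refine ⟨fun ω ↦ Finset.prod_nonneg fun i _ ↦ hw.1 _, ?_⟩
  simpa [prodWeight, hw.2] using (Finset.prod_univ_sum (fun _ : V ↦ Finset.univ) fun _ ↦ w).symm

lemma expect_prodWeight_resample (hw : w ∈ stdSimplex ℝ Ω) (F : (V → Ω) → ℝ) (j : V) :
    expect (prodWeight w) F =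
      expect (prodWeight w) fun ω ↦ expect w fun o ↦ F (Function.update ω j o) := by
  let swap : (V → Ω) × Ω → (V → Ω) × Ω := fun p ↦ (Function.update p.1 j p.2, p.1 j)
  have swap_swap : Function.Involutive swap := fun p ↦ by simp [swap]
  have weight_swap : ∀ p, prodWeight w (swap p).1 * w (swap p).2 = prodWeight w p.1 * w p.2 := by
    rintro ⟨ω, o⟩
    simp only [swap, prodWeight, ← Finset.mul_prod_erase _ _ (Finset.mem_univ j),
      Function.update_self]
    rw [Finset.prod_congr rfl fun i hi ↦ by rw [Function.update_of_ne (Finset.ne_of_mem_erase hi)]]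
    ring
  calc expect (prodWeight w) F
      = ∑ p : (V → Ω) × Ω, prodWeight w p.1 * w p.2 * F p.1 := by
        simp only [expect, Fintype.sum_prod_type, ← Finset.sum_mul, ← Finset.mul_sum, hw.2, mul_one]
    _ = ∑ p, prodWeight w p.1 * w p.2 * F (swap p).1 := by
        rw [← Equiv.sum_comp swap_swap.toPerm]
        simp only [Function.Involutive.coe_toPerm, weight_swap]
    _ = _ := by simp only [swap, expect, Fintype.sum_prod_type, Finset.mul_sum, mul_assoc]

lemma expect_prodWeight_comp [DecidableEq Ω'] (π : Ω → Ω') {w' : Ω' → ℝ}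
    (h : ∀ o', w' o' = ∑ o with π o = o', w o) (F : (V → Ω') → ℝ) :
    expect (prodWeight w) (fun ω ↦ F fun i ↦ π (ω i)) = expect (prodWeight w') F := by
  have fiber : ∀ ω' : V → Ω',
      prodWeight w' ω' = ∑ ω with (fun i ↦ π (ω i)) = ω', prodWeight w ω := by
    intro ω'
    simp only [prodWeight, h, Finset.prod_univ_sum]
    exact Finset.sum_congr (by ext; simp [funext_iff]) fun _ _ ↦ rfl
  simp only [expect, fiber, Finset.sum_mul]
  rw [← Finset.sum_fiberwise Finset.univ fun (ω : V → Ω) i ↦ π (ω i)]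
  refine Finset.sum_congr rfl fun ω' _ ↦ Finset.sum_congr (by congr) fun ω hω ↦ ?_
  rw [(Finset.mem_filter.1 hω).2]

end ProductWeight

/-! ### Multilinear polynomials and Bonami's inequality -/

/-- The `±1` encoding of a bit. -/
def boolSign (b : Bool) : ℝ := if b then 1 else -1

@[simp] lemma boolSign_true : boolSign true = 1 := rfl

@[simp] lemma boolSign_false : boolSign false = -1 := by simp [boolSign]

/-- The `±1` encoding of a point of the Boolean cube. -/
def signs {V : Type*} (b : V → Bool) (i : V) : ℝ := boolSign (b i)

/-- The uniform probability weights on the Boolean cube. -/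
noncomputable abbrev cubeWeight (V : Type*) [Fintype V] : (V → Bool) → ℝ :=
  prodWeight (uniformWeight Bool)

lemma cubeWeight_mem_stdSimplex {V : Type*} [Fintype V] [DecidableEq V] :
    cubeWeight V ∈ stdSimplex ℝ (V → Bool) :=
  prodWeight_mem_stdSimplex uniformWeight_mem_stdSimplex

/-- A multilinear polynomial in the variables `V`, represented by its coefficients: `c S` is the
coefficient of the monomial `∏ i ∈ S, y i`. -/
abbrev MultilinearPoly (V : Type*) := Finset V → ℝ

namespace MultilinearPoly

variable {V Ω : Type*} [Fintype Ω]

/-- The value at `y` of the part of `c` that only involves the variables in `J`. -/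
def evalOn (c : MultilinearPoly V) (J : Finset V) (y : V → ℝ) : ℝ :=
  ∑ S ∈ J.powerset, c S * ∏ i ∈ S, y i

/-- The value of `c` at `y`. -/
def eval [Fintype V] (c : MultilinearPoly V) (y : V → ℝ) : ℝ := ∑ S, c S * ∏ i ∈ S, y i

/-- The degree of `c` is at most `D`. -/
def DegreeLE (c : MultilinearPoly V) (D : ℕ) : Prop := ∀ S, D < S.card → c S = 0

/-- The cofactor of the variable `j` in `c`. Only the sets `S` with `j ∉ S` are meaningful, and only
those are ever evaluated. -/
def cofactor [DecidableEq V] (c : MultilinearPoly V) (j : V) : MultilinearPoly V :=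
  fun S ↦ c (insert j S)

/-- The noise operator on coefficients: it damps the degree-`d` part by `r ^ d`. -/
def noise (r : ℝ) (c : MultilinearPoly V) : MultilinearPoly V := fun S ↦ r ^ S.card * c S

lemma evalOn_univ [Fintype V] (c : MultilinearPoly V) (y : V → ℝ) :
    c.evalOn Finset.univ y = c.eval y := by
  simp [eval, evalOn]

lemma evalOn_empty (c : MultilinearPoly V) (y : V → ℝ) : c.evalOn ∅ y = c ∅ := by simp [evalOn]

lemma evalOn_congr (c : MultilinearPoly V) {J : Finset V} {y y' : V → ℝ}
    (h : ∀ i ∈ J, y i = y' i) : c.evalOn J y = c.evalOn J y' :=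
  Finset.sum_congr rfl fun _ hS ↦ congrArg _ <|
    Finset.prod_congr rfl fun i hi ↦ h i (Finset.mem_powerset.1 hS hi)

/-- The random variables `ζ i` on `(Ω, w)` are centered with unit variance. -/
structure IsStandardized (w : Ω → ℝ) (ζ : V → Ω → ℝ) : Prop where
  mean : ∀ i, expect w (ζ i) = 0
  variance : ∀ i, expect w (fun o ↦ ζ i o ^ 2) = 1

/-- The moment conditions under which Bonami's inequality holds with the constant `9 ^ D`. -/
structure HasBonamiMoments (w : Ω → ℝ) (ζ : V → Ω → ℝ) : Prop extends IsStandardized w ζ where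
  third : ∀ i, expect w (fun o ↦ ζ i o ^ 3) = 0
  fourth : ∀ i, expect w (fun o ↦ ζ i o ^ 4) ≤ 9

variable {w : Ω → ℝ} {ζ : V → Ω → ℝ}

lemma hasBonamiMoments_boolSign :
    HasBonamiMoments (V := V) (uniformWeight Bool) fun _ ↦ boolSign := by
  refine ⟨⟨?_, ?_⟩, ?_, ?_⟩ <;> intro <;> simp [expect, uniformWeight] <;> norm_num

lemma IsStandardized.expect_add_mul_sq (hw : w ∈ stdSimplex ℝ Ω) (hζ : IsStandardized w ζ) (j : V)
    (A B : ℝ) : expect w (fun o ↦ (A + ζ j o * B) ^ 2) = A ^ 2 + B ^ 2 := by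
  have expand : ∀ o, (A + ζ j o * B) ^ 2 = A ^ 2 + 2 * A * B * ζ j o + B ^ 2 * ζ j o ^ 2 :=
    fun o ↦ by ring
  simp only [expand, expect_add, expect_mul_left, expect_const hw, hζ.mean, hζ.variance]
  ring

lemma HasBonamiMoments.expect_add_mul_pow_four_le (hw : w ∈ stdSimplex ℝ Ω)
    (hζ : HasBonamiMoments w ζ) (j : V) (A B : ℝ) :
    expect w (fun o ↦ (A + ζ j o * B) ^ 4) ≤ A ^ 4 + 6 * (A ^ 2 * B ^ 2) + 9 * B ^ 4 := by
  have expand : ∀ o, (A + ζ j o * B) ^ 4 = A ^ 4 + 4 * A ^ 3 * B * ζ j o +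
      6 * A ^ 2 * B ^ 2 * ζ j o ^ 2 + 4 * A * B ^ 3 * ζ j o ^ 3 + B ^ 4 * ζ j o ^ 4 :=
    fun o ↦ by ring
  simp only [expand, expect_add, expect_mul_left, expect_const hw, hζ.mean, hζ.variance, hζ.third]
  nlinarith [mul_le_mul_of_nonneg_left (hζ.fourth j) (by positivity : 0 ≤ B ^ 4)]

variable [DecidableEq V]

lemma evalOn_insert (c : MultilinearPoly V) {J : Finset V} {j : V} (hj : j ∉ J) (y : V → ℝ) :
    c.evalOn (insert j J) y = c.evalOn J y + y j * (c.cofactor j).evalOn J y := by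
  rw [evalOn, Finset.sum_powerset_insert hj, evalOn, evalOn, Finset.mul_sum]
  congr 1
  refine Finset.sum_congr rfl fun S hS ↦ ?_
  rw [Finset.prod_insert fun h ↦ hj (Finset.mem_powerset.1 hS h), cofactor]
  ring

lemma evalOn_noise_cofactor (r : ℝ) (c : MultilinearPoly V) {J : Finset V} {j : V} (hj : j ∉ J)
    (y : V → ℝ) :
    ((c.noise r).cofactor j).evalOn J y = r * ((c.cofactor j).noise r).evalOn J y := by
  rw [evalOn, evalOn, Finset.mul_sum]
  refine Finset.sum_congr rfl fun S hS ↦ ?_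
  have hjS : j ∉ S := fun h ↦ hj (Finset.mem_powerset.1 hS h)
  simp only [cofactor, noise, Finset.card_insert_of_notMem hjS]
  ring

lemma expect_evalOn_insert_pow [Fintype V] (hw : w ∈ stdSimplex ℝ Ω) (ζ : V → Ω → ℝ)
    (c : MultilinearPoly V) {J : Finset V} {j : V} (hj : j ∉ J) (p : ℕ) :
    expect (prodWeight w) (fun ω ↦ c.evalOn (insert j J) (fun i ↦ ζ i (ω i)) ^ p) =
      expect (prodWeight w) fun ω ↦ expect w fun o ↦
        (c.evalOn J (fun i ↦ ζ i (ω i)) +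
          ζ j o * (c.cofactor j).evalOn J (fun i ↦ ζ i (ω i))) ^ p := by
  have resampled : ∀ (c : MultilinearPoly V) (ω : V → Ω) (o : Ω),
      c.evalOn J (fun i ↦ ζ i (Function.update ω j o i)) = c.evalOn J fun i ↦ ζ i (ω i) :=
    fun c ω o ↦ c.evalOn_congr fun i hi ↦ by
      rw [Function.update_of_ne (ne_of_mem_of_not_mem hi hj)]
  rw [expect_prodWeight_resample hw _ j]
  simp only [evalOn_insert _ hj, resampled, Function.update_self]

lemma sum_powerset_three_pow_card_cofactor (c : MultilinearPoly V) {J : Finset V} {j : V}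
    (hj : j ∉ J) :
    ∑ S ∈ J.powerset, (3 : ℝ) ^ (insert j S).card * c (insert j S) ^ 2 =
      3 * ∑ S ∈ J.powerset, 3 ^ S.card * c.cofactor j S ^ 2 := by
  rw [Finset.mul_sum]
  refine Finset.sum_congr rfl fun S hS ↦ ?_
  rw [Finset.card_insert_of_notMem fun h ↦ hj (Finset.mem_powerset.1 hS h), cofactor]
  ring

variable [Fintype V]

lemma IsStandardized.expect_evalOn_sq (hw : w ∈ stdSimplex ℝ Ω) (hζ : IsStandardized w ζ)
    (J : Finset V) (c : MultilinearPoly V) :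
    expect (prodWeight w) (fun ω ↦ c.evalOn J (fun i ↦ ζ i (ω i)) ^ 2) =
      ∑ S ∈ J.powerset, c S ^ 2 := by
  induction J using Finset.induction_on generalizing c with
  | empty => simp [evalOn_empty, expect_const (prodWeight_mem_stdSimplex hw)]
  | insert j J hj ih =>
    rw [expect_evalOn_insert_pow hw _ _ hj, Finset.sum_powerset_insert hj, ← ih,
      show ∑ S ∈ J.powerset, c (insert j S) ^ 2 = ∑ S ∈ J.powerset, c.cofactor j S ^ 2 from rfl,
      ← ih, ← expect_add]
    simp only [hζ.expect_add_mul_sq hw]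

lemma IsStandardized.expect_eval_sq (hw : w ∈ stdSimplex ℝ Ω) (hζ : IsStandardized w ζ)
    (c : MultilinearPoly V) :
    expect (prodWeight w) (fun ω ↦ c.eval (fun i ↦ ζ i (ω i)) ^ 2) = ∑ S, c S ^ 2 := by
  simpa only [evalOn_univ, Finset.powerset_univ] using hζ.expect_evalOn_sq hw Finset.univ c

lemma HasBonamiMoments.expect_evalOn_pow_four_le (hw : w ∈ stdSimplex ℝ Ω)
    (hζ : HasBonamiMoments w ζ) (J : Finset V) (c : MultilinearPoly V) :
    expect (prodWeight w) (fun ω ↦ c.evalOn J (fun i ↦ ζ i (ω i)) ^ 4) ≤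
      (∑ S ∈ J.powerset, 3 ^ S.card * c S ^ 2) ^ 2 := by
  have hW := prodWeight_mem_stdSimplex (V := V) hw
  induction J using Finset.induction_on generalizing c with
  | empty =>
    simp only [evalOn_empty, expect_const hW, Finset.powerset_empty, Finset.sum_singleton,
      Finset.card_empty, pow_zero, one_mul]
    exact (by ring : c ∅ ^ 4 = (c ∅ ^ 2) ^ 2).le
  | insert j J hj ih =>
    rw [expect_evalOn_insert_pow hw _ _ hj, Finset.sum_powerset_insert hj,
      sum_powerset_three_pow_card_cofactor c hj]
    have hA := ih c
    have hB := ih (c.cofactor j)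
    set a := ∑ S ∈ J.powerset, (3 : ℝ) ^ S.card * c S ^ 2
    set b := ∑ S ∈ J.powerset, (3 : ℝ) ^ S.card * c.cofactor j S ^ 2
    have ha : 0 ≤ a := Finset.sum_nonneg fun S _ ↦ by positivity
    have hb : 0 ≤ b := Finset.sum_nonneg fun S _ ↦ by positivity
    set A := fun ω : V → Ω ↦ c.evalOn J (fun i ↦ ζ i (ω i))
    set B := fun ω : V → Ω ↦ (c.cofactor j).evalOn J (fun i ↦ ζ i (ω i))
    have mixed : expect (prodWeight w) (fun ω ↦ A ω ^ 2 * B ω ^ 2) ≤ a * b := by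
      refine (abs_le_of_sq_le_sq' ?_ (mul_nonneg ha hb)).2
      refine (sq_expect_mul_le hW _ _).trans ?_
      rw [mul_pow]
      simp only [← pow_mul]
      exact mul_le_mul hA hB (expect_nonneg hW fun ω ↦ Even.pow_nonneg (by decide) _)
        (by positivity)
    calc expect (prodWeight w) (fun ω ↦ expect w fun o ↦ (A ω + ζ j o * B ω) ^ 4)
        ≤ expect (prodWeight w) fun ω ↦ A ω ^ 4 + 6 * (A ω ^ 2 * B ω ^ 2) + 9 * B ω ^ 4 :=
          expect_mono hW fun ω ↦ hζ.expect_add_mul_pow_four_le hw j _ _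
      _ = expect (prodWeight w) (fun ω ↦ A ω ^ 4) +
            6 * expect (prodWeight w) (fun ω ↦ A ω ^ 2 * B ω ^ 2) +
            9 * expect (prodWeight w) (fun ω ↦ B ω ^ 4) := by
          simp only [expect_add, expect_mul_left]
      _ ≤ a ^ 2 + 6 * (a * b) + 9 * b ^ 2 := by gcongr
      _ = (a + 3 * b) ^ 2 := by ring

/-- Bonami's inequality. -/
lemma HasBonamiMoments.expect_eval_pow_four_le (hw : w ∈ stdSimplex ℝ Ω)
    (hζ : HasBonamiMoments w ζ) {c : MultilinearPoly V} {D : ℕ} (hc : c.DegreeLE D) :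
    expect (prodWeight w) (fun ω ↦ c.eval (fun i ↦ ζ i (ω i)) ^ 4) ≤
      9 ^ D * (∑ S, c S ^ 2) ^ 2 := by
  have damped : ∑ S, 3 ^ S.card * c S ^ 2 ≤ 3 ^ D * ∑ S, c S ^ 2 := by
    rw [Finset.mul_sum]
    refine Finset.sum_le_sum fun S _ ↦ ?_
    obtain h | h := lt_or_ge D S.card
    · simp [hc S h]
    · gcongr
      norm_num
  calc expect (prodWeight w) (fun ω ↦ c.eval (fun i ↦ ζ i (ω i)) ^ 4)
      ≤ (∑ S, 3 ^ S.card * c S ^ 2) ^ 2 := by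
        simpa only [evalOn_univ, Finset.powerset_univ] using
          hζ.expect_evalOn_pow_four_le hw Finset.univ c
    _ ≤ (3 ^ D * ∑ S, c S ^ 2) ^ 2 :=
        pow_le_pow_left₀ (Finset.sum_nonneg fun S _ ↦ by positivity) damped 2
    _ = 9 ^ D * (∑ S, c S ^ 2) ^ 2 := by
        rw [mul_pow, ← pow_mul, mul_comm D 2, pow_mul]
        norm_num

end MultilinearPoly

/-! ### Hypercontractivity -/

lemma sum_range_two_mul_add_one_of_odd_eq_zero (k : ℕ) {f : ℕ → ℝ} (hf : ∀ m, Odd m → f m = 0) :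
    ∑ m ∈ Finset.range (2 * k + 1), f m = ∑ j ∈ Finset.range (k + 1), f (2 * j) := by
  induction k with
  | zero => simp
  | succ k ih =>
    rw [show 2 * (k + 1) + 1 = (2 * k + 1) + 1 + 1 by ring, Finset.sum_range_succ,
      Finset.sum_range_succ, ih, Finset.sum_range_succ _ (k + 1), hf (2 * k + 1) ⟨k, rfl⟩, add_zero]
    rfl

lemma half_add_pow_add_sub_pow (k : ℕ) (u x : ℝ) :
    ((u + x) ^ (2 * k) + (u - x) ^ (2 * k)) / 2 =
      ∑ j ∈ Finset.range (k + 1), x ^ (2 * j) * u ^ (2 * k - 2 * j) * (2 * k).choose (2 * j) := by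
  let f : ℕ → ℝ := fun m ↦ (x ^ m + (-x) ^ m) * u ^ (2 * k - m) * (2 * k).choose m / 2
  have odd_terms : ∀ m, Odd m → f m = 0 := fun m hm ↦ by simp [f, hm.neg_pow]
  calc ((u + x) ^ (2 * k) + (u - x) ^ (2 * k)) / 2
      = ∑ m ∈ Finset.range (2 * k + 1), f m := by
        rw [add_comm u, show u - x = -x + u by ring, add_pow, add_pow, ← Finset.sum_add_distrib,
          Finset.sum_div]
        exact Finset.sum_congr rfl fun m _ ↦ by ring
    _ = ∑ j ∈ Finset.range (k + 1), f (2 * j) :=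
        sum_range_two_mul_add_one_of_odd_eq_zero k odd_terms
    _ = _ := Finset.sum_congr rfl fun j _ ↦ by
        simp only [f, (even_two_mul j).neg_pow]
        ring

lemma half_add_pow_add_sub_pow_le (k : ℕ) {r : ℝ} (u v : ℝ) (hr : |r| * (2 * k) ≤ 1) :
    ((u + r * v) ^ (2 * k) + (u - r * v) ^ (2 * k)) / 2 ≤ (u ^ 2 + v ^ 2) ^ k := by
  rw [half_add_pow_add_sub_pow, add_comm (u ^ 2), add_pow]
  refine Finset.sum_le_sum fun j hj ↦ ?_
  have hjk : j ≤ k := Nat.lt_succ_iff.1 (Finset.mem_range.1 hj)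
  have scale : r ^ (2 * j) * (2 * k).choose (2 * j) ≤ 1 :=
    calc r ^ (2 * j) * ((2 * k).choose (2 * j) : ℝ)
        ≤ r ^ (2 * j) * (2 * k) ^ (2 * j) := by
          refine mul_le_mul_of_nonneg_left ?_ ((even_two_mul j).pow_nonneg r)
          exact_mod_cast Nat.choose_le_pow (2 * k) (2 * j)
      _ = (|r| * (2 * k)) ^ (2 * j) := by rw [mul_pow |r|, (even_two_mul j).pow_abs]
      _ ≤ 1 := pow_le_one₀ (by positivity) hr
  have one_le_choose : (1 : ℝ) ≤ k.choose j := by exact_mod_cast Nat.choose_pos hjk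
  calc (r * v) ^ (2 * j) * u ^ (2 * k - 2 * j) * ((2 * k).choose (2 * j) : ℝ)
      = (v ^ 2) ^ j * (u ^ 2) ^ (k - j) * (r ^ (2 * j) * (2 * k).choose (2 * j)) := by
        rw [mul_pow, ← Nat.mul_sub, pow_mul v, pow_mul u]
        ring
    _ ≤ (v ^ 2) ^ j * (u ^ 2) ^ (k - j) * k.choose j :=
        mul_le_mul_of_nonneg_left (scale.trans one_le_choose) (by positivity)

lemma add_pow_le_mul_div_pow {x y a b : ℝ} (hx : 0 ≤ x) (hy : 0 ≤ y) (ha : 0 < a) (hb : 0 < b)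
    (k : ℕ) :
    (x + y) ^ k ≤
      (a + b) ^ k * (a / (a + b) * (x ^ k / a ^ k) + b / (a + b) * (y ^ k / b ^ k)) := by
  have convex := (convexOn_pow (𝕜 := ℝ) k).2 (Set.mem_Ici.2 (div_nonneg hx ha.le))
    (Set.mem_Ici.2 (div_nonneg hy hb.le)) (by positivity : 0 ≤ a / (a + b))
    (by positivity : 0 ≤ b / (a + b)) (by field_simp)
  simp only [smul_eq_mul, div_pow] at convex
  calc (x + y) ^ k = ((a + b) * (a / (a + b) * (x / a) + b / (a + b) * (y / b))) ^ k := by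
        congr 1
        field_simp
    _ ≤ _ := by
        rw [mul_pow]
        gcongr

lemma expect_add_pow_le_of_pos {Ω : Type*} [Fintype Ω] {w X Y : Ω → ℝ} (hw : w ∈ stdSimplex ℝ Ω)
    (hX : ∀ ω, 0 ≤ X ω) (hY : ∀ ω, 0 ≤ Y ω) {k : ℕ} {a b : ℝ} (ha : 0 < a) (hb : 0 < b)
    (hXa : expect w (fun ω ↦ X ω ^ k) ≤ a ^ k) (hYb : expect w (fun ω ↦ Y ω ^ k) ≤ b ^ k) :
    expect w (fun ω ↦ (X ω + Y ω) ^ k) ≤ (a + b) ^ k :=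
  calc expect w (fun ω ↦ (X ω + Y ω) ^ k)
      ≤ expect w fun ω ↦
          (a + b) ^ k * (a / (a + b) * (X ω ^ k / a ^ k) + b / (a + b) * (Y ω ^ k / b ^ k)) :=
        expect_mono hw fun ω ↦ add_pow_le_mul_div_pow (hX ω) (hY ω) ha hb k
    _ = (a + b) ^ k * (a / (a + b) * (expect w (fun ω ↦ X ω ^ k) / a ^ k) +
          b / (a + b) * (expect w (fun ω ↦ Y ω ^ k) / b ^ k)) := by
        simp only [expect_add, expect_mul_left, expect_mul_right, div_eq_mul_inv]
    _ ≤ (a + b) ^ k * (a / (a + b) * 1 + b / (a + b) * 1) := by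
        gcongr <;> exact div_le_one_of_le₀ ‹_› (by positivity)
    _ = (a + b) ^ k := by field_simp

/-- Minkowski's inequality for natural exponents, avoiding `k`-th roots. -/
lemma expect_add_pow_le {Ω : Type*} [Fintype Ω] {w X Y : Ω → ℝ} (hw : w ∈ stdSimplex ℝ Ω)
    (hX : ∀ ω, 0 ≤ X ω) (hY : ∀ ω, 0 ≤ Y ω) {k : ℕ} {a b : ℝ} (ha : 0 ≤ a) (hb : 0 ≤ b)
    (hXa : expect w (fun ω ↦ X ω ^ k) ≤ a ^ k) (hYb : expect w (fun ω ↦ Y ω ^ k) ≤ b ^ k) :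
    expect w (fun ω ↦ (X ω + Y ω) ^ k) ≤ (a + b) ^ k := by
  have perturbed : ∀ δ > 0, expect w (fun ω ↦ (X ω + Y ω) ^ k) ≤ (a + δ + (b + δ)) ^ k :=
    fun δ hδ ↦ expect_add_pow_le_of_pos hw hX hY (by positivity) (by positivity)
      (hXa.trans (by gcongr; linarith)) (hYb.trans (by gcongr; linarith))
  have continuous : Continuous fun δ : ℝ ↦ (a + δ + (b + δ)) ^ k := by fun_prop
  have limit := (continuous.tendsto 0).mono_left (nhdsWithin_le_nhds (s := Set.Ioi 0))
  simp only [add_zero] at limit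
  exact ge_of_tendsto limit (eventually_nhdsWithin_of_forall perturbed)

namespace MultilinearPoly

variable {V : Type*} [Fintype V] [DecidableEq V]

lemma expect_evalOn_noise_pow_le (k : ℕ) {r : ℝ} (hr : |r| * (2 * k) ≤ 1) (J : Finset V)
    (c : MultilinearPoly V) :
    expect (cubeWeight V) (fun b ↦ (c.noise r).evalOn J (signs b) ^ (2 * k)) ≤
      (∑ S ∈ J.powerset, c S ^ 2) ^ k := by
  have hW := cubeWeight_mem_stdSimplex (V := V)
  induction J using Finset.induction_on generalizing c with
  | empty => simp [evalOn_empty, expect_const hW, pow_mul, noise]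
  | insert j J hj ih =>
    have hA := ih c
    have hB := ih (c.cofactor j)
    set A := fun b : V → Bool ↦ (c.noise r).evalOn J (signs b)
    set B := fun b : V → Bool ↦ ((c.cofactor j).noise r).evalOn J (signs b)
    simp only [pow_mul] at hA hB
    calc expect (cubeWeight V) (fun b ↦ (c.noise r).evalOn (insert j J) (signs b) ^ (2 * k))
        = expect (cubeWeight V) fun b ↦
            ((A b + r * B b) ^ (2 * k) + (A b - r * B b) ^ (2 * k)) / 2 := by
          refine (expect_evalOn_insert_pow uniformWeight_mem_stdSimplex (fun _ ↦ boolSign) _ hj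
            (2 * k)).trans ?_
          simp only [evalOn_noise_cofactor r c hj]
          refine congrArg _ (funext fun b ↦ ?_)
          simp only [expect, uniformWeight, Fintype.sum_bool, Fintype.card_bool, Nat.cast_ofNat,
            boolSign_true, boolSign_false]
          change _ * (A b + 1 * (r * B b)) ^ (2 * k) + _ * (A b + -1 * (r * B b)) ^ (2 * k) = _
          ring
      _ ≤ expect (cubeWeight V) fun b ↦ (A b ^ 2 + B b ^ 2) ^ k :=
          expect_mono hW fun b ↦ half_add_pow_add_sub_pow_le k _ _ hr
      _ ≤ (∑ S ∈ J.powerset, c S ^ 2 + ∑ S ∈ J.powerset, c.cofactor j S ^ 2) ^ k :=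
          expect_add_pow_le hW (fun b ↦ sq_nonneg _) (fun b ↦ sq_nonneg _)
            (Finset.sum_nonneg fun S _ ↦ sq_nonneg _) (Finset.sum_nonneg fun S _ ↦ sq_nonneg _)
            hA hB
      _ = (∑ S ∈ (insert j J).powerset, c S ^ 2) ^ k := by
          rw [Finset.sum_powerset_insert hj]
          rfl

lemma expect_eval_noise_pow_le (k : ℕ) {r : ℝ} (hr : |r| * (2 * k) ≤ 1) (c : MultilinearPoly V) :
    expect (cubeWeight V) (fun b ↦ (c.noise r).eval (signs b) ^ (2 * k)) ≤ (∑ S, c S ^ 2) ^ k := by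
  simpa only [evalOn_univ, Finset.powerset_univ] using
    expect_evalOn_noise_pow_le k hr Finset.univ c

end MultilinearPoly

section Walsh

variable {V : Type*} [Fintype V] [DecidableEq V]

/-- The Walsh–Fourier coefficients of a function on the Boolean cube. -/
noncomputable def walshCoeff (g : (V → Bool) → ℝ) : MultilinearPoly V :=
  fun S ↦ expect (cubeWeight V) fun b ↦ g b * ∏ i ∈ S, signs b i

/-- The noise operator on functions on the Boolean cube, in kernel form. -/
noncomputable def noiseOp (r : ℝ) (g : (V → Bool) → ℝ) (b : V → Bool) : ℝ :=
  expect (cubeWeight V) fun x ↦ (∏ i, (1 + r * signs b i * signs x i)) * g x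

/-- Bessel's inequality. -/
lemma sum_sq_walshCoeff_le (g : (V → Bool) → ℝ) :
    ∑ S, walshCoeff g S ^ 2 ≤ expect (cubeWeight V) fun b ↦ g b ^ 2 := by
  set c := walshCoeff g
  have norm : expect (cubeWeight V) (fun b ↦ c.eval (signs b) ^ 2) = ∑ S, c S ^ 2 :=
    MultilinearPoly.hasBonamiMoments_boolSign.expect_eval_sq uniformWeight_mem_stdSimplex c
  have inner : expect (cubeWeight V) (fun b ↦ g b * c.eval (signs b)) = ∑ S, c S ^ 2 := by
    simp only [MultilinearPoly.eval, Finset.mul_sum, expect_sum, mul_left_comm (g _),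
      expect_mul_left, sq]
    rfl
  have residual : 0 ≤ expect (cubeWeight V) fun b ↦ (g b - c.eval (signs b)) ^ 2 :=
    expect_nonneg cubeWeight_mem_stdSimplex fun b ↦ sq_nonneg _
  have expand : ∀ b, (g b - c.eval (signs b)) ^ 2 =
      g b ^ 2 - 2 * (g b * c.eval (signs b)) + c.eval (signs b) ^ 2 := fun b ↦ by ring
  simp only [expand, expect_add, expect_sub, expect_mul_left, inner, norm] at residual
  linarith

lemma noiseOp_eq_eval (r : ℝ) (g : (V → Bool) → ℝ) (b : V → Bool) :
    noiseOp r g b = ((walshCoeff g).noise r).eval (signs b) := by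
  have expand : ∀ x : V → Bool, (∏ i, (1 + r * signs b i * signs x i)) * g x =
      ∑ S, (r ^ S.card * ∏ i ∈ S, signs b i) * (g x * ∏ i ∈ S, signs x i) := fun x ↦ by
    rw [Finset.prod_one_add, Finset.powerset_univ, Finset.sum_mul]
    refine Finset.sum_congr rfl fun S _ ↦ ?_
    rw [Finset.prod_mul_distrib, Finset.prod_mul_distrib, Finset.prod_const]
    ring
  simp only [noiseOp, expand, expect_sum, expect_mul_left]
  exact Finset.sum_congr rfl fun S _ ↦ mul_right_comm _ _ _

/-- Hypercontractivity of the noise operator, from `L²` to `L²ᵏ`. -/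
lemma expect_noiseOp_pow_le (k : ℕ) {r : ℝ} (hr : |r| * (2 * k) ≤ 1) (g : (V → Bool) → ℝ) :
    expect (cubeWeight V) (fun b ↦ noiseOp r g b ^ (2 * k)) ≤
      expect (cubeWeight V) (fun b ↦ g b ^ 2) ^ k := by
  simp only [noiseOp_eq_eval]
  exact (MultilinearPoly.expect_eval_noise_pow_le k hr _).trans
    (pow_le_pow_left₀ (Finset.sum_nonneg fun S _ ↦ sq_nonneg _) (sum_sq_walshCoeff_le g) k)

end Walsh

/-! ### The invariance principle -/

/-- A bounded smooth test function peaked at `0`. Having rational derivatives, it lets Lindeberg's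
argument estimate the probability that a polynomial takes a given value. -/
noncomputable def bump (t : ℝ) : ℝ := 1 / (1 + t ^ 2)

lemma bump_nonneg (t : ℝ) : 0 ≤ bump t := by
  unfold bump
  positivity

lemma bump_le_one (t : ℝ) : bump t ≤ 1 :=
  div_le_one_of_le₀ (le_add_of_nonneg_right (sq_nonneg t)) (by positivity)

lemma abs_bump_add_sub_taylor_le (u h : ℝ) :
    |bump (u + h) - bump u - -2 * u / (1 + u ^ 2) ^ 2 * h -
      (3 * u ^ 2 - 1) / (1 + u ^ 2) ^ 3 * h ^ 2| ≤ |h| ^ 3 := by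
  obtain ⟨v, rfl⟩ : ∃ v, h = v - u := ⟨u + h, by ring⟩
  rw [add_sub_cancel]
  set N := (3 * u - u ^ 3) - (3 * u ^ 2 - 1) * v
  set P := (1 + u ^ 2) ^ 3 * (1 + v ^ 2)
  have remainder : bump v - bump u - -2 * u / (1 + u ^ 2) ^ 2 * (v - u) -
      (3 * u ^ 2 - 1) / (1 + u ^ 2) ^ 3 * (v - u) ^ 2 = (v - u) ^ 3 * (N / P) := by
    unfold bump
    simp only [N, P]
    field_simp
    ring
  have one_le_P : 1 ≤ P := one_le_mul_of_one_le_of_one_le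
    (one_le_pow₀ (le_add_of_nonneg_right (sq_nonneg u))) (le_add_of_nonneg_right (sq_nonneg v))
  have sq_N_le : N ^ 2 ≤ P := by
    have : P = N ^ 2 + ((3 * u - u ^ 3) * v + (3 * u ^ 2 - 1)) ^ 2 := by ring
    exact this ▸ le_add_of_nonneg_right (sq_nonneg _)
  rw [remainder, abs_mul, abs_pow, abs_div, abs_of_pos (zero_lt_one.trans_le one_le_P)]
  refine mul_le_of_le_one_right (by positivity) (div_le_one_of_le₀ ?_ (by positivity))
  exact abs_le_of_sq_le_sq (by nlinarith) (by positivity)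

namespace MultilinearPoly

variable {V Ω : Type*} [Fintype V] [Fintype Ω]

/-- The variance of `c` at independent standardized variables. -/
def variance (c : MultilinearPoly V) : ℝ := ∑ S with S.Nonempty, c S ^ 2

variable [DecidableEq V]

/-- The influence of the variable `j` on `c`. -/
def influence (c : MultilinearPoly V) (j : V) : ℝ := ∑ S with j ∈ S, c S ^ 2

lemma influence_nonneg (c : MultilinearPoly V) (j : V) : 0 ≤ c.influence j :=
  Finset.sum_nonneg fun _ _ ↦ sq_nonneg _

lemma sum_influence (c : MultilinearPoly V) :
    ∑ j, c.influence j = ∑ S, (S.card : ℝ) * c S ^ 2 := by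
  simp only [influence, Finset.sum_filter]
  rw [Finset.sum_comm]
  simp

lemma DegreeLE.sum_influence_le {c : MultilinearPoly V} {D : ℕ} (hc : c.DegreeLE D) :
    ∑ j, c.influence j ≤ D * c.variance := by
  rw [sum_influence, variance, Finset.sum_filter, Finset.mul_sum]
  refine Finset.sum_le_sum fun S _ ↦ ?_
  obtain h | h := lt_or_ge D S.card
  · simp [hc S h]
  · obtain rfl | hS := S.eq_empty_or_nonempty
    · simp
    · rw [if_pos hS]
      gcongr

lemma sum_sq_cofactor (c : MultilinearPoly V) (j : V) :
    ∑ S ∈ (Finset.univ.erase j).powerset, c.cofactor j S ^ 2 = c.influence j := by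
  have split := Finset.sum_powerset_insert (Finset.notMem_erase j Finset.univ)
    fun S ↦ if j ∈ S then c S ^ 2 else 0
  rw [Finset.insert_erase (Finset.mem_univ j), Finset.powerset_univ] at split
  have without : ∑ S ∈ (Finset.univ.erase j).powerset, (if j ∈ S then c S ^ 2 else 0) = 0 :=
    Finset.sum_eq_zero fun S hS ↦
      if_neg fun hj ↦ Finset.notMem_erase j _ (Finset.mem_powerset.1 hS hj)
  rw [influence, Finset.sum_filter, split, without, zero_add]
  simp [cofactor]

lemma eval_eq_of_eq_off (c : MultilinearPoly V) {y y' : V → ℝ} {j : V}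
    (h : ∀ i ≠ j, y' i = y i) :
    c.eval y' = c.evalOn (Finset.univ.erase j) y +
      y' j * (c.cofactor j).evalOn (Finset.univ.erase j) y := by
  have agree : ∀ c : MultilinearPoly V,
      c.evalOn (Finset.univ.erase j) y' = c.evalOn (Finset.univ.erase j) y :=
    fun c ↦ c.evalOn_congr fun i hi ↦ h i (Finset.ne_of_mem_erase hi)
  rw [← agree, ← agree, ← evalOn_insert _ (Finset.notMem_erase j _),
    Finset.insert_erase (Finset.mem_univ j), evalOn_univ]

lemma DegreeLE.sum_three_pow_card_cofactor_le {c : MultilinearPoly V} {D : ℕ} (hc : c.DegreeLE D)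
    (j : V) :
    ∑ S ∈ (Finset.univ.erase j).powerset, 3 ^ S.card * c.cofactor j S ^ 2 ≤
      3 ^ D * c.influence j := by
  rw [← sum_sq_cofactor, Finset.mul_sum]
  refine Finset.sum_le_sum fun S _ ↦ ?_
  obtain h | h := lt_or_ge D (insert j S).card
  · simp [cofactor, hc _ h]
  · have : S.card ≤ D := (Finset.card_le_card (Finset.subset_insert j S)).trans h
    gcongr
    norm_num

lemma HasBonamiMoments.expect_cofactor_pow_four_le {w : Ω → ℝ} {ζ : V → Ω → ℝ}
    (hw : w ∈ stdSimplex ℝ Ω) (hζ : HasBonamiMoments w ζ) {c : MultilinearPoly V} {D : ℕ}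
    (hc : c.DegreeLE D) (j : V) :
    expect (prodWeight w)
        (fun ω ↦ (c.cofactor j).evalOn (Finset.univ.erase j) (fun i ↦ ζ i (ω i)) ^ 4) ≤
      9 ^ D * c.influence j ^ 2 := by
  refine (hζ.expect_evalOn_pow_four_le hw _ _).trans ?_
  refine (pow_le_pow_left₀ (Finset.sum_nonneg fun S _ ↦ by positivity)
    (hc.sum_three_pow_card_cofactor_le j) 2).trans_eq ?_
  rw [mul_pow, ← pow_mul, mul_comm D 2, pow_mul]
  norm_num

/-- The third moment is interpolated between the second and the fourth, with weight `l`. -/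
lemma HasBonamiMoments.expect_abs_cofactor_pow_three_le {w : Ω → ℝ} {ζ : V → Ω → ℝ}
    (hw : w ∈ stdSimplex ℝ Ω) (hζ : HasBonamiMoments w ζ) {c : MultilinearPoly V} {D : ℕ}
    (hc : c.DegreeLE D) (j : V) {l : ℝ} (hl : 0 < l) :
    expect (prodWeight w)
        (fun ω ↦ |(c.cofactor j).evalOn (Finset.univ.erase j) (fun i ↦ ζ i (ω i))| ^ 3) ≤
      l * c.influence j + 9 ^ D * c.influence j ^ 2 / l := by
  set B := fun ω : V → Ω ↦ (c.cofactor j).evalOn (Finset.univ.erase j) (fun i ↦ ζ i (ω i))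
  have interpolate : ∀ x : ℝ, |x| ^ 3 ≤ l * x ^ 2 + x ^ 4 * l⁻¹ := fun x ↦ by
    have gap : l * |x| ^ 2 + |x| ^ 4 * l⁻¹ - |x| ^ 3 =
        |x| ^ 2 * ((l - |x| / 2) ^ 2 + 3 / 4 * |x| ^ 2) / l := by
      field_simp
      ring
    rw [← sq_abs x, ← (by decide : Even 4).pow_abs x]
    exact sub_nonneg.1 (gap ▸ by positivity)
  have second : expect (prodWeight w) (fun ω ↦ B ω ^ 2) = c.influence j := by
    rw [← sum_sq_cofactor]
    exact hζ.expect_evalOn_sq hw _ _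
  calc expect (prodWeight w) (fun ω ↦ |B ω| ^ 3)
      ≤ expect (prodWeight w) fun ω ↦ l * B ω ^ 2 + B ω ^ 4 * l⁻¹ :=
        expect_mono (prodWeight_mem_stdSimplex hw) fun ω ↦ interpolate _
    _ = l * c.influence j + expect (prodWeight w) (fun ω ↦ B ω ^ 4) * l⁻¹ := by
        rw [expect_add, expect_mul_left, expect_mul_right, second]
    _ ≤ l * c.influence j + 9 ^ D * c.influence j ^ 2 / l := by
        rw [div_eq_mul_inv]
        gcongr
        exact hζ.expect_cofactor_pow_four_le hw hc j

end MultilinearPoly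

/-- The probability weights on triples `(a, b, x)` of bits for which `a` is independent of `(b, x)`
and the signs of `b` and `x` have correlation `ρ`. -/
noncomputable def correlatedWeight (ρ : ℝ) (o : Bool × Bool × Bool) : ℝ :=
  (1 + ρ * boolSign o.2.1 * boolSign o.2.2) / 8

/-- For `ρ ^ 2 + s ^ 2 = 1`, a variable with the same mean, variance and correlation with the sign
of `b` as the sign of `x`, but depending on `x` only through `b`. -/
def mixedSign (ρ s : ℝ) (o : Bool × Bool × Bool) : ℝ := ρ * boolSign o.2.1 + s * boolSign o.1

/-- The hybrid variables of Lindeberg's argument: the sign of `x` has been replaced by `mixedSign`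
at the coordinates in `J`. -/
noncomputable def hybridSign {V : Type*} (ρ s : ℝ) (J : Finset V) (i : V)
    (o : Bool × Bool × Bool) : ℝ :=
  if i ∈ J then mixedSign ρ s o else boolSign o.2.2

section Lindeberg

variable {V : Type*} {ρ s : ℝ}

lemma correlatedWeight_mem_stdSimplex (hρ : ρ ∈ Set.Icc 0 1) :
    correlatedWeight ρ ∈ stdSimplex ℝ (Bool × Bool × Bool) := by
  obtain ⟨h0, h1⟩ := hρ
  constructor
  · rintro ⟨a, b, x⟩
    cases b <;> cases x <;> simp [correlatedWeight] <;> linarith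
  · simp [correlatedWeight, Fintype.sum_prod_type]
    ring

lemma hasBonamiMoments_hybridSign (hρ : ρ ∈ Set.Icc 0 1) (hs : ρ ^ 2 + s ^ 2 = 1) (J : Finset V) :
    MultilinearPoly.HasBonamiMoments (correlatedWeight ρ) (hybridSign ρ s J) := by
  have s_sq : s ^ 2 = 1 - ρ ^ 2 := by linarith
  have s_four : s ^ 4 = (1 - ρ ^ 2) ^ 2 := by rw [← s_sq]; ring
  refine ⟨⟨?_, ?_⟩, ?_, ?_⟩ <;> intro i <;> by_cases hi : i ∈ J <;>
    simp [expect, correlatedWeight, hybridSign, mixedSign, hi, Fintype.sum_prod_type] <;> ring_nf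
  · linarith
  · rw [s_four, s_sq]
    nlinarith [sq_nonneg ρ, hρ.1, hρ.2]
  · norm_num

lemma abs_mixedSign_le (hρ : ρ ∈ Set.Icc 0 1) (hs : ρ ^ 2 + s ^ 2 = 1) (o : Bool × Bool × Bool) :
    |mixedSign ρ s o| ≤ 2 := by
  have hs1 : |s| ≤ 1 := abs_le_one_iff_mul_self_le_one.2 (by nlinarith)
  obtain ⟨h0, h1⟩ := hρ
  obtain ⟨hsl, hsu⟩ := abs_le.1 hs1
  rw [abs_le]
  rcases o with ⟨a, b, x⟩
  cases a <;> cases b <;> simp [mixedSign] <;> constructor <;> linarith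

lemma expect_correlatedWeight_quadratic_eq_zero (hs : ρ ^ 2 + s ^ 2 = 1) (e : Bool → ℝ)
    (p q : ℝ) :
    expect (correlatedWeight ρ) (fun o ↦ e o.2.1 * (p * (mixedSign ρ s o - boolSign o.2.2) +
      q * (mixedSign ρ s o ^ 2 - boolSign o.2.2 ^ 2))) = 0 := by
  have s_sq : s ^ 2 = 1 - ρ ^ 2 := by linarith
  simp [expect, correlatedWeight, mixedSign, Fintype.sum_prod_type]
  ring_nf
  rw [s_sq]
  ring

/-- By the matching of the first two moments only the cubic Taylor remainders survive; they are at
most `(2 |h|) ^ 3` and `|h| ^ 3`. -/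
lemma abs_expect_bump_mixedSign_sub_le (hρ : ρ ∈ Set.Icc 0 1) (hs : ρ ^ 2 + s ^ 2 = 1)
    {e : Bool → ℝ} (he : ∀ b, e b ∈ Set.Icc 0 1) (u h : ℝ) :
    |expect (correlatedWeight ρ) fun o ↦
        e o.2.1 * (bump (u + mixedSign ρ s o * h) - bump (u + boolSign o.2.2 * h))| ≤
      9 * |h| ^ 3 := by
  have hW := correlatedWeight_mem_stdSimplex hρ
  set p := -2 * u / (1 + u ^ 2) ^ 2
  set q := (3 * u ^ 2 - 1) / (1 + u ^ 2) ^ 3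
  let R : ℝ → ℝ := fun t ↦ bump (u + t) - bump u - p * t - q * t ^ 2
  have remainder_mixed : ∀ o, |R (mixedSign ρ s o * h)| ≤ 8 * |h| ^ 3 := fun o ↦ by
    refine (abs_bump_add_sub_taylor_le _ _).trans ?_
    rw [abs_mul, mul_pow]
    gcongr
    exact (pow_le_pow_left₀ (abs_nonneg _) (abs_mixedSign_le hρ hs o) 3).trans_eq (by norm_num)
  have remainder_sign : ∀ x : Bool, |R (boolSign x * h)| ≤ |h| ^ 3 := fun x ↦ by
    refine (abs_bump_add_sub_taylor_le _ _).trans_eq ?_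
    cases x <;> simp
  calc |expect (correlatedWeight ρ) fun o ↦
          e o.2.1 * (bump (u + mixedSign ρ s o * h) - bump (u + boolSign o.2.2 * h))|
      = |expect (correlatedWeight ρ) fun o ↦
          e o.2.1 * (R (mixedSign ρ s o * h) - R (boolSign o.2.2 * h))| := by
        rw [← sub_zero (expect _ _),
          ← expect_correlatedWeight_quadratic_eq_zero hs e (p * h) (q * h ^ 2), ← expect_sub]
        exact congrArg _ (congrArg _ (funext fun o ↦ by simp only [R]; ring))
    _ ≤ expect (correlatedWeight ρ) fun _ ↦ 9 * |h| ^ 3 := by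
        refine (abs_expect_le hW _).trans (expect_mono hW fun o ↦ ?_)
        rw [abs_mul, abs_of_nonneg (he _).1]
        refine (mul_le_of_le_one_left (abs_nonneg _) (he _).2).trans ((abs_sub _ _).trans ?_)
        linarith [remainder_mixed o, remainder_sign o.2.2]
    _ = 9 * |h| ^ 3 := expect_const hW _

variable [Fintype V] [DecidableEq V]

/-- The expectation that Lindeberg's argument follows as `J` grows: how close the hybrid value of
`c` is to `0` at scale `δ`, weighted by a function `e` of the bits `b`. -/
noncomputable def hybridBump (ρ s : ℝ) (c : MultilinearPoly V) (e : (V → Bool) → ℝ) (δ : ℝ)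
    (J : Finset V) : ℝ :=
  expect (prodWeight (correlatedWeight ρ)) fun ω ↦
    e (fun i ↦ (ω i).2.1) * bump (c.eval (fun i ↦ hybridSign ρ s J i (ω i)) / δ)

lemma abs_expect_resampled_hybridBump_sub_le (hρ : ρ ∈ Set.Icc 0 1) (hs : ρ ^ 2 + s ^ 2 = 1)
    (c : MultilinearPoly V) {e : (V → Bool) → ℝ} (he : ∀ b, e b ∈ Set.Icc 0 1) {δ : ℝ}
    (hδ : 0 < δ) {J : Finset V} {j : V} (hj : j ∉ J) (ω : V → Bool × Bool × Bool) :
    |expect (correlatedWeight ρ) fun o ↦ e (fun i ↦ (Function.update ω j o i).2.1) *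
        (bump (c.eval (fun i ↦ hybridSign ρ s (insert j J) i (Function.update ω j o i)) / δ) -
          bump (c.eval (fun i ↦ hybridSign ρ s J i (Function.update ω j o i)) / δ))| ≤
      9 / δ ^ 3 *
        |(c.cofactor j).evalOn (Finset.univ.erase j) (fun i ↦ hybridSign ρ s J i (ω i))| ^ 3 := by
  set A := c.evalOn (Finset.univ.erase j) (fun i ↦ hybridSign ρ s J i (ω i))
  set B := (c.cofactor j).evalOn (Finset.univ.erase j) (fun i ↦ hybridSign ρ s J i (ω i))
  have replaced : ∀ o,
      c.eval (fun i ↦ hybridSign ρ s (insert j J) i (Function.update ω j o i)) =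
        A + mixedSign ρ s o * B := fun o ↦ by
    refine (c.eval_eq_of_eq_off (j := j) fun i hi ↦ ?_).trans (by simp [hybridSign]; rfl)
    simp [hybridSign, hi]
  have original : ∀ o,
      c.eval (fun i ↦ hybridSign ρ s J i (Function.update ω j o i)) = A + boolSign o.2.2 * B :=
      fun o ↦ by
    refine (c.eval_eq_of_eq_off (j := j) fun i hi ↦ ?_).trans (by simp [hybridSign, hj]; rfl)
    simp [hi]
  have bits : ∀ o, (fun i ↦ (Function.update ω j o i).2.1) =
      Function.update (fun i ↦ (ω i).2.1) j o.2.1 := fun o ↦ by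
    ext i
    obtain rfl | hi := eq_or_ne i j <;> simp [*]
  have rescale : ∀ t, (A + t * B) / δ = A / δ + t * (B / δ) := fun t ↦ by ring
  have bound := abs_expect_bump_mixedSign_sub_le hρ hs
    (fun b ↦ he (Function.update (fun i ↦ (ω i).2.1) j b)) (A / δ) (B / δ)
  simp only [replaced, original, bits, rescale]
  refine bound.trans_eq ?_
  rw [abs_div, abs_of_pos hδ]
  ring

lemma abs_hybridBump_insert_sub_le (hρ : ρ ∈ Set.Icc 0 1) (hs : ρ ^ 2 + s ^ 2 = 1)
    {c : MultilinearPoly V} {D : ℕ} (hc : c.DegreeLE D) {e : (V → Bool) → ℝ}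
    (he : ∀ b, e b ∈ Set.Icc 0 1) {δ : ℝ} (hδ : 0 < δ) {J : Finset V} {j : V} (hj : j ∉ J)
    {l : ℝ} (hl : 0 < l) :
    |hybridBump ρ s c e δ (insert j J) - hybridBump ρ s c e δ J| ≤
      9 / δ ^ 3 * (l * c.influence j + 9 ^ D * c.influence j ^ 2 / l) := by
  have hw := correlatedWeight_mem_stdSimplex hρ
  have hW := prodWeight_mem_stdSimplex (V := V) hw
  rw [hybridBump, hybridBump, ← expect_sub, expect_prodWeight_resample hw _ j]
  simp only [← mul_sub]
  refine (abs_expect_le hW _).trans ((expect_mono hW fun ω ↦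
    abs_expect_resampled_hybridBump_sub_le hρ hs c he hδ hj ω).trans ?_)
  rw [expect_mul_left]
  gcongr
  exact (hasBonamiMoments_hybridSign hρ hs J).expect_abs_cofactor_pow_three_le hw hc j hl

/-- The invariance principle, by Lindeberg's replacement argument. -/
lemma abs_hybridBump_univ_sub_empty_le (hρ : ρ ∈ Set.Icc 0 1) (hs : ρ ^ 2 + s ^ 2 = 1)
    {c : MultilinearPoly V} {D : ℕ} (hc : c.DegreeLE D) {e : (V → Bool) → ℝ}
    (he : ∀ b, e b ∈ Set.Icc 0 1) {δ l : ℝ} (hδ : 0 < δ) (hl : 0 < l) :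
    |hybridBump ρ s c e δ Finset.univ - hybridBump ρ s c e δ ∅| ≤
      9 / δ ^ 3 * (l * (D * c.variance) + 9 ^ D * (∑ j, c.influence j ^ 2) / l) := by
  have telescoped : ∀ J : Finset V, |hybridBump ρ s c e δ J - hybridBump ρ s c e δ ∅| ≤
      ∑ j ∈ J, 9 / δ ^ 3 * (l * c.influence j + 9 ^ D * c.influence j ^ 2 / l) := fun J ↦ by
    induction J using Finset.induction_on with
    | empty => simp
    | insert j J hj ih =>
      rw [Finset.sum_insert hj]
      exact (abs_sub_le _ (hybridBump ρ s c e δ J) _).trans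
        (add_le_add (abs_hybridBump_insert_sub_le hρ hs hc he hδ hj hl) ih)
  refine (telescoped _).trans ?_
  rw [← Finset.mul_sum, Finset.sum_add_distrib, ← Finset.mul_sum, ← Finset.sum_div,
    ← Finset.mul_sum]
  gcongr
  exact hc.sum_influence_le

end Lindeberg

/-! ### Rotations -/

section Interpolation

lemma abs_eval_one_lagrangeBasis_le {M : ℕ} {s : Finset ℕ} (hsM : ∀ k ∈ s, k ≤ M) {k : ℕ}
    (hk : k ∈ s) :
    |(Lagrange.basis s (fun l : ℕ ↦ (l / M : ℝ)) k).eval 1| ≤ (M : ℝ) ^ (s.card - 1) := by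
  rw [Lagrange.basis, Polynomial.eval_prod, Finset.abs_prod, ← Finset.card_erase_of_mem hk,
    ← Finset.prod_const]
  refine Finset.prod_le_prod (fun _ _ ↦ abs_nonneg _) fun l hl ↦ ?_
  obtain ⟨hlk, hl⟩ := Finset.mem_erase.1 hl
  have hM : (0 : ℝ) < M := by
    have := hsM l hl
    have := hsM k hk
    exact_mod_cast (by omega : 0 < M)
  have numerator : |1 - (l / M : ℝ)| ≤ 1 := by
    have : (l / M : ℝ) ≤ 1 := div_le_one_of_le₀ (by exact_mod_cast hsM l hl) hM.le
    have : 0 ≤ (l / M : ℝ) := by positivity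
    rw [abs_le]
    constructor <;> linarith
  have separation : 1 / (M : ℝ) ≤ |(k / M : ℝ) - l / M| := by
    rw [← sub_div, abs_div, abs_of_pos hM]
    gcongr
    exact_mod_cast Int.one_le_abs (by omega : (k : ℤ) - l ≠ 0)
  have denominator : |(k / M : ℝ) - l / M|⁻¹ ≤ M := by
    rw [inv_le_comm₀ (lt_of_lt_of_le (by positivity) separation) hM]
    simpa using separation
  simp only [Lagrange.basisDivisor, Polynomial.eval_mul, Polynomial.eval_C, Polynomial.eval_sub,
    Polynomial.eval_X, abs_mul, abs_inv]
  exact (mul_le_mul denominator numerator (abs_nonneg _) hM.le).trans_eq (mul_one _)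

lemma abs_eval_one_le_of_abs_eval_div_le {p : Polynomial ℝ} {M : ℕ} (hM : 0 < M) {s : Finset ℕ}
    (hdeg : p.natDegree < s.card) (hsM : ∀ k ∈ s, k ≤ M) {δ : ℝ}
    (hp : ∀ k ∈ s, |p.eval (k / M : ℝ)| ≤ δ) :
    |p.eval 1| ≤ s.card * ((M : ℝ) ^ (s.card - 1) * δ) := by
  have nodes_injective : Set.InjOn (fun k : ℕ ↦ (k / M : ℝ)) s := fun a _ b _ h ↦ by
    have : (M : ℝ) ≠ 0 := by positivity
    exact_mod_cast (div_left_inj' this).1 h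
  have interpolate := congrArg (Polynomial.eval 1) <| Lagrange.eq_interpolate nodes_injective
    (Polynomial.degree_le_natDegree.trans_lt (by exact_mod_cast hdeg))
  rw [interpolate, Lagrange.interpolate_apply, Polynomial.eval_finsetSum, ← nsmul_eq_mul,
    ← Finset.sum_const]
  refine (Finset.abs_sum_le_sum_abs _ _).trans (Finset.sum_le_sum fun k hk ↦ ?_)
  rw [Polynomial.eval_mul, Polynomial.eval_C, abs_mul, mul_comm]
  exact mul_le_mul (abs_eval_one_lagrangeBasis_le hsM hk) (hp k hk) (abs_nonneg _) (by positivity)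

end Interpolation

/-- The sine of the angle whose half has tangent `t`. -/
noncomputable def halfTanSin (t : ℝ) : ℝ := 2 * t / (1 + t ^ 2)

/-- The cosine of the angle whose half has tangent `t`. -/
noncomputable def halfTanCos (t : ℝ) : ℝ := (1 - t ^ 2) / (1 + t ^ 2)

lemma halfTanSin_sq_add_halfTanCos_sq (t : ℝ) : halfTanSin t ^ 2 + halfTanCos t ^ 2 = 1 := by
  unfold halfTanSin halfTanCos
  field_simp
  ring

lemma halfTanSin_nonneg {t : ℝ} (ht : 0 ≤ t) : 0 ≤ halfTanSin t := by
  unfold halfTanSin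
  positivity

lemma halfTanSin_le {t : ℝ} (ht : 0 ≤ t) : halfTanSin t ≤ 2 * t :=
  div_le_self (by positivity) (le_add_of_nonneg_right (sq_nonneg t))

namespace MultilinearPoly

section Rotation

variable {V : Type*} [Fintype V]

open Polynomial in
/-- Clearing denominators, the value of `c` along the arc from `a` to `b` is a polynomial in the
tangent of the half angle. -/
lemma DegreeLE.exists_polynomial_rotation {c : MultilinearPoly V} {D : ℕ} (hc : c.DegreeLE D)
    (a b : V → ℝ) :
    ∃ p : ℝ[X], p.natDegree ≤ 2 * D ∧ ∀ t, p.eval t =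
      (1 + t ^ 2) ^ D * c.eval fun i ↦ halfTanSin t * b i + halfTanCos t * a i := by
  refine ⟨∑ S, C (c S) * ((1 + X ^ 2) ^ (D - S.card) *
    ∏ i ∈ S, (C (2 * b i) * X + C (a i) * (1 - X ^ 2))), ?_, fun t ↦ ?_⟩
  · refine natDegree_sum_le_of_forall_le _ _ fun S _ ↦ ?_
    obtain h | h := lt_or_ge D S.card
    · simp [hc S h]
    have factor : ((1 + X ^ 2 : ℝ[X]) ^ (D - S.card)).natDegree ≤ (D - S.card) * 2 :=
      natDegree_pow_le.trans (Nat.mul_le_mul_left _ (by compute_degree))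
    have product :
        (∏ i ∈ S, (C (2 * b i) * X + C (a i) * (1 - X ^ 2))).natDegree ≤ S.card * 2 :=
      (natDegree_prod_le _ _).trans <|
        Finset.sum_le_card_nsmul _ _ 2 fun i _ ↦ by compute_degree
    exact (natDegree_C_mul_le _ _).trans (natDegree_mul_le.trans (by omega))
  · have point : ∀ i, halfTanSin t * b i + halfTanCos t * a i =
        (1 + t ^ 2)⁻¹ * (2 * b i * t + a i * (1 - t ^ 2)) := fun i ↦ by
      unfold halfTanSin halfTanCos
      field_simp
    simp only [eval_finsetSum, eval_mul, eval_C, eval_pow, eval_add, eval_one, eval_X, eval_prod,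
      eval_sub, MultilinearPoly.eval, Finset.mul_sum, point, Finset.prod_mul_distrib,
      Finset.prod_const]
    refine Finset.sum_congr rfl fun S _ ↦ ?_
    obtain h | h := lt_or_ge D S.card
    · simp [hc S h]
    rw [← Nat.sub_add_cancel h, pow_add, Nat.add_sub_cancel, inv_pow]
    have : (0 : ℝ) < 1 + t ^ 2 := by positivity
    field_simp
    simp only [mul_comm (a _)]

/-- Interpolation: a large value at `b` prevents more than `2 * D` small values along the arc. -/
lemma DegreeLE.card_small_rotation_le {c : MultilinearPoly V} {D : ℕ} (hc : c.DegreeLE D)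
    (a b : V → ℝ) {K M : ℕ} (hM : 0 < M) (hKM : K ≤ M) {δ : ℝ}
    (hb : (2 * D + 1) * ((M : ℝ) ^ (2 * D) * δ) < |c.eval b|) :
    ((Finset.Icc 1 K).filter fun k : ℕ ↦ |c.eval fun i ↦
      halfTanSin (k / M) * b i + halfTanCos (k / M) * a i| ≤ δ).card ≤ 2 * D := by
  by_contra! many
  obtain ⟨s, hs, hcard⟩ := Finset.exists_subset_card_eq (Nat.succ_le_of_lt many)
  obtain ⟨p, hdeg, hp⟩ := hc.exists_polynomial_rotation a b
  have hsM : ∀ k ∈ s, k ≤ M := fun k hk ↦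
    (Finset.mem_Icc.1 (Finset.mem_filter.1 (hs hk)).1).2.trans hKM
  have small : ∀ k ∈ s, |p.eval (k / M : ℝ)| ≤ 2 ^ D * δ := fun k hk ↦ by
    have hle : (k / M : ℝ) ≤ 1 := div_le_one_of_le₀ (by exact_mod_cast hsM k hk) (by positivity)
    have hnonneg : 0 ≤ (k / M : ℝ) := by positivity
    rw [hp, abs_mul, abs_of_nonneg (by positivity)]
    refine mul_le_mul ?_ (Finset.mem_filter.1 (hs hk)).2 (abs_nonneg _) (by positivity)
    exact pow_le_pow_left₀ (by positivity) (by nlinarith) D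
  have bound := abs_eval_one_le_of_abs_eval_div_le hM (by omega) hsM small
  have endpoint : p.eval 1 = 2 ^ D * c.eval b := by
    rw [hp]
    norm_num [halfTanSin, halfTanCos]
  rw [endpoint, hcard, abs_mul, abs_of_pos (by positivity)] at bound
  push_cast [Nat.succ_eq_add_one, Nat.add_sub_cancel] at bound
  nlinarith [pow_pos (zero_lt_two (α := ℝ)) D]

end Rotation

end MultilinearPoly

section Marginals

variable {V : Type*} [Fintype V] [DecidableEq V]

lemma expect_correlatedWeight_mul (ρ : ℝ) (e g : (V → Bool) → ℝ) :
    expect (prodWeight (correlatedWeight ρ))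
        (fun ω ↦ e (fun i ↦ (ω i).2.1) * g fun i ↦ (ω i).2.2) =
      expect (cubeWeight V) fun b ↦ e b * noiseOp ρ g b := by
  let pair : Bool × Bool → ℝ := fun q ↦ (1 + ρ * boolSign q.1 * boolSign q.2) / 4
  have marginal : ∀ q, pair q = ∑ o with o.2 = q, correlatedWeight ρ o := by
    rintro ⟨b, x⟩
    simp [pair, correlatedWeight, Finset.sum_filter, Fintype.sum_prod_type]
    cases b <;> cases x <;> simp <;> ring
  have factor : ∀ q : Bool × Bool, pair q =
      uniformWeight Bool q.1 * (uniformWeight Bool q.2 * (1 + ρ * boolSign q.1 * boolSign q.2)) :=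
    fun q ↦ by
      simp [pair, uniformWeight]
      ring
  refine (expect_prodWeight_comp Prod.snd marginal
    fun ω : V → Bool × Bool ↦ e (fun i ↦ (ω i).1) * g fun i ↦ (ω i).2).trans ?_
  simp only [expect, noiseOp]
  rw [← (Equiv.arrowProdEquivProdArrow V (fun _ ↦ Bool) fun _ ↦ Bool).symm.sum_comp,
    Fintype.sum_prod_type]
  refine Finset.sum_congr rfl fun b _ ↦ ?_
  simp only [Finset.mul_sum]
  refine Finset.sum_congr rfl fun x _ ↦ ?_
  simp only [Equiv.arrowProdEquivProdArrow, Equiv.coe_fn_symm_mk, prodWeight, factor,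
    Finset.prod_mul_distrib, signs]
  ring

lemma expect_correlatedWeight_middle (ρ : ℝ) (e : (V → Bool) → ℝ) :
    expect (prodWeight (correlatedWeight ρ)) (fun ω ↦ e fun i ↦ (ω i).2.1) =
      expect (cubeWeight V) e := by
  refine expect_prodWeight_comp (fun o : Bool × Bool × Bool ↦ o.2.1) (fun b ↦ ?_) e
  simp [uniformWeight, correlatedWeight, Finset.sum_filter, Fintype.sum_prod_type]
  cases b <;> simp <;> ring

lemma expect_correlatedWeight_initial (ρ : ℝ) (F : (V → Bool × Bool) → ℝ) :
    expect (prodWeight (correlatedWeight ρ)) (fun ω ↦ F fun i ↦ ((ω i).1, (ω i).2.1)) =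
      expect (prodWeight (uniformWeight (Bool × Bool))) F := by
  refine expect_prodWeight_comp (fun o : Bool × Bool × Bool ↦ (o.1, o.2.1)) ?_ F
  rintro ⟨a, b⟩
  cases a <;> cases b <;>
    simp [uniformWeight, correlatedWeight, Finset.sum_filter, Fintype.sum_prod_type] <;> ring

lemma expect_uniformWeight_snd (e : (V → Bool) → ℝ) :
    expect (prodWeight (uniformWeight (Bool × Bool))) (fun ω ↦ e fun i ↦ (ω i).2) =
      expect (cubeWeight V) e := by
  refine expect_prodWeight_comp (fun o : Bool × Bool ↦ o.2) (fun b ↦ ?_) e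
  rw [Finset.sum_filter]
  cases b <;> norm_num [uniformWeight, Fintype.sum_prod_type]

end Marginals

/-- Jensen's inequality for the probability weights with density `e / 𝔼 e`. -/
lemma expect_mul_div_pow_le {Ω : Type*} [Fintype Ω] {w : Ω → ℝ} (hw : w ∈ stdSimplex ℝ Ω)
    {e : Ω → ℝ} (he : ∀ ω, e ω ∈ Set.Icc 0 1) (T : Ω → ℝ) {n : ℕ} (hn : Even n)
    (hpos : 0 < expect w e) :
    (expect w (fun ω ↦ e ω * T ω) / expect w e) ^ n ≤
      expect w (fun ω ↦ T ω ^ n) / expect w e := by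
  have jensen := Real.pow_arith_mean_le_arith_mean_pow_of_even Finset.univ
    (fun ω ↦ w ω * e ω / expect w e) T
    (fun ω _ ↦ div_nonneg (mul_nonneg (hw.1 ω) (he ω).1) hpos.le)
    (by rw [← Finset.sum_div]; exact div_self hpos.ne') hn
  calc (expect w (fun ω ↦ e ω * T ω) / expect w e) ^ n
      = (∑ ω, w ω * e ω / expect w e * T ω) ^ n := by
        rw [expect, Finset.sum_div]
        exact congrArg (· ^ n) (Finset.sum_congr rfl fun ω _ ↦ by ring)
    _ ≤ ∑ ω, w ω * e ω / expect w e * T ω ^ n := jensen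
    _ = expect w (fun ω ↦ e ω * T ω ^ n) / expect w e := by
        refine .trans ?_ (Finset.sum_div _ _ _).symm
        exact Finset.sum_congr rfl fun ω _ ↦ by ring
    _ ≤ expect w (fun ω ↦ T ω ^ n) / expect w e :=
        div_le_div_of_nonneg_right (expect_mono hw fun ω ↦
          mul_le_of_le_one_left (hn.pow_nonneg _) (he ω).2) hpos.le

/-! ### Anticoncentration of regular polynomials -/

/-- The number of nodes per unit length on which the values of a polynomial of degree `2 * D` are
sampled. -/
def nodeScale (D : ℕ) : ℕ := 20000 * D ^ 2

/-- The ratio between a large value of a polynomial of degree `D` and the values it takes at most of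
the nodes, by interpolation. -/
def interpolationConst (D : ℕ) : ℕ := 40 * (2 * D + 1) * nodeScale D ^ (2 * D)

/-- The factor by which the standard deviation exceeds the level at which third moments are
interpolated in Lindeberg's argument. -/
def lindebergConst (D : ℕ) : ℕ := 2000 * (D + 1) * 9 ^ D * interpolationConst D ^ 3

/-- A polynomial of degree `D` is regular if the sum of its squared influences is smaller than the
square of its variance by this factor. -/
def regularityConst (D : ℕ) : ℕ := lindebergConst D ^ 2 * 9 ^ D

lemma bump_div_le {δ r : ℝ} (hδ : 0 < δ) (hr : 0 < r) (x : ℝ) :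
    bump (x / δ) ≤ (if |x| ≤ r * δ then 1 else 0) + 1 / (1 + r ^ 2) := by
  split_ifs with h
  · have := bump_le_one (x / δ)
    have : 0 ≤ 1 / (1 + r ^ 2) := by positivity
    linarith
  · have large : r ≤ |x / δ| := by
      rw [abs_div, abs_of_pos hδ, le_div_iff₀ hδ]
      exact (not_le.1 h).le
    rw [zero_add, bump, ← sq_abs (x / δ)]
    gcongr

namespace MultilinearPoly

variable {V : Type*}

/-- The polynomial `c - v`. -/
noncomputable def shift (c : MultilinearPoly V) (v : ℝ) : MultilinearPoly V :=
  fun S ↦ c S - if S = ∅ then v else 0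

lemma DegreeLE.shift {c : MultilinearPoly V} {D : ℕ} (hc : c.DegreeLE D) (v : ℝ) :
    (c.shift v).DegreeLE D := fun S hS ↦ by
  have : S ≠ ∅ := by
    rintro rfl
    simp at hS
  simp [MultilinearPoly.shift, this, hc S hS]

variable [Fintype V]

lemma eval_shift (c : MultilinearPoly V) (v : ℝ) (y : V → ℝ) :
    (c.shift v).eval y = c.eval y - v := by
  simp [eval, shift, sub_mul, ite_mul]

lemma variance_shift (c : MultilinearPoly V) (v : ℝ) : (c.shift v).variance = c.variance :=
  Finset.sum_congr rfl fun S hS ↦ by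
    simp [shift, (Finset.mem_filter.1 hS).2.ne_empty]

lemma variance_le_sum_sq (c : MultilinearPoly V) : c.variance ≤ ∑ S, c S ^ 2 :=
  Finset.sum_le_univ_sum_of_nonneg fun _ ↦ sq_nonneg _

/-- The indicator of the event that the square of `c` is at least a quarter of its mean. -/
noncomputable def largeIndicator (c : MultilinearPoly V) (b : V → Bool) : ℝ :=
  if (∑ S, c S ^ 2) / 4 ≤ c.eval (signs b) ^ 2 then 1 else 0

lemma largeIndicator_mem_Icc (c : MultilinearPoly V) (b : V → Bool) :
    c.largeIndicator b ∈ Set.Icc 0 1 := by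
  unfold largeIndicator
  split_ifs <;> simp

variable [DecidableEq V]

lemma influence_shift (c : MultilinearPoly V) (v : ℝ) (j : V) :
    (c.shift v).influence j = c.influence j :=
  Finset.sum_congr rfl fun S hS ↦ by
    simp [shift, Finset.ne_empty_of_mem (Finset.mem_filter.1 hS).2]

/-- Anticoncentration by the second and fourth moments. -/
lemma DegreeLE.one_le_prob_le_eval_sq {c : MultilinearPoly V} {D : ℕ} (hc : c.DegreeLE D)
    (hpos : 0 < ∑ S, c S ^ 2) {t : ℝ} (ht : t ≤ (∑ S, c S ^ 2) / 4) :
    1 ≤ 2 * 9 ^ D * prob (cubeWeight V) fun b ↦ t ≤ c.eval (signs b) ^ 2 := by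
  have second : expect (cubeWeight V) (fun b ↦ c.eval (signs b) ^ 2) = ∑ S, c S ^ 2 :=
    hasBonamiMoments_boolSign.expect_eval_sq uniformWeight_mem_stdSimplex c
  have fourth : expect (cubeWeight V) (fun b ↦ c.eval (signs b) ^ 4) ≤
      9 ^ D * (∑ S, c S ^ 2) ^ 2 :=
    hasBonamiMoments_boolSign.expect_eval_pow_four_le uniformWeight_mem_stdSimplex hc
  refine one_le_two_mul_prob_of_expect_sq_le cubeWeight_mem_stdSimplex ?_ (second ▸ hpos)
    (second ▸ ht)
  simpa only [second, ← pow_mul] using fourth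

lemma DegreeLE.one_le_expect_largeIndicator {c : MultilinearPoly V} {D : ℕ} (hc : c.DegreeLE D)
    (hpos : 0 < ∑ S, c S ^ 2) :
    1 ≤ 2 * 9 ^ D * expect (cubeWeight V) c.largeIndicator :=
  (hc.one_le_prob_le_eval_sq hpos le_rfl).trans_eq (congrArg _ (prob_eq_expect _ _))

/-- Averaging over the arc from `a` to `b`: at some node, few `b` with a large value of `c` have a
small value there. -/
lemma DegreeLE.exists_node_expect_le {c : MultilinearPoly V} {D : ℕ} (hc : c.DegreeLE D)
    {K M : ℕ} (hK : 0 < K) (hKM : K ≤ M) {e : (V → Bool) → ℝ} (he : ∀ b, 0 ≤ e b) {δ : ℝ}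
    (hlarge : ∀ b, e b ≠ 0 → (2 * D + 1) * ((M : ℝ) ^ (2 * D) * δ) < |c.eval (signs b)|) :
    ∃ k ∈ Finset.Icc 1 K, expect (prodWeight (uniformWeight (Bool × Bool))) (fun ω ↦
        e (fun i ↦ (ω i).2) * if |c.eval fun i ↦ halfTanSin (k / M) * boolSign (ω i).2 +
          halfTanCos (k / M) * boolSign (ω i).1| ≤ δ then 1 else 0) ≤
      2 * D / K * expect (cubeWeight V) e := by
  refine Finset.exists_le_of_sum_le ⟨1, by simp; omega⟩ ?_
  rw [← expect_sum]
  calc expect (prodWeight (uniformWeight (Bool × Bool))) (fun ω ↦ ∑ k ∈ Finset.Icc 1 K,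
        e (fun i ↦ (ω i).2) * if |c.eval fun i ↦ halfTanSin (k / M) * boolSign (ω i).2 +
          halfTanCos (k / M) * boolSign (ω i).1| ≤ δ then 1 else 0)
      ≤ expect (prodWeight (uniformWeight (Bool × Bool)))
          fun ω : V → Bool × Bool ↦ 2 * D * e fun i ↦ (ω i).2 := by
        refine expect_mono (prodWeight_mem_stdSimplex uniformWeight_mem_stdSimplex) fun ω ↦ ?_
        rw [← Finset.mul_sum, mul_comm]
        by_cases h : e (fun i ↦ (ω i).2) = 0
        · simp [h]
        refine mul_le_mul_of_nonneg_right ?_ (he _)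
        rw [Finset.sum_boole]
        exact_mod_cast hc.card_small_rotation_le (fun i ↦ boolSign (ω i).1)
          (signs fun i ↦ (ω i).2) (hK.trans_le hKM) hKM (hlarge _ h)
    _ = ∑ k ∈ Finset.Icc 1 K, 2 * D / K * expect (cubeWeight V) e := by
        have : (K : ℝ) ≠ 0 := by positivity
        rw [expect_mul_left, expect_uniformWeight_snd, Finset.sum_const, Nat.card_Icc, nsmul_eq_mul,
          Nat.add_sub_cancel]
        field_simp

lemma hybridBump_univ_le {ρ s : ℝ} (hρ : ρ ∈ Set.Icc 0 1) (c : MultilinearPoly V)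
    {e : (V → Bool) → ℝ} (he : ∀ b, 0 ≤ e b) {δ r : ℝ} (hδ : 0 < δ) (hr : 0 < r) :
    hybridBump ρ s c e δ Finset.univ ≤
      expect (prodWeight (uniformWeight (Bool × Bool))) (fun ω ↦ e (fun i ↦ (ω i).2) *
        if |c.eval fun i ↦ ρ * boolSign (ω i).2 + s * boolSign (ω i).1| ≤ r * δ then 1 else 0) +
      expect (cubeWeight V) e / (1 + r ^ 2) := by
  rw [← expect_correlatedWeight_initial ρ, ← expect_correlatedWeight_middle ρ, div_eq_mul_one_div,
    ← expect_mul_right, ← expect_add]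
  refine expect_mono (prodWeight_mem_stdSimplex (correlatedWeight_mem_stdSimplex hρ)) fun ω ↦ ?_
  rw [← mul_add]
  refine mul_le_mul_of_nonneg_left ?_ (he _)
  simpa [hybridSign, mixedSign] using bump_div_le hδ hr _

lemma le_hybridBump_empty {ρ s : ℝ} (hρ : ρ ∈ Set.Icc 0 1) (c : MultilinearPoly V)
    {e : (V → Bool) → ℝ} (he : ∀ b, 0 ≤ e b) (δ : ℝ) :
    expect (cubeWeight V) e - expect (cubeWeight V) (fun b ↦
        e b * noiseOp ρ (fun x ↦ if c.eval (signs x) ≠ 0 then 1 else 0) b) ≤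
      hybridBump ρ s c e δ ∅ := by
  rw [← expect_correlatedWeight_mul, ← expect_correlatedWeight_middle ρ, ← expect_sub]
  refine expect_mono (prodWeight_mem_stdSimplex (correlatedWeight_mem_stdSimplex hρ)) fun ω ↦ ?_
  have sign_eq : (fun i ↦ hybridSign ρ s ∅ i (ω i)) = signs fun i ↦ (ω i).2.2 := by
    ext i
    simp [hybridSign, signs]
  rw [sign_eq]
  by_cases h : c.eval (signs fun i ↦ (ω i).2.2) = 0
  · simp [h, bump]
  · simpa [h] using mul_nonneg (he _) (bump_nonneg _)

/-- The constants are such that the error in Lindeberg's argument is negligible when `c` is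
regular. -/
lemma lindeberg_error_le {c : MultilinearPoly V} {D : ℕ} (hD : 0 < D) (hpos : 0 < c.variance)
    (hreg : (∑ j, c.influence j ^ 2) * regularityConst D ≤ c.variance ^ 2) {A : ℝ} (hA : 0 < A)
    (hcA : c.variance ≤ A ^ 2) :
    9 / (A / interpolationConst D) ^ 3 * (√c.variance / lindebergConst D * (D * c.variance) +
      9 ^ D * (∑ j, c.influence j ^ 2) / (√c.variance / lindebergConst D)) ≤
        9 / (2000 * 9 ^ D) := by
  have hH : (0 : ℝ) < interpolationConst D := by
    simp only [interpolationConst, nodeScale]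
    positivity
  have hK : (lindebergConst D : ℝ) = 2000 * (D + 1) * 9 ^ D * (interpolationConst D : ℝ) ^ 3 := by
    simp [lindebergConst]
  set H := (interpolationConst D : ℝ)
  set K := (lindebergConst D : ℝ)
  have hK0 : 0 < K := by
    rw [hK]
    positivity
  set σ := √c.variance
  have : 0 < σ := Real.sqrt_pos.2 hpos
  have variance_eq : c.variance = σ ^ 2 := (Real.sq_sqrt hpos.le).symm
  have hσA : σ ≤ A := Real.sqrt_le_iff.2 ⟨hA.le, hcA⟩
  have influence_term : 9 ^ D * (∑ j, c.influence j ^ 2) / (σ / K) ≤ σ ^ 3 / K := by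
    rw [div_le_div_iff₀ (by positivity) hK0, mul_div_assoc', le_div_iff₀ hK0]
    calc 9 ^ D * (∑ j, c.influence j ^ 2) * K * K
        = (∑ j, c.influence j ^ 2) * regularityConst D := by
          rw [regularityConst]
          push_cast
          ring
      _ ≤ σ ^ 3 * σ := hreg.trans_eq (by rw [variance_eq]; ring)
  calc 9 / (A / H) ^ 3 * (σ / K * (D * c.variance) + 9 ^ D * (∑ j, c.influence j ^ 2) / (σ / K))
      ≤ 9 / (A / H) ^ 3 * (σ / K * (D * σ ^ 2) + σ ^ 3 / K) := by
        rw [variance_eq]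
        gcongr
    _ = 9 / (A / H) ^ 3 * ((D + 1) * σ ^ 3 / K) := by ring
    _ ≤ 9 / (A / H) ^ 3 * ((D + 1) * A ^ 3 / K) := by gcongr
    _ = 9 / (2000 * 9 ^ D) := by
        rw [hK]
        field_simp

end MultilinearPoly

/-- Hypercontractivity: a small set is not likely to be hit by the noise from a set which is not
extremely small. -/
lemma four_fifths_le_prob_of_expect_mul_noiseOp {V : Type*} [Fintype V] [DecidableEq V]
    {D : ℕ} (hD : 0 < D) {ρ : ℝ} (hρ : |ρ| * (2 * (50 * D : ℕ)) ≤ 1) {e : (V → Bool) → ℝ}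
    (he : ∀ b, e b ∈ Set.Icc 0 1) (hlarge : 1 ≤ 2 * 9 ^ D * expect (cubeWeight V) e)
    {p : (V → Bool) → Prop} [DecidablePred p] (hp : 0.96 * expect (cubeWeight V) e ≤
      expect (cubeWeight V) fun b ↦ e b * noiseOp ρ (fun x ↦ if p x then 1 else 0) b) :
    4 / 5 ≤ prob (cubeWeight V) p := by
  have hγ : 0 < expect (cubeWeight V) e :=
    pos_of_mul_pos_right (one_pos.trans_le hlarge) (by positivity)
  have hδ := prob_nonneg cubeWeight_mem_stdSimplex p
  have jensen := expect_mul_div_pow_le cubeWeight_mem_stdSimplex he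
    (noiseOp ρ fun x ↦ if p x then 1 else 0) (even_two_mul (50 * D)) hγ
  have hypercontractive := expect_noiseOp_pow_le (50 * D) hρ fun x ↦ if p x then 1 else 0
  simp only [ite_pow, one_pow, zero_pow two_ne_zero, ← prob_eq_expect] at hypercontractive
  set γ := expect (cubeWeight V) e
  set δ := prob (cubeWeight V) p
  have upper : (0.96 : ℝ) ^ (2 * (50 * D)) ≤ δ ^ (50 * D) / γ :=
    (pow_le_pow_left₀ (by norm_num) ((le_div_iff₀ hγ).2 hp) _).trans
      (jensen.trans (div_le_div_of_nonneg_right hypercontractive hγ.le))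
  have absorb : 1 ≤ 18 ^ D * γ := by
    refine hlarge.trans (mul_le_mul_of_nonneg_right ?_ hγ.le)
    rw [show (18 : ℝ) = 2 * 9 by norm_num, mul_pow]
    gcongr
    exact le_self_pow₀ one_le_two hD.ne'
  have root : (0.96 ^ 100 : ℝ) ^ D ≤ (18 * δ ^ 50) ^ D :=
    calc (0.96 ^ 100 : ℝ) ^ D = 0.96 ^ (2 * (50 * D)) := by
          rw [← pow_mul]
          ring_nf
      _ ≤ δ ^ (50 * D) / γ := upper
      _ ≤ (18 * δ ^ 50) ^ D := by
          rw [div_le_iff₀ hγ, mul_pow, ← pow_mul, mul_right_comm]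
          exact le_mul_of_one_le_left (by positivity) absorb
  have bound := le_of_pow_le_pow_left₀ hD.ne' (by positivity) root
  by_contra! h
  have := pow_le_pow_left₀ hδ h.le 50
  norm_num at bound this
  linarith

namespace MultilinearPoly

section Regular

variable {V : Type*} [Fintype V] {c : MultilinearPoly V} {D : ℕ}

lemma sqrt_div_two_le_of_largeIndicator_ne_zero {b : V → Bool} (hb : c.largeIndicator b ≠ 0) :
    √(∑ S, c S ^ 2) / 2 ≤ |c.eval (signs b)| := by
  have large : (∑ S, c S ^ 2) / 4 ≤ c.eval (signs b) ^ 2 := by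
    by_contra h
    simp [largeIndicator, h] at hb
  refine le_of_sq_le_sq ?_ (abs_nonneg _)
  rw [div_pow, Real.sq_sqrt (Finset.sum_nonneg fun S _ ↦ sq_nonneg _), sq_abs]
  linarith

variable [DecidableEq V]

/-- A rotation by a small angle after which `c` is rarely close to `0`. -/
lemma DegreeLE.exists_rotation_expect_le (hc : c.DegreeLE D) (hD : 0 < D)
    (hpos : 0 < ∑ S, c S ^ 2) :
    ∃ t : ℝ, 0 ≤ t ∧ t * (200 * D) ≤ 1 ∧
      expect (prodWeight (uniformWeight (Bool × Bool))) (fun ω ↦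
        c.largeIndicator (fun i ↦ (ω i).2) *
          if |c.eval fun i ↦ halfTanSin t * boolSign (ω i).2 + halfTanCos t * boolSign (ω i).1| ≤
            10 * (√(∑ S, c S ^ 2) / interpolationConst D) then 1 else 0) ≤
      expect (cubeWeight V) c.largeIndicator / 50 := by
  have hM : 0 < nodeScale D := by
    unfold nodeScale
    positivity
  have interpolation : (2 * (D : ℝ) + 1) * ((nodeScale D : ℝ) ^ (2 * D) *
      (10 * (√(∑ S, c S ^ 2) / interpolationConst D))) = √(∑ S, c S ^ 2) / 4 := by
    simp only [interpolationConst]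
    push_cast
    field_simp
    norm_num
  obtain ⟨k, hk, hkle⟩ := hc.exists_node_expect_le (K := 100 * D) (M := nodeScale D) (by omega)
    (by unfold nodeScale; nlinarith) (fun b ↦ (c.largeIndicator_mem_Icc b).1) fun b hb ↦ by
      rw [interpolation]
      have := sqrt_div_two_le_of_largeIndicator_ne_zero hb
      have := Real.sqrt_pos.2 hpos
      linarith
  refine ⟨k / nodeScale D, by positivity, ?_, hkle.trans_eq ?_⟩
  · have : (k : ℝ) ≤ 100 * D := by exact_mod_cast (Finset.mem_Icc.1 hk).2
    rw [div_mul_eq_mul_div, div_le_one (by positivity), nodeScale]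
    push_cast
    nlinarith
  · push_cast
    field_simp
    linarith

/-- The event that `c` does not vanish survives a small amount of noise, conditionally on `c` being
large. -/
lemma DegreeLE.exists_expect_largeIndicator_mul_noiseOp_ge (hc : c.DegreeLE D) (hD : 0 < D)
    (hpos : 0 < c.variance)
    (hreg : (∑ j, c.influence j ^ 2) * regularityConst D ≤ c.variance ^ 2) :
    ∃ ρ : ℝ, |ρ| * (2 * (50 * D : ℕ)) ≤ 1 ∧ 0.96 * expect (cubeWeight V) c.largeIndicator ≤
      expect (cubeWeight V) fun b ↦
        c.largeIndicator b * noiseOp ρ (fun x ↦ if c.eval (signs x) ≠ 0 then 1 else 0) b := by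
  have hsum := hpos.trans_le c.variance_le_sum_sq
  have he := c.largeIndicator_mem_Icc
  set A := √(∑ S, c S ^ 2)
  have hA : 0 < A := Real.sqrt_pos.2 hsum
  have hH : (0 : ℝ) < interpolationConst D := by
    simp only [interpolationConst, nodeScale]
    positivity
  have hK : (0 : ℝ) < lindebergConst D := by
    simp only [lindebergConst]
    push_cast
    positivity
  obtain ⟨t, ht0, ht, rotated⟩ := hc.exists_rotation_expect_le hD hsum
  have hDr : (1 : ℝ) ≤ D := by exact_mod_cast hD
  have hρ0 := halfTanSin_nonneg ht0
  have hρt := halfTanSin_le ht0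
  have hρ : halfTanSin t ∈ Set.Icc 0 1 := ⟨hρ0, by nlinarith⟩
  have large_prob := hc.one_le_expect_largeIndicator hsum
  have lindeberg := (abs_hybridBump_univ_sub_empty_le hρ (halfTanSin_sq_add_halfTanCos_sq t) hc he
    (by positivity : 0 < A / interpolationConst D) (div_pos (Real.sqrt_pos.2 hpos) hK)).trans <|
      lindeberg_error_le hD hpos hreg hA <|
        c.variance_le_sum_sq.trans_eq (Real.sq_sqrt hsum.le).symm
  have error_le : 9 / (2000 * 9 ^ D) ≤ expect (cubeWeight V) c.largeIndicator / 100 := by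
    rw [div_le_div_iff₀ (by positivity) (by norm_num)]
    nlinarith
  have univ_le := hybridBump_univ_le (s := halfTanCos t) hρ c (fun b ↦ (he b).1)
    (by positivity : 0 < A / interpolationConst D) (by norm_num : (0 : ℝ) < 10)
  have empty_ge := le_hybridBump_empty (s := halfTanCos t) hρ c (fun b ↦ (he b).1)
    (A / interpolationConst D)
  refine ⟨halfTanSin t, ?_, ?_⟩
  · rw [abs_of_nonneg hρ0]
    push_cast
    nlinarith
  · have := expect_nonneg cubeWeight_mem_stdSimplex fun b ↦ (he b).1
    linarith [(abs_le.1 lindeberg).1]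

theorem DegreeLE.prob_eval_eq_le_of_regular (hc : c.DegreeLE D) (hD : 0 < D)
    (hpos : 0 < c.variance)
    (hreg : (∑ j, c.influence j ^ 2) * regularityConst D ≤ c.variance ^ 2) (v : ℝ) :
    prob (cubeWeight V) (fun x ↦ c.eval (signs x) = v) ≤ 1 / 5 := by
  have hposShift : 0 < (c.shift v).variance := hpos.trans_eq (c.variance_shift v).symm
  have hregShift : (∑ j, (c.shift v).influence j ^ 2) * regularityConst D ≤
      (c.shift v).variance ^ 2 := by
    simpa only [c.variance_shift v, c.influence_shift v] using hreg
  obtain ⟨ρ, hρ, correlated⟩ :=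
    (hc.shift v).exists_expect_largeIndicator_mul_noiseOp_ge hD hposShift hregShift
  have nonzero := four_fifths_le_prob_of_expect_mul_noiseOp hD hρ (largeIndicator_mem_Icc _)
    ((hc.shift v).one_le_expect_largeIndicator (hposShift.trans_le (variance_le_sum_sq _)))
    correlated
  simp only [eval_shift, ne_eq, sub_eq_zero] at nonzero
  rw [prob_not cubeWeight_mem_stdSimplex] at nonzero
  linarith

end Regular

end MultilinearPoly

/-! ### Random restrictions -/

section Restriction

variable {V Ω : Type*} [Fintype Ω] {w : Ω → ℝ}

lemma one_le_four_mul_prob (hw : w ∈ stdSimplex ℝ Ω) {C : ℝ} (hC : 0 ≤ C) {p q r : Ω → Prop}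
    (hp : 1 ≤ 2 * C * prob w p) (hq : 4 * C * prob w q ≤ 1) (h : ∀ ω, p ω → ¬q ω → r ω) :
    1 ≤ 4 * C * prob w r := by
  have union : prob w p ≤ prob w r + prob w q := prob_le_prob_add_prob hw fun ω hω ↦ by
    by_cases hq : q ω
    exacts [.inr hq, .inl (h ω hω hq)]
  nlinarith [mul_le_mul_of_nonneg_left union hC]

variable [DecidableEq V]

/-- The coefficient of `∏ i ∈ S, y i` in `c` after fixing the variables in `H`, as a polynomial in
the latter. -/
def MultilinearPoly.restrictCoeff (c : MultilinearPoly V) (H S : Finset V) : MultilinearPoly V :=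
  fun T ↦ if T ⊆ H ∧ Disjoint S H then c (S ∪ T) else 0

lemma MultilinearPoly.DegreeLE.restrictCoeff {c : MultilinearPoly V} {D : ℕ} (hc : c.DegreeLE D)
    (H S : Finset V) : (c.restrictCoeff H S).DegreeLE D := fun T hT ↦ by
  have : D < (S ∪ T).card := hT.trans_le (Finset.card_le_card Finset.subset_union_right)
  rw [MultilinearPoly.restrictCoeff, hc _ this, ite_self]

variable [Fintype V]

lemma expect_piecewise (hw : w ∈ stdSimplex ℝ Ω) (H : Finset V) (F : (V → Ω) → ℝ) :
    expect (prodWeight w) (fun ρ ↦ expect (prodWeight w) fun y ↦ F (H.piecewise ρ y)) =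
      expect (prodWeight w) F := by
  induction H using Finset.induction_on generalizing F with
  | empty => simp [expect_const (prodWeight_mem_stdSimplex hw)]
  | insert j H hj ih =>
    rw [expect_prodWeight_resample hw _ j, ← ih F]
    refine congrArg _ (funext fun ρ ↦ ?_)
    rw [expect_prodWeight_resample hw (fun y ↦ F (H.piecewise ρ y)) j]
    simp only [expect, Finset.mul_sum]
    rw [Finset.sum_comm]
    refine Finset.sum_congr rfl fun y _ ↦ Finset.sum_congr rfl fun o _ ↦ ?_
    have : (insert j H).piecewise (Function.update ρ j o) y =
        H.piecewise ρ (Function.update y j o) := by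
      ext i
      rcases eq_or_ne i j with rfl | hij
      · simp [hj]
      · simp [Finset.piecewise, hij]
    rw [this]
    ring

lemma sum_sdiff_inter (H : Finset V) (g : Finset V → Finset V → ℝ) :
    ∑ S, g (S \ H) (S ∩ H) = ∑ S, ∑ T, if T ⊆ H ∧ Disjoint S H then g S T else 0 := by
  rw [← Finset.sum_product', ← Finset.sum_filter]
  refine Finset.sum_nbij' (fun S ↦ (S \ H, S ∩ H)) (fun p ↦ p.1 ∪ p.2) ?_ ?_ ?_ ?_ fun _ _ ↦ rfl
  · simp [Finset.sdiff_disjoint]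
  · simp
  · simp [Finset.sdiff_union_inter]
  · rintro ⟨S, T⟩ h
    obtain ⟨hT, hS⟩ : T ⊆ H ∧ Disjoint S H := by simpa using h
    rw [Finset.disjoint_left] at hS
    ext i <;> simp only [Finset.mem_sdiff, Finset.mem_inter, Finset.mem_union] <;> grind

namespace MultilinearPoly

variable {c : MultilinearPoly V} {D : ℕ}

/-- The polynomial that arises from `c` by setting the variables in `H` to the signs of `ρ`. -/
noncomputable def restrict (c : MultilinearPoly V) (H : Finset V) (ρ : V → Bool) :
    MultilinearPoly V :=
  fun S ↦ (c.restrictCoeff H S).eval (signs ρ)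

lemma eval_restrict (c : MultilinearPoly V) (H : Finset V) (ρ y : V → Bool) :
    (c.restrict H ρ).eval (signs y) = c.eval (signs (H.piecewise ρ y)) := by
  have factor : ∀ S, ∏ i ∈ S, signs (H.piecewise ρ y) i =
      (∏ i ∈ S ∩ H, signs ρ i) * ∏ i ∈ S \ H, signs y i := fun S ↦ by
    simp only [signs, ← Finset.prod_piecewise]
    exact Finset.prod_congr rfl fun i _ ↦ by by_cases h : i ∈ H <;> simp [h]
  calc (c.restrict H ρ).eval (signs y)
      = ∑ S, ∑ T, if T ⊆ H ∧ Disjoint S H then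
          c (S ∪ T) * ((∏ i ∈ T, signs ρ i) * ∏ i ∈ S, signs y i) else 0 := by
        simp only [eval, restrict, restrictCoeff, Finset.sum_mul, ite_mul, zero_mul, mul_assoc]
    _ = ∑ S, c (S \ H ∪ S ∩ H) * ((∏ i ∈ S ∩ H, signs ρ i) * ∏ i ∈ S \ H, signs y i) :=
        (sum_sdiff_inter H fun S T ↦
          c (S ∪ T) * ((∏ i ∈ T, signs ρ i) * ∏ i ∈ S, signs y i)).symm
    _ = c.eval (signs (H.piecewise ρ y)) := by
        simp only [Finset.sdiff_union_inter, eval, factor]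

lemma DegreeLE.restrict (hc : c.DegreeLE D) (H : Finset V) (ρ : V → Bool) :
    (c.restrict H ρ).DegreeLE D := fun S hS ↦
  Finset.sum_eq_zero fun T _ ↦ by
    rw [MultilinearPoly.restrictCoeff, hc _ (hS.trans_le (Finset.card_le_card
      Finset.subset_union_left)), ite_self, zero_mul]

lemma DegreeLE.restrict_apply_of_disjoint {M H : Finset V} (hc : c.DegreeLE M.card)
    (hM : Disjoint M H) (ρ : V → Bool) : c.restrict H ρ M = c M := by
  have top : ∀ T, T ≠ ∅ → c.restrictCoeff H M T = 0 := by
    intro T hT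
    rw [MultilinearPoly.restrictCoeff]
    split_ifs with h
    · apply hc
      rw [Finset.card_union_of_disjoint (hM.mono_right h.1)]
      exact Nat.lt_add_of_pos_right (Finset.card_pos.2 (Finset.nonempty_iff_ne_empty.2 hT))
    · rfl
  rw [MultilinearPoly.restrict, eval, Finset.sum_eq_single ∅ (fun T _ hT ↦ by
    rw [top T hT, zero_mul]) (by simp)]
  simp [MultilinearPoly.restrictCoeff, hM]

lemma expect_restrict_sq (c : MultilinearPoly V) (H S : Finset V) :
    expect (cubeWeight V) (fun ρ ↦ c.restrict H ρ S ^ 2) = ∑ T, c.restrictCoeff H S T ^ 2 :=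
  hasBonamiMoments_boolSign.expect_eval_sq uniformWeight_mem_stdSimplex _

lemma expect_sum_restrict_sq (c : MultilinearPoly V) (H : Finset V) (p : Finset V → Prop)
    [DecidablePred p] :
    expect (cubeWeight V) (fun ρ ↦ ∑ S with p S, c.restrict H ρ S ^ 2) =
      ∑ S with p (S \ H), c S ^ 2 := by
  have split := sum_sdiff_inter H fun S T ↦ if p S then c (S ∪ T) ^ 2 else 0
  simp only [Finset.sdiff_union_inter] at split
  rw [Finset.sum_filter, split, expect_sum, Finset.sum_filter]
  refine Finset.sum_congr rfl fun S _ ↦ ?_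
  rw [expect_restrict_sq]
  split_ifs with hp
  · exact Finset.sum_congr rfl fun T _ ↦ by rw [restrictCoeff]; split_ifs <;> simp
  · simp

lemma expect_influence_restrict (c : MultilinearPoly V) (H : Finset V) (j : V) :
    expect (cubeWeight V) (fun ρ ↦ (c.restrict H ρ).influence j) =
      if j ∈ H then 0 else c.influence j := by
  simp only [influence]
  rw [expect_sum_restrict_sq c H (j ∈ ·)]
  split_ifs with h <;> simp [h]

lemma expect_sum_influence_restrict (c : MultilinearPoly V) (H : Finset V) :
    expect (cubeWeight V) (fun ρ ↦ ∑ j, (c.restrict H ρ).influence j) =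
      ∑ j ∈ Hᶜ, c.influence j := by
  rw [expect_sum, Finset.sum_congr rfl fun j _ ↦ c.expect_influence_restrict H j,
    ← Finset.sum_add_sum_compl H, Finset.sum_ite_of_true fun _ h ↦ h,
    Finset.sum_ite_of_false fun _ h ↦ Finset.mem_compl.1 h, Finset.sum_const_zero, zero_add]

lemma DegreeLE.expect_influence_restrict_sq_le (hc : c.DegreeLE D) (H : Finset V) (j : V) :
    expect (cubeWeight V) (fun ρ ↦ (c.restrict H ρ).influence j ^ 2) ≤
      9 ^ D * expect (cubeWeight V) (fun ρ ↦ (c.restrict H ρ).influence j) ^ 2 := by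
  simp only [influence]
  rw [expect_sum]
  refine expect_sum_sq_le cubeWeight_mem_stdSimplex (fun _ _ ↦ sq_nonneg _) (by positivity)
    fun S _ ↦ ?_
  rw [expect_restrict_sq]
  simp only [← pow_mul]
  exact hasBonamiMoments_boolSign.expect_eval_pow_four_le uniformWeight_mem_stdSimplex
    (hc.restrictCoeff H S)

end MultilinearPoly

end Restriction

/-- A variable is influential for a polynomial of degree `D` if its influence is at least this
fraction of the variance. -/
def influenceConst (D : ℕ) : ℕ := 10240 * 9 ^ (3 * D) * D ^ 2 * regularityConst D

/-- A bound on the number of influential variables. -/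
def influentialBound (D : ℕ) : ℕ := D * influenceConst D

lemma regularityConst_pos {D : ℕ} (hD : 0 < D) : 0 < regularityConst D := by
  unfold regularityConst lindebergConst interpolationConst nodeScale
  positivity

namespace MultilinearPoly

variable {V : Type*} [Fintype V]

lemma variance_nonneg (c : MultilinearPoly V) : 0 ≤ c.variance :=
  Finset.sum_nonneg fun _ _ ↦ sq_nonneg _

variable [DecidableEq V] {c : MultilinearPoly V} {D : ℕ}

/-- The probability that `c` takes the value `v` at random signs. -/
noncomputable def hitProb (c : MultilinearPoly V) (v : ℝ) : ℝ :=
  prob (cubeWeight V) fun x ↦ c.eval (signs x) = v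

lemma hitProb_eq_expect_restrict (c : MultilinearPoly V) (H : Finset V) (v : ℝ) :
    c.hitProb v = expect (cubeWeight V) fun ρ ↦ (c.restrict H ρ).hitProb v := by
  simp only [hitProb, prob_eq_expect, eval_restrict]
  exact (expect_piecewise uniformWeight_mem_stdSimplex H
    fun x ↦ if c.eval (signs x) = v then (1 : ℝ) else 0).symm

/-- Chebyshev's inequality. -/
lemma sq_sub_mul_hitProb_le (c : MultilinearPoly V) (v : ℝ) :
    (c ∅ - v) ^ 2 * c.hitProb v ≤ c.variance := by
  have second : expect (cubeWeight V) (fun x ↦ (c.eval (signs x) - c ∅) ^ 2) = c.variance := by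
    simp only [← eval_shift]
    rw [← c.variance_shift (c ∅), variance, Finset.sum_filter_of_ne]
    · exact hasBonamiMoments_boolSign.expect_eval_sq uniformWeight_mem_stdSimplex _
    · intro S _ hS
      contrapose! hS
      simp [shift, hS]
  rw [hitProb, prob_eq_expect, ← expect_mul_left, ← second]
  refine expect_mono cubeWeight_mem_stdSimplex fun x ↦ ?_
  split_ifs with h
  · rw [h]
    exact le_of_eq (by ring)
  · simpa using sq_nonneg _

lemma variance_le_sum_influence (c : MultilinearPoly V) : c.variance ≤ ∑ j, c.influence j := by
  rw [sum_influence, variance, Finset.sum_filter]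
  refine Finset.sum_le_sum fun S _ ↦ ?_
  split_ifs with h
  · have : (1 : ℝ) ≤ S.card := mod_cast Finset.card_pos.2 h
    exact le_mul_of_one_le_left (sq_nonneg _) this
  · positivity

lemma expect_variance_restrict_le (c : MultilinearPoly V) (H : Finset V) :
    expect (cubeWeight V) (fun ρ ↦ (c.restrict H ρ).variance) ≤ ∑ j ∈ Hᶜ, c.influence j := by
  rw [← expect_sum_influence_restrict]
  exact expect_mono cubeWeight_mem_stdSimplex fun ρ ↦ variance_le_sum_influence _

lemma variance_le_add_sum_influence (c : MultilinearPoly V) (H : Finset V) :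
    c.variance ≤ (c.restrictCoeff H ∅).variance + ∑ j ∈ Hᶜ, c.influence j := by
  refine le_trans ?_ (add_le_add le_rfl (c.expect_variance_restrict_le H))
  simp only [variance]
  rw [expect_sum_restrict_sq]
  simp only [Finset.sum_filter]
  rw [← Finset.sum_add_distrib]
  refine Finset.sum_le_sum fun S _ ↦ ?_
  split_ifs with hS hSH hSH
  · exact le_add_of_nonneg_left (sq_nonneg _)
  · have : S ⊆ H := Finset.sdiff_eq_empty_iff_subset.1 (Finset.not_nonempty_iff_eq_empty.1 hSH)
    simp [restrictCoeff, this]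
  · exact absurd (hSH.mono Finset.sdiff_subset) hS
  · simp

/-- If little influence lies outside `H`, the restricted polynomial is usually concentrated around
its constant coefficient, which is itself anticoncentrated as a polynomial in the variables in
`H`. -/
lemma DegreeLE.one_le_prob_hitProb_restrict_le_of_sum_influence_le (hc : c.DegreeLE D)
    (hpos : 0 < c.variance) (v : ℝ) {H : Finset V}
    (hH : (∑ j ∈ Hᶜ, c.influence j) * (160 * 9 ^ D) ≤ c.variance) :
    1 ≤ 4 * 9 ^ D * prob (cubeWeight V) fun ρ ↦ (c.restrict H ρ).hitProb v ≤ 1 / 5 := by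
  have hT : 0 ≤ ∑ j ∈ Hᶜ, c.influence j := Finset.sum_nonneg fun _ _ ↦ influence_nonneg _ _
  have half : c.variance / 2 ≤ (c.restrictCoeff H ∅).variance := by
    have := c.variance_le_add_sum_influence H
    nlinarith [one_le_pow₀ (n := D) (by norm_num : (1 : ℝ) ≤ 9)]
  have norm_shift : c.variance / 2 ≤ ∑ S, (c.restrictCoeff H ∅).shift v S ^ 2 := by
    rw [← (c.restrictCoeff H ∅).variance_shift v] at half
    exact half.trans (variance_le_sum_sq _)
  refine one_le_four_mul_prob cubeWeight_mem_stdSimplex (by positivity)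
    (p := fun ρ ↦ c.variance / 8 ≤ ((c.restrictCoeff H ∅).shift v).eval (signs ρ) ^ 2)
    (q := fun ρ ↦ c.variance / 40 ≤ (c.restrict H ρ).variance) ?_ ?_ ?_
  · exact ((hc.restrictCoeff H ∅).shift v).one_le_prob_le_eval_sq (by linarith) (by linarith)
  · have markov := (mul_prob_le_expect cubeWeight_mem_stdSimplex
      (fun ρ ↦ variance_nonneg (c.restrict H ρ)) (c.variance / 40)).trans
        (c.expect_variance_restrict_le H)
    refine le_of_mul_le_mul_left ?_ hpos
    calc _ = c.variance / 40 * prob (cubeWeight V) (fun ρ ↦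
            c.variance / 40 ≤ (c.restrict H ρ).variance) * (160 * 9 ^ D) := by ring
      _ ≤ (∑ j ∈ Hᶜ, c.influence j) * (160 * 9 ^ D) := by gcongr
      _ ≤ c.variance * 1 := by simpa using hH
  · intro ρ hlarge hsmall
    rw [eval_shift] at hlarge
    refine le_of_mul_le_mul_left ?_ (by positivity : 0 < c.variance / 8)
    calc c.variance / 8 * (c.restrict H ρ).hitProb v
        ≤ (c.restrict H ρ ∅ - v) ^ 2 * (c.restrict H ρ).hitProb v :=
          mul_le_mul_of_nonneg_right hlarge (prob_nonneg cubeWeight_mem_stdSimplex _)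
      _ ≤ (c.restrict H ρ).variance := sq_sub_mul_hitProb_le _ v
      _ ≤ c.variance / 8 * (1 / 5) := by linarith

lemma DegreeLE.expect_sum_influence_restrict_sq_le (hc : c.DegreeLE D) (H : Finset V) :
    expect (cubeWeight V) (fun ρ ↦ (∑ j, (c.restrict H ρ).influence j) ^ 2) ≤
      9 ^ D * (∑ j ∈ Hᶜ, c.influence j) ^ 2 := by
  rw [← expect_sum_influence_restrict, expect_sum]
  exact expect_sum_sq_le cubeWeight_mem_stdSimplex (fun _ _ ↦ influence_nonneg _ _) (by positivity)
    fun j _ ↦ hc.expect_influence_restrict_sq_le H j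

lemma DegreeLE.expect_sum_sq_influence_restrict_le (hc : c.DegreeLE D) {H : Finset V} {K : ℝ}
    (hK : 0 ≤ K) (hH : ∀ j ∉ H, c.influence j * K ≤ c.variance) :
    expect (cubeWeight V) (fun ρ ↦ ∑ j, (c.restrict H ρ).influence j ^ 2) * K ≤
      9 ^ D * (c.variance * ∑ j ∈ Hᶜ, c.influence j) := by
  rw [expect_sum]
  calc (∑ j, expect (cubeWeight V) fun ρ ↦ (c.restrict H ρ).influence j ^ 2) * K
      ≤ (∑ j, 9 ^ D * (if j ∈ H then 0 else c.influence j) ^ 2) * K := by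
        refine mul_le_mul_of_nonneg_right (Finset.sum_le_sum fun j _ ↦ ?_) hK
        rw [← expect_influence_restrict]
        exact hc.expect_influence_restrict_sq_le H j
    _ = 9 ^ D * ∑ j ∈ Hᶜ, c.influence j * K * c.influence j := by
        rw [← Finset.mul_sum, mul_assoc, Finset.sum_mul, ← Finset.sum_add_sum_compl H,
          Finset.sum_eq_zero fun j hj ↦ by simp [hj], zero_add]
        congr 1
        refine Finset.sum_congr rfl fun j hj ↦ ?_
        rw [if_neg (Finset.mem_compl.1 hj)]
        ring
    _ ≤ 9 ^ D * (c.variance * ∑ j ∈ Hᶜ, c.influence j) := by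
        rw [Finset.mul_sum Hᶜ _ c.variance]
        gcongr with j hj
        · exact influence_nonneg _ _
        · exact hH j (Finset.mem_compl.1 hj)

lemma DegreeLE.four_mul_prob_le_sum_sq_influence_restrict_le (hc : c.DegreeLE D) (hD : 0 < D)
    {H : Finset V} (hH : ∀ j ∉ H, c.influence j * influenceConst D ≤ c.variance)
    (hT : c.variance ≤ (∑ j ∈ Hᶜ, c.influence j) * (160 * 9 ^ D))
    (hT0 : 0 < ∑ j ∈ Hᶜ, c.influence j) :
    4 * 9 ^ D * prob (cubeWeight V) (fun ρ ↦
      (∑ j ∈ Hᶜ, c.influence j) ^ 2 / (16 * D ^ 2 * regularityConst D) ≤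
        ∑ j, (c.restrict H ρ).influence j ^ 2) ≤ 1 := by
  have hreg : (0 : ℝ) < regularityConst D := mod_cast regularityConst_pos hD
  have hK : (influenceConst D : ℝ) = 10240 * (9 ^ D) ^ 3 * D ^ 2 * regularityConst D := by
    simp [influenceConst, mul_comm 3 D, pow_mul]
  have squares := hc.expect_sum_sq_influence_restrict_le (Nat.cast_nonneg _) hH
  set T := ∑ j ∈ Hᶜ, c.influence j
  set m : ℝ := T ^ 2 / (16 * D ^ 2 * regularityConst D) with hm
  have markov := mul_prob_le_expect cubeWeight_mem_stdSimplex
    (F := fun ρ ↦ ∑ j, (c.restrict H ρ).influence j ^ 2)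
    (fun ρ ↦ Finset.sum_nonneg fun _ _ ↦ sq_nonneg _) m
  set p := prob (cubeWeight V) fun ρ ↦ m ≤ ∑ j, (c.restrict H ρ).influence j ^ 2
  refine le_of_mul_le_mul_left ?_ (by positivity : 0 < 160 * 9 ^ D * 9 ^ D * T ^ 2)
  calc 160 * 9 ^ D * 9 ^ D * T ^ 2 * (4 * 9 ^ D * p) = m * p * influenceConst D := by
        rw [hK, hm]
        field_simp
        ring
    _ ≤ 9 ^ D * (c.variance * T) := le_trans (by gcongr) squares
    _ ≤ 9 ^ D * (T * (160 * 9 ^ D) * T) := by gcongr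
    _ = 160 * 9 ^ D * 9 ^ D * T ^ 2 * 1 := by ring

/-- If no variable outside `H` is influential but together they have a lot of influence, the
restricted polynomial is often regular. -/
lemma DegreeLE.one_le_prob_hitProb_restrict_le_of_le_sum_influence (hc : c.DegreeLE D) (hD : 0 < D)
    (hpos : 0 < c.variance) (v : ℝ) {H : Finset V}
    (hH : ∀ j ∉ H, c.influence j * influenceConst D ≤ c.variance)
    (hT : c.variance ≤ (∑ j ∈ Hᶜ, c.influence j) * (160 * 9 ^ D)) :
    1 ≤ 4 * 9 ^ D * prob (cubeWeight V) fun ρ ↦ (c.restrict H ρ).hitProb v ≤ 1 / 5 := by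
  have hreg : (0 : ℝ) < regularityConst D := mod_cast regularityConst_pos hD
  have hT0 : 0 < ∑ j ∈ Hᶜ, c.influence j :=
    pos_of_mul_pos_left (hpos.trans_le hT) (by positivity)
  have first := c.expect_sum_influence_restrict H
  have second := hc.expect_sum_influence_restrict_sq_le H
  have rare := hc.four_mul_prob_le_sum_sq_influence_restrict_le hD hH hT hT0
  set T := ∑ j ∈ Hᶜ, c.influence j
  refine one_le_four_mul_prob cubeWeight_mem_stdSimplex (by positivity)
    (p := fun ρ ↦ T / 4 ≤ ∑ j, (c.restrict H ρ).influence j) ?_ rare ?_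
  · exact one_le_two_mul_prob_of_expect_sq_le cubeWeight_mem_stdSimplex (first ▸ second)
      (first ▸ hT0) (first ▸ le_rfl)
  · intro ρ hlarge hsmall
    have low : T / (4 * D) ≤ (c.restrict H ρ).variance := by
      rw [div_le_iff₀ (by positivity)]
      linarith [(hc.restrict H ρ).sum_influence_le]
    refine (hc.restrict H ρ).prob_eval_eq_le_of_regular hD (low.trans_lt' (by positivity)) ?_ v
    calc (∑ j, (c.restrict H ρ).influence j ^ 2) * regularityConst D
        ≤ T ^ 2 / (16 * D ^ 2 * regularityConst D) * regularityConst D :=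
          mul_le_mul_of_nonneg_right (not_le.1 hsmall).le hreg.le
      _ = (T / (4 * D)) ^ 2 := by
          field_simp
          norm_num
      _ ≤ (c.restrict H ρ).variance ^ 2 := by gcongr

/-- The variables with a large influence. -/
noncomputable def influential (c : MultilinearPoly V) (D : ℕ) : Finset V :=
  {j | c.variance < c.influence j * influenceConst D}

lemma DegreeLE.card_influential_le (hc : c.DegreeLE D) (hpos : 0 < c.variance) :
    (c.influential D).card ≤ influentialBound D := by
  have : ((c.influential D).card : ℝ) * c.variance ≤ influentialBound D * c.variance :=
    calc ((c.influential D).card : ℝ) * c.variance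
        = ∑ _j ∈ c.influential D, c.variance := by simp
      _ ≤ ∑ j ∈ c.influential D, c.influence j * influenceConst D :=
          Finset.sum_le_sum fun _ hj ↦ (Finset.mem_filter.1 hj).2.le
      _ ≤ ∑ j, c.influence j * influenceConst D :=
          Finset.sum_le_univ_sum_of_nonneg fun _ ↦
            mul_nonneg (influence_nonneg _ _) (Nat.cast_nonneg _)
      _ = (∑ j, c.influence j) * influenceConst D := by rw [Finset.sum_mul]
      _ ≤ D * c.variance * influenceConst D := by
          gcongr
          exact hc.sum_influence_le
      _ = _ := by
          rw [influentialBound]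
          push_cast
          ring
  exact_mod_cast le_of_mul_le_mul_right this hpos

lemma DegreeLE.one_le_prob_hitProb_restrict_influential_le (hc : c.DegreeLE D) (hD : 0 < D)
    (hpos : 0 < c.variance) (v : ℝ) :
    1 ≤ 4 * 9 ^ D * prob (cubeWeight V) fun ρ ↦
      (c.restrict (c.influential D) ρ).hitProb v ≤ 1 / 5 := by
  rcases le_total ((∑ j ∈ (c.influential D)ᶜ, c.influence j) * (160 * 9 ^ D)) c.variance with h | h
  · exact hc.one_le_prob_hitProb_restrict_le_of_sum_influence_le hpos v h
  · exact hc.one_le_prob_hitProb_restrict_le_of_le_sum_influence hD hpos v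
      (fun j hj ↦ by simpa [influential] using hj) h

end MultilinearPoly

/-! ### Anticoncentration from disjoint monomials of top degree -/

/-- A number of disjoint monomials of top degree that forces a polynomial of degree `D` to be
anticoncentrated. -/
def monomialBound (D : ℕ) : ℕ := 16 * 9 ^ D * influentialBound D + 1

/-- The `0`/`1` encoding of a bit. -/
def boolBit (b : Bool) : ℝ := if b then 1 else 0

@[simp] lemma boolBit_true : boolBit true = 1 := rfl

@[simp] lemma boolBit_false : boolBit false = 0 := by simp [boolBit]

lemma boolBit_eq (b : Bool) : boolBit b = 1 / 2 * (1 + boolSign b) := by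
  cases b <;> norm_num

/-- The `0`/`1` encoding of a point of the Boolean cube. -/
def bits {V : Type*} (z : V → Bool) (i : V) : ℝ := boolBit (z i)

lemma one_sub_pow_le (D : ℕ) : (1 - 1 / (4 * (9 : ℝ) ^ D)) ^ (16 * 9 ^ D) ≤ 1 / 20 := by
  have base_nonneg : 0 ≤ 1 - 1 / (4 * (9 : ℝ) ^ D) := by
    have : (1 : ℝ) ≤ 9 ^ D := one_le_pow₀ (by norm_num)
    rw [sub_nonneg, div_le_one (by positivity)]
    linarith
  have exp_four : 20 ≤ Real.exp 4 :=
    calc (20 : ℝ) ≤ 2.7 ^ 4 := by norm_num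
      _ ≤ Real.exp 1 ^ 4 := by
          gcongr
          linarith [Real.exp_one_gt_d9]
      _ = Real.exp 4 := by
          rw [← Real.exp_nat_mul]
          norm_num
  calc (1 - 1 / (4 * (9 : ℝ) ^ D)) ^ (16 * 9 ^ D)
      ≤ Real.exp (-(1 / (4 * (9 : ℝ) ^ D))) ^ (16 * 9 ^ D) := by
        gcongr
        exact Real.one_sub_le_exp_neg _
    _ = (Real.exp 4)⁻¹ := by
        rw [← Real.exp_nat_mul, ← Real.exp_neg]
        congr 1
        push_cast
        field_simp
        norm_num
    _ ≤ 1 / 20 := by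
        rw [one_div]
        gcongr

section Anticoncentration

variable {V : Type*}

lemma MultilinearPoly.variance_pos [Fintype V] {c : MultilinearPoly V} {M : Finset V}
    (hM : M.Nonempty) (hcM : c M ≠ 0) : 0 < c.variance :=
  Finset.sum_pos' (fun _ _ ↦ sq_nonneg _) ⟨M, by simpa using hM, by positivity⟩

variable [DecidableEq V]

lemma card_filter_not_disjoint_le {𝓜 : Finset (Finset V)}
    (hdisj : (𝓜 : Set (Finset V)).PairwiseDisjoint id) (H : Finset V) :
    ({M ∈ 𝓜 | ¬Disjoint M H} : Finset (Finset V)).card ≤ H.card := by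
  refine (Finset.card_le_card_biUnion (f := (· ∩ H)) ?_ ?_).trans
    (Finset.card_le_card (Finset.biUnion_subset.2 fun M _ ↦ Finset.inter_subset_right))
  · exact (hdisj.subset (Finset.coe_subset.2 (Finset.filter_subset _ _))).mono_on
      fun M _ ↦ Finset.inter_subset_left
  · intro M hM
    simpa [Finset.disjoint_iff_inter_eq_empty, Finset.nonempty_iff_ne_empty] using
      (Finset.mem_filter.1 hM).2

namespace MultilinearPoly

variable [Fintype V] {c : MultilinearPoly V} {D e : ℕ}

lemma DegreeLE.lt_card_filter_disjoint_influential (hc : c.DegreeLE D) (hpos : 0 < c.variance)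
    {𝓜 : Finset (Finset V)} (hdisj : (𝓜 : Set (Finset V)).PairwiseDisjoint id) {t : ℕ}
    (hcard : (t + 1) * influentialBound D < 𝓜.card) :
    t * influentialBound D <
      ({M ∈ 𝓜 | Disjoint M (c.influential D)} : Finset (Finset V)).card := by
  have split := Finset.card_filter_add_card_filter_not (s := 𝓜) fun M ↦
    Disjoint M (c.influential D)
  have hit := card_filter_not_disjoint_le hdisj (c.influential D)
  have few : (c.influential D).card ≤ influentialBound D := hc.card_influential_le hpos
  rw [add_mul] at hcard
  omega

/-- Each restriction of the influential variables yields an anticoncentrated polynomial with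
probability `1 / (4 * 9 ^ D)`, and otherwise destroys few monomials. -/
lemma DegreeLE.hitProb_le_add_pow (he : 0 < e) (heD : e ≤ D) (v : ℝ) (t : ℕ) (hc : c.DegreeLE e)
    {𝓜 : Finset (Finset V)} (hdisj : (𝓜 : Set (Finset V)).PairwiseDisjoint id)
    (hmem : ∀ M ∈ 𝓜, M.card = e ∧ c M ≠ 0) (hcard : t * influentialBound D < 𝓜.card) :
    c.hitProb v ≤ 1 / 5 + (1 - 1 / (4 * 9 ^ D)) ^ t := by
  have h9 : (1 : ℝ) ≤ 9 ^ D := one_le_pow₀ (by norm_num)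
  induction t generalizing c 𝓜 with
  | zero =>
    have : c.hitProb v ≤ 1 := prob_le_one cubeWeight_mem_stdSimplex _
    rw [pow_zero]
    linarith
  | succ t ih =>
    have hcD : c.DegreeLE D := fun S hS ↦ hc S (heD.trans_lt hS)
    obtain ⟨M, hM⟩ : 𝓜.Nonempty := Finset.card_pos.1 (by omega)
    have hpos : 0 < c.variance :=
      variance_pos (Finset.card_pos.1 ((hmem M hM).1 ▸ he)) (hmem M hM).2
    set H := c.influential D
    set r : ℝ := (1 - 1 / (4 * 9 ^ D)) ^ t
    have hr : 0 ≤ r := by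
      refine pow_nonneg (sub_nonneg.2 ?_) _
      rw [div_le_one (by positivity)]
      linarith
    have hitProb_restrict_le : ∀ ρ, (c.restrict H ρ).hitProb v ≤ 1 / 5 + r := by
      intro ρ
      refine ih (hc.restrict H ρ) (𝓜 := {M ∈ 𝓜 | Disjoint M H})
        (hdisj.subset (Finset.coe_subset.2 (Finset.filter_subset _ _))) (fun M hM ↦ ?_)
        (hcD.lt_card_filter_disjoint_influential hpos hdisj hcard)
      obtain ⟨hM, hMH⟩ := Finset.mem_filter.1 hM
      obtain ⟨rfl, hcM⟩ := hmem M hM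
      exact ⟨rfl, by rwa [hc.restrict_apply_of_disjoint hMH]⟩
    have often := hcD.one_le_prob_hitProb_restrict_influential_le (he.trans_le heD) hpos v
    calc c.hitProb v = expect (cubeWeight V) fun ρ ↦ (c.restrict H ρ).hitProb v :=
          hitProb_eq_expect_restrict _ _ _
      _ ≤ expect (cubeWeight V) fun ρ ↦ (1 / 5 + r) -
            r * if (c.restrict H ρ).hitProb v ≤ 1 / 5 then 1 else 0 := by
          refine expect_mono cubeWeight_mem_stdSimplex fun ρ ↦ ?_
          have := hitProb_restrict_le ρ
          split_ifs <;> linarith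
      _ = (1 / 5 + r) - r * prob (cubeWeight V) fun ρ ↦ (c.restrict H ρ).hitProb v ≤ 1 / 5 := by
          rw [expect_sub, expect_const cubeWeight_mem_stdSimplex, expect_mul_left, prob_eq_expect]
      _ ≤ (1 / 5 + r) - r * (1 / (4 * 9 ^ D)) := by
          gcongr
          rwa [div_le_iff₀' (by positivity)]
      _ = _ := by ring

lemma DegreeLE.hitProb_le_of_disjoint_monomials (he : 0 < e) (heD : e ≤ D) (hc : c.DegreeLE e)
    {𝓜 : Finset (Finset V)} (hdisj : (𝓜 : Set (Finset V)).PairwiseDisjoint id)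
    (hmem : ∀ M ∈ 𝓜, M.card = e ∧ c M ≠ 0) (hcard : monomialBound D ≤ 𝓜.card) (v : ℝ) :
    c.hitProb v ≤ 1 / 4 := by
  have := hc.hitProb_le_add_pow he heD v (16 * 9 ^ D) hdisj hmem hcard
  linarith [one_sub_pow_le D]

/-- The coefficients in terms of signs of a polynomial given in terms of bits. -/
noncomputable def bitsToSigns (c : MultilinearPoly V) : MultilinearPoly V :=
  fun T ↦ ∑ S with T ⊆ S, c S * (1 / 2) ^ S.card

lemma eval_bits (c : MultilinearPoly V) (z : V → Bool) :
    c.eval (bits z) = c.bitsToSigns.eval (signs z) := by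
  have expand : ∀ S, ∏ i ∈ S, bits z i = (1 / 2) ^ S.card * ∑ T with T ⊆ S, ∏ i ∈ T, signs z i := by
    intro S
    have subsets : ({T | T ⊆ S} : Finset (Finset V)) = S.powerset := by
      ext
      simp
    rw [subsets, ← Finset.prod_one_add, ← Finset.prod_const, ← Finset.prod_mul_distrib]
    exact Finset.prod_congr rfl fun i _ ↦ boolBit_eq _
  simp only [eval, bitsToSigns, expand, Finset.sum_mul, Finset.mul_sum, Finset.sum_filter, ite_mul,
    mul_ite, zero_mul, mul_zero, mul_assoc]
  exact Finset.sum_comm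

lemma DegreeLE.bitsToSigns (hc : c.DegreeLE e) : c.bitsToSigns.DegreeLE e := fun T hT ↦
  Finset.sum_eq_zero fun S hS ↦ by
    rw [hc S (hT.trans_le (Finset.card_le_card (Finset.mem_filter.1 hS).2)), zero_mul]

lemma DegreeLE.bitsToSigns_apply {M : Finset V} (hc : c.DegreeLE M.card) :
    c.bitsToSigns M = c M * (1 / 2) ^ M.card := by
  refine Finset.sum_eq_single_of_mem M (by simp) fun S hS hSM ↦ ?_
  rw [hc S (Finset.card_lt_card ((Finset.mem_filter.1 hS).2.ssubset_of_ne hSM.symm)), zero_mul]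

theorem DegreeLE.prob_eval_bits_le_of_disjoint_monomials (he : 0 < e) (heD : e ≤ D)
    (hc : c.DegreeLE e) {𝓜 : Finset (Finset V)}
    (hdisj : (𝓜 : Set (Finset V)).PairwiseDisjoint id) (hmem : ∀ M ∈ 𝓜, M.card = e ∧ c M ≠ 0)
    (hcard : monomialBound D ≤ 𝓜.card) (u v : ℝ) :
    prob (cubeWeight V) (fun z ↦ c.eval (bits z) = u ∨ c.eval (bits z) = v) ≤ 1 / 2 := by
  have hit : ∀ v, c.bitsToSigns.hitProb v ≤ 1 / 4 :=
    hc.bitsToSigns.hitProb_le_of_disjoint_monomials he heD hdisj (fun M hM ↦ by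
      obtain ⟨rfl, hcM⟩ := hmem M hM
      refine ⟨rfl, ?_⟩
      rw [hc.bitsToSigns_apply]
      positivity) hcard
  simp only [eval_bits]
  refine (prob_le_prob_add_prob cubeWeight_mem_stdSimplex fun _ ↦ id).trans ?_
  have hu := hit u
  have hv := hit v
  rw [hitProb] at hu hv
  linarith

end MultilinearPoly

end Anticoncentration

/-! ### Functions of low degree and approximability -/

section LowDegree

variable {U V κ : Type*} {D E : ℕ} {F G : (V → Bool) → ℝ}

/-- The functions on the Boolean cube that are represented by a polynomial of degree at most `D` in
the bits. -/
def lowDegree (V : Type*) (D : ℕ) : Submodule ℝ ((V → Bool) → ℝ) :=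
  Submodule.span ℝ {F | ∃ S : Finset V, S.card ≤ D ∧ F = fun z ↦ ∏ i ∈ S, boolBit (z i)}

lemma prod_boolBit_mem_lowDegree {S : Finset V} (hS : S.card ≤ D) :
    (fun z ↦ ∏ i ∈ S, boolBit (z i)) ∈ lowDegree V D :=
  Submodule.subset_span ⟨S, hS, rfl⟩

lemma lowDegree_mono : Monotone (lowDegree V) := fun _ _ h ↦
  Submodule.span_mono fun _ ⟨S, hS, hF⟩ ↦ ⟨S, hS.trans h, hF⟩

lemma const_mem_lowDegree (r : ℝ) : (fun _ ↦ r) ∈ lowDegree V D := by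
  convert (lowDegree V D).smul_mem r (prod_boolBit_mem_lowDegree (S := ∅) (by simp)) using 1
  ext
  simp

lemma boolBit_mem_lowDegree (v : V) : (fun z ↦ boolBit (z v)) ∈ lowDegree V 1 := by
  simpa using prod_boolBit_mem_lowDegree (S := {v}) (by simp)

lemma boolBit_not_mem_lowDegree (v : V) : (fun z ↦ boolBit (!(z v))) ∈ lowDegree V 1 := by
  convert (lowDegree V 1).sub_mem (const_mem_lowDegree 1) (boolBit_mem_lowDegree v) using 1
  ext z
  cases h : z v <;> simp [h]

lemma prod_boolBit_mul_prod_boolBit [DecidableEq V] (S T : Finset V) (z : V → Bool) :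
    (∏ i ∈ S, boolBit (z i)) * ∏ i ∈ T, boolBit (z i) = ∏ i ∈ S ∪ T, boolBit (z i) := by
  have indicator : ∀ S : Finset V,
      ∏ i ∈ S, boolBit (z i) = if ∀ i ∈ S, z i = true then 1 else 0 := fun S ↦ by
    simp only [boolBit, Finset.prod_ite_zero, Finset.prod_const_one]
  simp only [indicator, Finset.forall_mem_union, ite_and, ite_mul, one_mul, zero_mul]

lemma mul_mem_lowDegree (hF : F ∈ lowDegree V D) (hG : G ∈ lowDegree V E) :
    F * G ∈ lowDegree V (D + E) := by
  have : lowDegree V D * lowDegree V E ≤ lowDegree V (D + E) := by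
    rw [lowDegree, lowDegree, Submodule.span_mul_span, Submodule.span_le]
    rintro _ ⟨_, ⟨S, hS, rfl⟩, _, ⟨T, hT, rfl⟩, rfl⟩
    have hST := prod_boolBit_mem_lowDegree ((Finset.card_union_le S T).trans (add_le_add hS hT))
    simp only [← prod_boolBit_mul_prod_boolBit] at hST
    exact hST
  exact this (Submodule.mul_mem_mul hF hG)

lemma prod_mem_lowDegree {s : Finset κ} {F : κ → (V → Bool) → ℝ}
    (hF : ∀ k ∈ s, F k ∈ lowDegree V D) : ∏ k ∈ s, F k ∈ lowDegree V (s.card * D) := by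
  induction s using Finset.cons_induction with
  | empty => exact const_mem_lowDegree 1
  | cons k s hk ih =>
    rw [Finset.prod_cons, Finset.card_cons, add_one_mul, add_comm]
    exact mul_mem_lowDegree (hF k (by simp)) (ih fun l hl ↦ hF l (by simp [hl]))

lemma comp_mem_lowDegree (hF : F ∈ lowDegree V D) {φ : (U → Bool) → V → Bool}
    (hφ : ∀ v, (fun z ↦ boolBit (φ z v)) ∈ lowDegree U 1) : F ∘ φ ∈ lowDegree U D := by
  have : lowDegree V D ≤ (lowDegree U D).comap (LinearMap.funLeft ℝ ℝ φ) := by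
    rw [lowDegree, Submodule.span_le]
    rintro _ ⟨S, hS, rfl⟩
    refine lowDegree_mono (show S.card * 1 ≤ D by omega) ?_
    convert prod_mem_lowDegree fun v (_ : v ∈ S) ↦ hφ v using 1
    ext z
    simp
  exact this hF

lemma evalBool_mem_lowDegree {V : Type} {P : MvPolynomial V ℝ} (hP : P.totalDegree ≤ D) :
    (fun z ↦ evalBool z P) ∈ lowDegree V D := by
  have expand : (fun z ↦ evalBool z P) =
      ∑ m ∈ P.support, P.coeff m • fun z ↦ ∏ i ∈ m.support, boolBit (z i) := by
    ext z
    simp only [evalBool, MvPolynomial.eval_eq, Finset.sum_apply, Pi.smul_apply, smul_eq_mul]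
    refine Finset.sum_congr rfl fun m _ ↦ congrArg _ (Finset.prod_congr rfl fun i hi ↦ ?_)
    cases h : z i <;> simp [Finsupp.mem_support_iff.1 hi]
  rw [expand]
  refine Submodule.sum_mem _ fun m hm ↦ Submodule.smul_mem _ _ (prod_boolBit_mem_lowDegree ?_)
  calc m.support.card = ∑ i ∈ m.support, 1 := Finset.card_eq_sum_ones _
    _ ≤ m.sum fun _ k ↦ k :=
        Finset.sum_le_sum fun i hi ↦ Nat.one_le_iff_ne_zero.2 (Finsupp.mem_support_iff.1 hi)
    _ ≤ D := (MvPolynomial.le_totalDegree hm).trans hP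

lemma exists_eval_bits_eq [Fintype V] (hF : F ∈ lowDegree V D) :
    ∃ c : MultilinearPoly V, c.DegreeLE D ∧ ∀ z, F z = c.eval (bits z) := by
  induction hF using Submodule.span_induction with
  | mem F hF =>
    obtain ⟨S, hS, rfl⟩ := hF
    refine ⟨Pi.single S 1, fun T hT ↦ Pi.single_eq_of_ne (by rintro rfl; omega) _, fun z ↦ ?_⟩
    simp [MultilinearPoly.eval, bits, Pi.single_apply]
  | zero => exact ⟨0, fun _ _ ↦ rfl, fun z ↦ by simp [MultilinearPoly.eval]⟩
  | add F G _ _ hF hG =>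
    obtain ⟨⟨a, ha, hF⟩, b, hb, hG⟩ := hF, hG
    refine ⟨a + b, fun S hS ↦ by simp [ha S hS, hb S hS], fun z ↦ ?_⟩
    simp [hF, hG, MultilinearPoly.eval, add_mul, Finset.sum_add_distrib]
  | smul r F _ hF =>
    obtain ⟨a, ha, hF⟩ := hF
    refine ⟨r • a, fun S hS ↦ by simp [ha S hS], fun z ↦ ?_⟩
    simp [hF, MultilinearPoly.eval, Finset.mul_sum, mul_assoc]

end LowDegree

section Approximability

variable {U V κ Ω : Type*} [Fintype V] [DecidableEq V] {f : (V → Bool) → Bool} {D : ℕ} {δ : ℝ}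

/-- Under every probability distribution on the cube, some function of degree at most `D` differs
from `f` with probability at most `δ`. -/
def IsApproximable (f : (V → Bool) → Bool) (D : ℕ) (δ : ℝ) : Prop :=
  ∀ μ ∈ stdSimplex ℝ (V → Bool), ∃ P ∈ lowDegree V D, prob μ (fun x ↦ P x ≠ boolBit (f x)) ≤ δ

lemma IsApproximable.exists_sum_prob_le [Fintype κ] [Fintype Ω] (hf : IsApproximable f D δ)
    {w : Ω → ℝ} (hw : w ∈ stdSimplex ℝ Ω) (φ : κ → Ω → V → Bool) :
    ∃ P ∈ lowDegree V D,
      ∑ k, prob w (fun ω ↦ P (φ k ω) ≠ boolBit (f (φ k ω))) ≤ Fintype.card κ * δ := by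
  obtain _ | _ := isEmpty_or_nonempty κ
  · exact ⟨0, Submodule.zero_mem _, by simp⟩
  have hcard : (0 : ℝ) < Fintype.card κ := mod_cast Fintype.card_pos
  let μ : (V → Bool) → ℝ := fun x ↦ (Fintype.card κ : ℝ)⁻¹ * ∑ k, ∑ ω with φ k ω = x, w ω
  have prob_μ : ∀ p : (V → Bool) → Prop,
      Fintype.card κ * prob μ p = ∑ k, prob w fun ω ↦ p (φ k ω) := by
    intro p
    rw [prob, Finset.mul_sum]
    simp only [μ, mul_inv_cancel_left₀ hcard.ne']
    rw [Finset.sum_comm]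
    refine Finset.sum_congr rfl fun k _ ↦ ?_
    simp only [prob, Finset.sum_filter]
    rw [← Finset.sum_filter, Finset.sum_comm]
    simp
  have hμ : μ ∈ stdSimplex ℝ (V → Bool) := by
    refine ⟨fun x ↦ mul_nonneg (by positivity)
      (Finset.sum_nonneg fun k _ ↦ Finset.sum_nonneg fun ω _ ↦ hw.1 ω), ?_⟩
    simpa [prob, hw.2, hcard.ne'] using prob_μ fun _ ↦ True
  obtain ⟨P, hP, hPf⟩ := hf μ hμ
  exact ⟨P, hP, (prob_μ _).symm.trans_le (mul_le_mul_of_nonneg_left hPf hcard.le)⟩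

lemma IsApproximable.comp [Fintype U] [DecidableEq U] (hf : IsApproximable f D δ)
    {φ : (U → Bool) → V → Bool} (hφ : ∀ v, (fun z ↦ boolBit (φ z v)) ∈ lowDegree U 1) :
    IsApproximable (f ∘ φ) D δ := fun μ hμ ↦ by
  obtain ⟨P, hP, hPf⟩ := hf.exists_sum_prob_le hμ fun (_ : Unit) ↦ φ
  exact ⟨P ∘ φ, comp_mem_lowDegree hP hφ, by simpa using hPf⟩

end Approximability

/-! ### Amplification -/

section Amplification

variable {κ Ω : Type*} [Fintype κ] [DecidableEq κ] [Fintype Ω] {w : Ω → ℝ}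

/-- The multilinear polynomial that computes the majority of bits. -/
def majority (y : κ → ℝ) : ℝ :=
  ∑ T with Fintype.card κ < 2 * T.card, (∏ j ∈ T, y j) * ∏ j ∈ Finset.univ \ T, (1 - y j)

lemma majority_eq_zero {y : κ → ℝ} {Z : Finset κ} (hZ : ∀ j ∈ Z, y j = 0)
    (hcard : Fintype.card κ < 2 * Z.card) : majority y = 0 := by
  refine Finset.sum_eq_zero fun T hT ↦ ?_
  have hTcard := (Finset.mem_filter.1 hT).2
  obtain ⟨j, hjT, hjZ⟩ : ∃ j ∈ T, j ∈ Z := by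
    by_contra! hdisj
    have := Finset.card_union_of_disjoint (Finset.disjoint_left.2 hdisj)
    have := Finset.card_le_univ (T ∪ Z)
    omega
  rw [Finset.prod_eq_zero hjT (hZ j hjZ), zero_mul]

lemma majority_eq_one {y : κ → ℝ} {Z : Finset κ} (hZ : ∀ j ∈ Z, y j = 1)
    (hcard : Fintype.card κ < 2 * Z.card) : majority y = 1 := by
  calc majority y = ∑ T, (∏ j ∈ T, y j) * ∏ j ∈ Finset.univ \ T, (1 - y j) := by
        refine Finset.sum_filter_of_ne fun T _ hT ↦ ?_
        have hZT : Z ⊆ T := fun j hj ↦ by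
          by_contra hjT
          exact hT (mul_eq_zero_of_right _ (Finset.prod_eq_zero (i := j) (by simp [hjT])
            (by simp [hZ j hj])))
        have := Finset.card_le_card hZT
        omega
    _ = ∏ j, (y j + (1 - y j)) := by rw [Finset.prod_add, Finset.powerset_univ]
    _ = 1 := by simp

lemma majority_eq_boolBit {y : κ → ℝ} {Z : Finset κ} {b : Bool} (hZ : ∀ j ∈ Z, y j = boolBit b)
    (hcard : Fintype.card κ < 2 * Z.card) : majority y = boolBit b := by
  cases b
  · exact majority_eq_zero hZ hcard
  · exact majority_eq_one hZ hcard

lemma majority_mem_lowDegree {V : Type*} {D : ℕ} {F : κ → (V → Bool) → ℝ}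
    (hF : ∀ k, F k ∈ lowDegree V D) :
    (fun z ↦ majority fun k ↦ F k z) ∈ lowDegree V (Fintype.card κ * D) := by
  have expand : (fun z ↦ majority fun k ↦ F k z) = ∑ T with Fintype.card κ < 2 * T.card,
      (∏ k ∈ T, F k) * ∏ k ∈ Finset.univ \ T, ((fun _ ↦ 1) - F k) := by
    ext z
    simp [majority]
  rw [expand]
  refine Submodule.sum_mem _ fun T _ ↦ ?_
  rw [← Finset.card_univ, ← Finset.card_sdiff_add_card_eq_card T.subset_univ, add_comm, add_mul]
  exact mul_mem_lowDegree (prod_mem_lowDegree fun k _ ↦ hF k)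
    (prod_mem_lowDegree fun k _ ↦ Submodule.sub_mem _ (const_mem_lowDegree 1) (hF k))

lemma expect_prodWeight_prod (w g : Ω → ℝ) :
    expect (prodWeight w) (fun ω : κ → Ω ↦ ∏ k, g (ω k)) = expect w g ^ Fintype.card κ := by
  simp only [expect, prodWeight, ← Finset.prod_mul_distrib]
  simpa using (Finset.prod_univ_sum (fun _ : κ ↦ Finset.univ) fun _ o ↦ w o * g o).symm

lemma prob_half_le_card_filter_le (hw : w ∈ stdSimplex ℝ Ω) {p : Ω → Prop}
    [DecidablePred p] (hp : prob w p ≤ 1 / 3) (s : ℕ) :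
    prob (prodWeight w) (fun ω : Fin (2 * s) → Ω ↦
      s ≤ ({k | p (ω k)} : Finset (Fin (2 * s))).card) ≤ (8 / 9) ^ s := by
  let g : Ω → ℝ := fun o ↦ if p o then 2 else 1
  have expect_g : expect w g ≤ 4 / 3 := by
    have : g = fun o ↦ 1 + if p o then 1 else 0 := by
      ext o
      simp only [g]
      split_ifs <;> norm_num
    rw [this, expect_add, expect_const hw, ← prob_eq_expect]
    linarith
  have prod_g : ∀ ω : Fin (2 * s) → Ω,
      ∏ k, g (ω k) = 2 ^ ({k | p (ω k)} : Finset (Fin (2 * s))).card := fun ω ↦ by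
    simp [g, Finset.prod_ite]
  have hg : ∀ o, 0 ≤ g o := fun o ↦ by positivity
  refine le_of_mul_le_mul_left ?_ (pow_pos (zero_lt_two' ℝ) s)
  calc 2 ^ s * prob (prodWeight w) (fun ω : Fin (2 * s) → Ω ↦
        s ≤ ({k | p (ω k)} : Finset (Fin (2 * s))).card)
      ≤ 2 ^ s * prob (prodWeight w) fun ω : Fin (2 * s) → Ω ↦ 2 ^ s ≤ ∏ k, g (ω k) := by
        gcongr
        refine prob_mono (prodWeight_mem_stdSimplex hw) fun ω hω ↦ ?_
        rw [prod_g]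
        gcongr
        norm_num
    _ ≤ expect (prodWeight w) fun ω : Fin (2 * s) → Ω ↦ ∏ k, g (ω k) :=
        mul_prob_le_expect (prodWeight_mem_stdSimplex hw)
          (fun ω ↦ Finset.prod_nonneg fun k _ ↦ hg _) _
    _ = expect w g ^ (2 * s) := by rw [expect_prodWeight_prod, Fintype.card_fin]
    _ ≤ (4 / 3) ^ (2 * s) := by
        gcongr
        exact expect_nonneg hw hg
    _ = 2 ^ s * (8 / 9) ^ s := by
        rw [pow_mul, ← mul_pow]
        norm_num

lemma prob_majority_ne_le (hw : w ∈ stdSimplex ℝ Ω) {y : Ω → ℝ} {b : Bool}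
    (hy : prob w (fun o ↦ y o ≠ boolBit b) ≤ 1 / 3) (s : ℕ) :
    prob (prodWeight w) (fun ω : Fin (2 * s) → Ω ↦ majority (fun k ↦ y (ω k)) ≠ boolBit b) ≤
      (8 / 9) ^ s := by
  refine (prob_mono (prodWeight_mem_stdSimplex hw) fun ω hω ↦ ?_).trans
    (prob_half_le_card_filter_le hw hy s)
  by_contra! hlt
  refine hω (majority_eq_boolBit (Z := {k | y (ω k) = boolBit b}) (fun k hk ↦ by simpa using hk) ?_)
  have := Finset.card_filter_add_card_filter_not (s := Finset.univ) fun k ↦ y (ω k) = boolBit b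
  rw [Finset.card_univ, Fintype.card_fin] at this
  simp only [ne_eq] at hlt
  rw [Fintype.card_fin]
  omega

/-- Taking the majority of `80` independent copies reduces the error from `1 / 3` to `1 / 100`. -/
lemma HasProbPoly.isApproximable {V : Type} [Fintype V] [DecidableEq V] {f : (V → Bool) → Bool}
    {d : ℕ} (hf : HasProbPoly f (1 / 3) d) : IsApproximable f (80 * d) (1 / 100) := by
  obtain ⟨k, w, P, hw0, hw1, hdeg, herr⟩ := hf
  have hw : w ∈ stdSimplex ℝ (Fin k) := ⟨hw0, hw1⟩
  let A : (Fin (2 * 40) → Fin k) → (V → Bool) → ℝ := fun ω z ↦ majority fun j ↦ evalBool z (P (ω j))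
  have prob_ne : ∀ z, prob (prodWeight w) (fun ω ↦ A ω z ≠ boolBit (f z)) ≤ 1 / 100 := by
    intro z
    have hz : prob w (fun i ↦ evalBool z (P i) ≠ boolBit (f z)) ≤ 1 / 3 := by
      rw [prob]
      convert herr z
      rfl
    exact (prob_majority_ne_le hw hz 40).trans (by norm_num)
  intro μ hμ
  obtain ⟨ω, hω⟩ := exists_le_expect (prodWeight_mem_stdSimplex hw)
    fun ω ↦ prob μ fun z ↦ A ω z ≠ boolBit (f z)
  refine ⟨A ω, by simpa using majority_mem_lowDegree fun j ↦ evalBool_mem_lowDegree (hdeg (ω j)),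
    hω.trans ?_⟩
  calc expect (prodWeight w) (fun ω ↦ prob μ fun z ↦ A ω z ≠ boolBit (f z))
      = expect μ fun z ↦ prob (prodWeight w) fun ω ↦ A ω z ≠ boolBit (f z) := by
        simp only [prob_eq_expect, expect, Finset.mul_sum]
        rw [Finset.sum_comm]
        simp only [mul_left_comm]
    _ ≤ expect μ fun _ ↦ 1 / 100 := expect_mono hμ prob_ne
    _ = 1 / 100 := expect_const hμ _

end Amplification

/-! ### Hitting the monomials of top degree -/

section HittingSet

variable {V : Type*}

lemma exists_maximal_disjoint_family [Finite V] [DecidableEq V] (p : Finset V → Prop) :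
    ∃ 𝓜 : Finset (Finset V), (𝓜 : Set (Finset V)).PairwiseDisjoint id ∧ (∀ M ∈ 𝓜, p M) ∧
      ∀ M, p M → M.Nonempty → ¬Disjoint M (𝓜.biUnion id) := by
  obtain ⟨𝓜, ⟨hdisj, hp⟩, hmax⟩ := (Set.toFinite {𝓜 : Finset (Finset V) |
    (𝓜 : Set (Finset V)).PairwiseDisjoint id ∧ ∀ M ∈ 𝓜, p M}).exists_maximal ⟨∅, by simp⟩
  refine ⟨𝓜, hdisj, hp, fun M hM hne hMdisj ↦ ?_⟩
  rw [Finset.disjoint_biUnion_right] at hMdisj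
  have hinsert : (↑(insert M 𝓜) : Set (Finset V)).PairwiseDisjoint id ∧ ∀ N ∈ insert M 𝓜, p N := by
    rw [Finset.coe_insert, Finset.forall_mem_insert]
    exact ⟨hdisj.insert fun N hN _ ↦ hMdisj N hN, hM, hp⟩
  have hmem : M ∈ 𝓜 := hmax hinsert (Finset.subset_insert M 𝓜) (Finset.mem_insert_self M 𝓜)
  exact hne.ne_empty (disjoint_self.1 (hMdisj M hmem))

namespace MultilinearPoly

variable {c : MultilinearPoly V} {D : ℕ}

/-- The polynomial obtained from `c` by setting the variables outside `U` to zero. -/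
def truncate [DecidableEq V] (c : MultilinearPoly V) (U : Finset V) : MultilinearPoly V :=
  fun S ↦ if S ⊆ U then c S else 0

lemma DegreeLE.truncate [DecidableEq V] (hc : c.DegreeLE D) (U : Finset V) :
    (c.truncate U).DegreeLE D :=
  fun S hS ↦ by rw [MultilinearPoly.truncate, hc S hS, ite_self]

lemma truncate_ne_zero [DecidableEq V] {U S : Finset V} :
    c.truncate U S ≠ 0 ↔ S ⊆ U ∧ c S ≠ 0 := by
  simp [truncate]

variable [Fintype V]

/-- The degree of `c`. -/
noncomputable def degree (c : MultilinearPoly V) : ℕ :=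
  ({S | c S ≠ 0} : Finset (Finset V)).sup Finset.card

lemma degreeLE_degree (c : MultilinearPoly V) : c.DegreeLE c.degree := fun S hS ↦ by
  by_contra hne
  exact hS.not_ge (Finset.le_sup (f := Finset.card) (by simpa using hne))

lemma DegreeLE.degree_le (hc : c.DegreeLE D) : c.degree ≤ D := Finset.sup_le fun S hS ↦ by
  by_contra! hlt
  exact (Finset.mem_filter.1 hS).2 (hc S hlt)

lemma card_le_degree {S : Finset V} (hS : c S ≠ 0) : S.card ≤ c.degree := by
  by_contra! hlt
  exact hS (c.degreeLE_degree S hlt)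

lemma exists_card_eq_degree {S : Finset V} (hS : c S ≠ 0) : ∃ M, c M ≠ 0 ∧ M.card = c.degree := by
  obtain ⟨M, hM, hcard⟩ := Finset.exists_mem_eq_sup ({S | c S ≠ 0} : Finset (Finset V))
    ⟨S, by simpa using hS⟩ Finset.card
  exact ⟨M, (Finset.mem_filter.1 hM).2, hcard.symm⟩

variable [DecidableEq V]

lemma degree_truncate_mono (c : MultilinearPoly V) : Monotone fun U ↦ (c.truncate U).degree :=
  fun _ _ hU ↦ Finset.sup_mono (Finset.monotone_filter_right _ fun S _ hS ↦ by
    rw [truncate_ne_zero] at hS ⊢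
    exact ⟨hS.1.trans hU, hS.2⟩)

lemma eval_bits_piecewise_false (c : MultilinearPoly V) (U : Finset V) (z : V → Bool) :
    c.eval (bits (U.piecewise z fun _ ↦ false)) = (c.truncate U).eval (bits z) := by
  refine Finset.sum_congr rfl fun S _ ↦ ?_
  rw [truncate]
  split_ifs with hS
  · refine congrArg _ (Finset.prod_congr rfl fun i hi ↦ ?_)
    rw [bits, Finset.piecewise_eq_of_mem _ _ _ (hS hi), bits]
  · obtain ⟨i, hi, hiU⟩ := Finset.not_subset.1 hS
    rw [Finset.prod_eq_zero hi (by simp [bits, hiU]), mul_zero, zero_mul]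

/-- Either a maximal family of disjoint monomials of top degree is large, and `c` is
anticoncentrated, or the variables in the family hit all monomials of top degree. -/
lemma DegreeLE.exists_hitting_set (hc : c.DegreeLE D) :
    ∃ H : Finset V, H.card ≤ D * monomialBound D ∧ (0 < c.degree →
      prob (cubeWeight V) (fun z ↦ c.eval (bits z) = 0 ∨ c.eval (bits z) = 1) ≤ 1 / 2 ∨
      ∀ M, c M ≠ 0 → M.card = c.degree → ¬Disjoint M H) := by
  obtain ⟨𝓜, hdisj, hmem, hmax⟩ :=
    exists_maximal_disjoint_family fun M ↦ M.card = c.degree ∧ c M ≠ 0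
  by_cases hcard : monomialBound D ≤ 𝓜.card
  · exact ⟨∅, by simp, fun hpos ↦ .inl <| c.degreeLE_degree.prob_eval_bits_le_of_disjoint_monomials
      hpos hc.degree_le hdisj hmem hcard 0 1⟩
  · refine ⟨𝓜.biUnion id, ?_, fun hpos ↦ .inr fun M hcM hM ↦
      hmax M ⟨hM, hcM⟩ (Finset.card_pos.1 (hM ▸ hpos))⟩
    calc (𝓜.biUnion id).card ≤ 𝓜.card * D :=
          Finset.card_biUnion_le_card_mul _ _ _ fun M hM ↦ (hmem M hM).1.trans_le hc.degree_le
      _ ≤ D * monomialBound D := by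
          rw [mul_comm]
          gcongr
          omega

end MultilinearPoly

end HittingSet

/-! ### Random paths in a tree -/

section PairWeight

variable {Ω Ω' : Type*} [Fintype Ω] [Fintype Ω'] {w : Ω → ℝ} {w' : Ω' → ℝ}

lemma pairWeight_mem_stdSimplex (hw : w ∈ stdSimplex ℝ Ω) (hw' : w' ∈ stdSimplex ℝ Ω') :
    (fun p : Ω × Ω' ↦ w p.1 * w' p.2) ∈ stdSimplex ℝ (Ω × Ω') :=
  ⟨fun p ↦ mul_nonneg (hw.1 p.1) (hw'.1 p.2), by
    simp only [Fintype.sum_prod_type, ← Finset.mul_sum, hw'.2, mul_one, hw.2]⟩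

lemma expect_pairWeight (w : Ω → ℝ) (w' : Ω' → ℝ) (F : Ω × Ω' → ℝ) :
    expect (fun p : Ω × Ω' ↦ w p.1 * w' p.2) F =
      expect w fun ω ↦ expect w' fun ω' ↦ F (ω, ω') := by
  simp only [expect, Fintype.sum_prod_type, Finset.mul_sum, mul_assoc]

end PairWeight

lemma add_le_add_card_filter_eq {d : ℕ → ℕ} (hd : Antitone d) (L : ℕ) :
    d L + L ≤ d 0 + ({l ∈ Finset.range L | d (l + 1) = d l}).card := by
  induction L with
  | zero => simp
  | succ L ih =>
    have : d (L + 1) ≤ d L := hd L.le_succ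
    rw [Finset.range_add_one, Finset.filter_insert]
    split_ifs with h
    · rw [Finset.card_insert_of_notMem (by simp)]
      omega
    · omega

section Subtree

variable {κ : Type*} [Fintype κ] [DecidableEq κ] {L : ℕ}

/-- Viewing `Fin L → κ` as the leaves of the `κ`-ary tree of depth `L`, the leaves whose path from
the root agrees with the path to `j` in its first `l` edges. -/
def subtree (j : Fin L → κ) (l : ℕ) : Finset (Fin L → κ) := {i | ∀ m : Fin L, m < l → i m = j m}

lemma mem_subtree {i j : Fin L → κ} {l : ℕ} :
    i ∈ subtree j l ↔ ∀ m : Fin L, m < l → i m = j m := by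
  simp [subtree]

lemma subtree_antitone (j : Fin L → κ) : Antitone (subtree j) := fun _ _ hl _ hi ↦
  mem_subtree.2 fun m hm ↦ mem_subtree.1 hi m (hm.trans_le hl)

lemma self_mem_subtree (j : Fin L → κ) (l : ℕ) : j ∈ subtree j l := mem_subtree.2 fun _ _ ↦ rfl

lemma subtree_update (j : Fin L → κ) (l : Fin L) (o : κ) :
    subtree (Function.update j l o) l = subtree j l := by
  ext i
  simp only [mem_subtree]
  refine forall₂_congr fun m hm ↦ ?_
  rw [Function.update_of_ne (Fin.ne_of_lt hm)]

/-- Given the first `l` edges of a uniformly random path, at most `R` choices of the next edge lead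
towards `H (subtree j l)`. -/
lemma prob_exists_mem_eq_le [Nonempty κ] {R : ℕ} (l : Fin L)
    {H : Finset (Fin L → κ) → Finset (Fin L → κ)} (hH : ∀ U, (H U).card ≤ R) :
    prob (prodWeight (uniformWeight κ)) (fun j ↦ ∃ h ∈ H (subtree j l), h l = j l) ≤
      R / Fintype.card κ := by
  have hw := uniformWeight_mem_stdSimplex (Ω := κ)
  rw [prob_eq_expect, expect_prodWeight_resample hw _ l,
    ← expect_const (prodWeight_mem_stdSimplex (V := Fin L) hw) (R / _ : ℝ)]
  refine expect_mono (prodWeight_mem_stdSimplex hw) fun j ↦ ?_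
  simp only [subtree_update, Function.update_self, ← prob_eq_expect]
  rw [prob]
  simp only [uniformWeight, Finset.sum_const, nsmul_eq_mul, div_eq_mul_inv]
  gcongr
  refine (Finset.card_le_card fun o ho ↦ ?_).trans
    ((Finset.card_image_le (f := fun h ↦ h l)).trans (hH (subtree j l)))
  simpa using ho

end Subtree

namespace MultilinearPoly

variable {V : Type*} [Fintype V] [DecidableEq V] {c : MultilinearPoly V}

lemma eval_bits_update_eq_of_eq_zero {j : V} (hj : c {j} = 0) :
    c.eval (bits (Function.update (fun _ ↦ false) j true)) = c.eval (bits fun _ ↦ false) := by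
  refine Finset.sum_congr rfl fun S _ ↦ ?_
  by_cases hS : S ⊆ {j}
  · obtain rfl | rfl := Finset.subset_singleton_iff.1 hS
    · simp
    · rw [hj, zero_mul, zero_mul]
  · obtain ⟨i, hi, hij⟩ := Finset.not_subset.1 hS
    rw [Finset.mem_singleton] at hij
    rw [Finset.prod_eq_zero hi (by simp [bits, hij]), Finset.prod_eq_zero hi (by simp [bits])]

lemma degree_truncate_pos {U : Finset V} {j : V} (hjU : j ∈ U) (hj : c {j} ≠ 0) :
    0 < (c.truncate U).degree := by
  exact (Finset.card_singleton j).symm.trans_le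
    (card_le_degree (truncate_ne_zero.2 ⟨Finset.singleton_subset_iff.2 hjU, hj⟩))

variable {κ : Type*} [Fintype κ] [DecidableEq κ] {L D : ℕ} {c : MultilinearPoly (Fin L → κ)}

/-- Descending towards `j`, the degree of the truncation drops at most `D` times. -/
lemma DegreeLE.add_one_le_sum (hc : c.DegreeLE D) (hL : 2 * D + 1 ≤ L) (j : Fin L → κ)
    {N : Fin L → ℝ} (hN0 : ∀ l, 0 ≤ N l)
    (hN : ∀ l : Fin L, (c.truncate (subtree j (l + 1))).degree = (c.truncate (subtree j l)).degree →
      1 ≤ N l) : (D + 1 : ℝ) ≤ ∑ l, N l := by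
  let d : ℕ → ℕ := fun l ↦ (c.truncate (subtree j l)).degree
  have hcount : D + 1 ≤ ({l ∈ Finset.range L | d (l + 1) = d l}).card := by
    have := add_le_add_card_filter_eq
      (d := d) (fun _ _ h ↦ c.degree_truncate_mono (subtree_antitone j h)) L
    have : d 0 ≤ D := (hc.truncate _).degree_le
    omega
  calc (D + 1 : ℝ) ≤ (({l ∈ Finset.range L | d (l + 1) = d l}).card : ℝ) := mod_cast hcount
    _ = ∑ l : Fin L, if d (l + 1) = d l then (1 : ℝ) else 0 := by
        rw [Fin.sum_univ_eq_sum_range (fun l ↦ if d (l + 1) = d l then (1 : ℝ) else 0) L]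
        simp
    _ ≤ ∑ l, N l := Finset.sum_le_sum fun l _ ↦ by
        split_ifs with h
        · exact hN l h
        · exact hN0 l

lemma exists_mem_hitting_set_eq {j : Fin L → κ} (hj : c {j} ≠ 0) {l : Fin L}
    (hdeg : (c.truncate (subtree j (l + 1))).degree = (c.truncate (subtree j l)).degree)
    {H : Finset (Fin L → κ)} (hH : ∀ M, c.truncate (subtree j l) M ≠ 0 →
      M.card = (c.truncate (subtree j l)).degree → ¬Disjoint M H) : ∃ h ∈ H, h l = j l := by
  obtain ⟨M, hM, hMcard⟩ := exists_card_eq_degree (truncate_ne_zero.2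
    ⟨Finset.singleton_subset_iff.2 (self_mem_subtree j (l + 1)), hj⟩)
  rw [truncate_ne_zero] at hM
  obtain ⟨h, hhM, hhH⟩ := Finset.not_disjoint_iff.1 <| hH M
    (truncate_ne_zero.2 ⟨hM.1.trans (subtree_antitone j (Nat.le_succ _)), hM.2⟩)
    (hMcard.trans hdeg)
  exact ⟨h, hhH, mem_subtree.1 (hM.1 hhM) l (Nat.lt_succ_self _)⟩

end MultilinearPoly

/-! ### Functions that are sensitive in every direction -/

section FullySensitive

open MultilinearPoly

variable {V κ : Type*} [Fintype V] [Fintype κ] [DecidableEq κ] {D L : ℕ}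

/-- The indicator that the polynomial `c` disagrees with `g` at `x`. -/
noncomputable def disagreement (c : MultilinearPoly V) (g : (V → Bool) → Bool) (x : V → Bool) : ℝ :=
  if c.eval (bits x) ≠ boolBit (g x) then 1 else 0

lemma disagreement_nonneg (c : MultilinearPoly V) (g : (V → Bool) → Bool) (x : V → Bool) :
    0 ≤ disagreement c g x := by
  unfold disagreement
  positivity

lemma prob_ne_eq_expect_disagreement {Ω : Type*} [Fintype Ω] (w : Ω → ℝ) (c : MultilinearPoly V)
    (g : (V → Bool) → Bool) (φ : Ω → V → Bool) :
    prob w (fun ω ↦ c.eval (bits (φ ω)) ≠ boolBit (g (φ ω))) =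
      expect w fun ω ↦ disagreement c g (φ ω) :=
  prob_eq_expect _ _

lemma one_le_disagreement_add {c : MultilinearPoly V} {g : (V → Bool) → Bool} {x y : V → Bool}
    (hg : g x ≠ g y) (hc : c.eval (bits x) = c.eval (bits y)) :
    1 ≤ disagreement c g x + disagreement c g y := by
  have hbit : ¬(c.eval (bits x) = boolBit (g x) ∧ c.eval (bits y) = boolBit (g y)) := by
    rintro ⟨hx, hy⟩
    rw [hc, hy] at hx
    cases hgx : g x <;> cases hgy : g y <;> simp_all
  unfold disagreement
  split_ifs <;> simp_all

/-- Twice the disagreement of `c` and `g` at a random point supported on `subtree j l`, plus the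
indicator that the path to `j` runs into the hitting set `H (subtree j l)` at its next edge. -/
noncomputable def levelCost (c : MultilinearPoly (Fin L → κ)) (g : ((Fin L → κ) → Bool) → Bool)
    (H : Finset (Fin L → κ) → Finset (Fin L → κ)) (j : Fin L → κ) (l : Fin L) : ℝ :=
  2 * expect (cubeWeight _) (fun z ↦ disagreement c g ((subtree j l).piecewise z fun _ ↦ false)) +
    if ∃ h ∈ H (subtree j l), h l = j l then 1 else 0

variable {c : MultilinearPoly (Fin L → κ)} {g : ((Fin L → κ) → Bool) → Bool}
  {H : Finset (Fin L → κ) → Finset (Fin L → κ)}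

lemma levelCost_nonneg (c : MultilinearPoly (Fin L → κ)) (g : ((Fin L → κ) → Bool) → Bool)
    (H : Finset (Fin L → κ) → Finset (Fin L → κ)) (j : Fin L → κ) (l : Fin L) :
    0 ≤ levelCost c g H j l := by
  have := expect_nonneg cubeWeight_mem_stdSimplex
    fun z ↦ disagreement_nonneg c g ((subtree j l).piecewise z fun _ ↦ false)
  unfold levelCost
  positivity

/-- `H` hits the top-degree monomials of every truncation of `c` that is not anticoncentrated. -/
def IsHittingMap [DecidableEq V] (c : MultilinearPoly V) (H : Finset V → Finset V) : Prop :=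
  ∀ U, 0 < (c.truncate U).degree →
    prob (cubeWeight V) (fun z ↦ (c.truncate U).eval (bits z) = 0 ∨
      (c.truncate U).eval (bits z) = 1) ≤ 1 / 2 ∨
    ∀ M, c.truncate U M ≠ 0 → M.card = (c.truncate U).degree → ¬Disjoint M (H U)

lemma IsHittingMap.one_le_levelCost (hH : IsHittingMap c H) {j : Fin L → κ} (hj : c {j} ≠ 0)
    {l : Fin L}
    (hdeg : (c.truncate (subtree j (l + 1))).degree = (c.truncate (subtree j l)).degree) :
    1 ≤ levelCost c g H j l := by
  obtain hconc | hhit := hH _ (degree_truncate_pos (self_mem_subtree j l) hj)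
  · have : 1 / 2 ≤ expect (cubeWeight _)
        fun z ↦ disagreement c g ((subtree j l).piecewise z fun _ ↦ false) := by
      have hnot := prob_not cubeWeight_mem_stdSimplex fun z ↦
        (c.truncate (subtree j l)).eval (bits z) = 0 ∨ (c.truncate (subtree j l)).eval (bits z) = 1
      refine le_trans (by linarith) (hnot.symm.trans_le <|
        (prob_mono cubeWeight_mem_stdSimplex fun z hz ↦ ?_).trans_eq (prob_eq_expect _ _))
      rw [eval_bits_piecewise_false]
      rintro h
      cases hb : g ((subtree j l).piecewise z fun _ ↦ false) <;> simp_all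
    unfold levelCost
    split_ifs <;> linarith
  · have := expect_nonneg cubeWeight_mem_stdSimplex
      fun z ↦ disagreement_nonneg c g ((subtree j l).piecewise z fun _ ↦ false)
    rw [levelCost, if_pos (exists_mem_hitting_set_eq hj hdeg hhit)]
    linarith

lemma IsHittingMap.add_one_le (hH : IsHittingMap c H) (hc : c.DegreeLE D) (hL : 2 * D + 1 ≤ L)
    {j : Fin L → κ} (hg : g (Function.update (fun _ ↦ false) j true) ≠ g fun _ ↦ false) :
    (D + 1 : ℝ) ≤ (D + 1) * (disagreement c g (Function.update (fun _ ↦ false) j true) +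
      disagreement c g fun _ ↦ false) + ∑ l, levelCost c g H j l := by
  have hsum : 0 ≤ ∑ l, levelCost c g H j l :=
    Finset.sum_nonneg fun l _ ↦ levelCost_nonneg c g H j l
  have hD : (0 : ℝ) ≤ D + 1 := by positivity
  by_cases hj : c {j} = 0
  · have := mul_le_mul_of_nonneg_left
      (one_le_disagreement_add hg (eval_bits_update_eq_of_eq_zero hj)) hD
    linarith
  · have := mul_nonneg hD (add_nonneg
      (disagreement_nonneg c g (Function.update (fun _ ↦ false) j true))
      (disagreement_nonneg c g fun _ ↦ false))
    linarith [hc.add_one_le_sum hL j (levelCost_nonneg c g H j) fun l ↦ hH.one_le_levelCost hj]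

lemma expect_levelCost_le [Nonempty κ] {R : ℕ} (hH : ∀ U, (H U).card ≤ R)
    (hκ : 4 * R ≤ Fintype.card κ) (l : Fin L) :
    expect (prodWeight (uniformWeight κ)) (fun j ↦ levelCost c g H j l) ≤
      2 * expect (prodWeight (uniformWeight κ)) (fun j ↦ expect (cubeWeight _) fun z ↦
        disagreement c g ((subtree j l).piecewise z fun _ ↦ false)) + 1 / 4 := by
  have hcard : (0 : ℝ) < Fintype.card κ := mod_cast Fintype.card_pos
  have hR : (R : ℝ) / Fintype.card κ ≤ 1 / 4 := by
    rw [div_le_iff₀ hcard]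
    have : (4 * R : ℝ) ≤ Fintype.card κ := mod_cast hκ
    linarith
  simp only [levelCost]
  rw [expect_add, expect_mul_left, ← prob_eq_expect]
  gcongr
  exact (prob_exists_mem_eq_le l hH).trans hR

/-- The expected disagreement at a point drawn as follows, times `3 * L`: with probability `1 / 3`
each, the origin, a uniformly random unit point, or a random point supported on a random subtree. -/
lemma IsApproximable.exists_disagreement_le [Nonempty κ] {δ : ℝ} (hg : IsApproximable g D δ) :
    ∃ c : MultilinearPoly (Fin L → κ), c.DegreeLE D ∧
      L * (disagreement c g (fun _ ↦ false) + expect (prodWeight (uniformWeight κ)) fun j ↦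
        disagreement c g (Function.update (fun _ ↦ false) j true)) +
      ∑ l : Fin L, expect (prodWeight (uniformWeight κ)) (fun j ↦ expect (cubeWeight _) fun z ↦
        disagreement c g ((subtree j l).piecewise z fun _ ↦ false)) ≤ 3 * L * δ := by
  have hw := prodWeight_mem_stdSimplex (V := Fin L) (uniformWeight_mem_stdSimplex (Ω := κ))
  obtain ⟨P, hP, herr⟩ := hg.exists_sum_prob_le
    (pairWeight_mem_stdSimplex hw (cubeWeight_mem_stdSimplex (V := Fin L → κ)))
    (fun (k : Fin 3 × Fin L) (p : (Fin L → κ) × ((Fin L → κ) → Bool)) ↦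
      ![fun _ ↦ false, Function.update (fun _ ↦ false) p.1 true,
        (subtree p.1 k.2).piecewise p.2 fun _ ↦ false] k.1)
  obtain ⟨c, hc, hPc⟩ := exists_eval_bits_eq hP
  refine ⟨c, hc, le_trans (le_of_eq ?_) (herr.trans_eq (by simp))⟩
  simp only [hPc, prob_ne_eq_expect_disagreement, Fintype.sum_prod_type, Fin.sum_univ_three,
    expect_pairWeight, Matrix.cons_val, expect_const cubeWeight_mem_stdSimplex, expect_const hw,
    Finset.sum_const, Finset.card_univ, Fintype.card_fin, nsmul_eq_mul]
  ring

theorem not_isApproximable_of_forall_update_ne [Nonempty κ] (hL : L = 2 * D + 2)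
    (hκ : 4 * (D * monomialBound D) ≤ Fintype.card κ)
    (hg : ∀ j : Fin L → κ, g (Function.update (fun _ ↦ false) j true) ≠ g fun _ ↦ false) :
    ¬IsApproximable g D (1 / 100) := by
  intro happ
  have hw := prodWeight_mem_stdSimplex (V := Fin L) (uniformWeight_mem_stdSimplex (Ω := κ))
  obtain ⟨c, hc, herr⟩ := happ.exists_disagreement_le
  choose H hHcard hH using fun U ↦ (hc.truncate U).exists_hitting_set
  have hcost := expect_mono hw fun j ↦
    IsHittingMap.add_one_le (g := g) hH hc (by omega) (hg j)
  have hlevel := Finset.sum_le_sum fun l (_ : l ∈ (Finset.univ : Finset (Fin L))) ↦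
    expect_levelCost_le (c := c) (g := g) hHcard hκ l
  rw [expect_const hw, expect_add, expect_mul_left, expect_add, expect_const hw, expect_sum]
    at hcost
  rw [Finset.sum_add_distrib, ← Finset.mul_sum, Finset.sum_const, Finset.card_univ,
    Fintype.card_fin, nsmul_eq_mul] at hlevel
  have hLD : (L : ℝ) = 2 * (D + 1) := by rw [hL]; push_cast; ring
  rw [hLD] at herr hlevel
  have hunit := expect_nonneg hw fun j ↦
    disagreement_nonneg c g (Function.update (fun _ ↦ false) j true)
  have hD : (0 : ℝ) < D + 1 := by positivity
  linarith [mul_nonneg hD.le (add_nonneg hunit (disagreement_nonneg c g fun _ ↦ false))]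

end FullySensitive

/-! ### Certificates -/

section Certificates

variable {V : Type*} [DecidableEq V] {f : (V → Bool) → Bool} {D : ℕ}

/-- A strict upper bound for the block sensitivity of the functions that are approximable in degree
`D`: the number of leaves of a tree to which `not_isApproximable_of_forall_update_ne` applies. -/
def blockBound (D : ℕ) : ℕ := (4 * (D * monomialBound D) + 1) ^ (2 * D + 2)

/-- The point obtained from `x` by flipping the bits in `β`. -/
def flipOn (x : V → Bool) (β : Finset V) : V → Bool := fun i ↦ if i ∈ β then !x i else x i

@[simp] lemma flipOn_empty (x : V → Bool) : flipOn x ∅ = x := by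
  ext i
  simp [flipOn]

lemma flipOn_flipOn_singleton (x : V → Bool) {β : Finset V} {i : V} (hi : i ∈ β) :
    flipOn (flipOn x β) {i} = flipOn x (β.erase i) := by
  ext k
  by_cases hk : k = i
  · subst hk
    simp [flipOn, hi]
  · simp [flipOn, hk]

variable [Fintype V]

lemma flipOn_filter_ne (x y : V → Bool) : flipOn x {i | y i ≠ x i} = y := by
  ext i
  simp only [flipOn, Finset.mem_filter_univ]
  cases x i <;> cases y i <;> simp

/-- Flipping each of the blocks according to one bit embeds the leaves of a tree into the blocks. -/
lemma IsApproximable.card_lt_of_flipOn_ne (hf : IsApproximable f D (1 / 100)) {x : V → Bool}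
    {𝓑 : Finset (Finset V)} (hdisj : (𝓑 : Set (Finset V)).PairwiseDisjoint id)
    (hsens : ∀ β ∈ 𝓑, f (flipOn x β) ≠ f x) : 𝓑.card < blockBound D := by
  by_contra! hcard
  let κ := Fin (4 * (D * monomialBound D) + 1)
  obtain ⟨φ⟩ : Nonempty ((Fin (2 * D + 2) → κ) ↪ 𝓑) :=
    Function.Embedding.nonempty_of_card_le (by simpa [κ, blockBound] using hcard)
  have φ_unique : ∀ {i v v'}, i ∈ (φ v).1 → i ∈ (φ v').1 → v = v' := fun {i v v'} hv hv' ↦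
    φ.injective <| Subtype.ext <|
      hdisj.elim (φ v).2 (φ v').2 (Finset.not_disjoint_iff.2 ⟨i, hv, hv'⟩)
  let point (z : (Fin (2 * D + 2) → κ) → Bool) : V → Bool :=
    flipOn x {i | ∃ v, i ∈ (φ v).1 ∧ z v = true}
  have point_linear : ∀ i, (fun z ↦ boolBit (point z i)) ∈ lowDegree (Fin (2 * D + 2) → κ) 1 := by
    intro i
    by_cases hi : ∃ v, i ∈ (φ v).1
    · obtain ⟨v, hv⟩ := hi
      have flipped_iff : ∀ z : (Fin (2 * D + 2) → κ) → Bool,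
          (∃ v', i ∈ (φ v').1 ∧ z v' = true) ↔ z v = true := fun z ↦
        ⟨fun ⟨v', hv', hz⟩ ↦ φ_unique hv hv' ▸ hz, fun hz ↦ ⟨v, hv, hz⟩⟩
      cases hx : x i
      · convert boolBit_mem_lowDegree v using 4 with z
        cases hz : z v <;> simp [point, flipOn, flipped_iff, hx, hz]
      · convert boolBit_not_mem_lowDegree v using 4 with z
        cases hz : z v <;> simp [point, flipOn, flipped_iff, hx, hz]
    · convert const_mem_lowDegree (boolBit (x i)) using 3 with z
      rw [not_exists] at hi
      simp [point, flipOn, hi]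
  refine not_isApproximable_of_forall_update_ne (κ := κ) rfl (by simp [κ]) (fun j ↦ ?_)
    (hf.comp point_linear)
  have point_leaf : point (Function.update (fun _ ↦ false) j true) = flipOn x (φ j).1 := by
    refine congrArg (flipOn x) (Finset.ext fun i ↦ ?_)
    simp [Function.update_apply]
  have point_zero : point (fun _ ↦ false) = x := by simp [point]
  rw [Function.comp_apply, Function.comp_apply, point_leaf, point_zero]
  exact hsens _ (φ j).2

lemma IsApproximable.card_lt_of_minimal_flipOn_ne (hf : IsApproximable f D (1 / 100))
    {x : V → Bool} {β : Finset V} (hβ : Minimal (fun β ↦ f (flipOn x β) ≠ f x) β) :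
    β.card < blockBound D := by
  rw [← Finset.card_map ⟨singleton, Finset.singleton_injective⟩]
  refine hf.card_lt_of_flipOn_ne (x := flipOn x β) ?_ ?_
  · rw [Finset.coe_map, Set.PairwiseDisjoint, Set.InjOn.pairwise_image]
    · intro i _ j _ hij
      simpa [Function.onFun] using hij
    · exact Finset.singleton_injective.injOn
  · simp only [Finset.mem_map, Function.Embedding.coeFn_mk, forall_exists_index, and_imp,
      forall_apply_eq_imp_iff₂]
    intro i hi
    have := hβ.not_prop_of_lt (Finset.erase_ssubset hi)
    rw [flipOn_flipOn_singleton x hi, not_not.1 this]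
    exact hβ.prop.symm

/-- The union of a maximal family of disjoint minimal sensitive blocks at `x` is a certificate. -/
lemma IsApproximable.exists_certificate (hf : IsApproximable f D (1 / 100)) (x : V → Bool) :
    ∃ C : Finset V, C.card ≤ blockBound D ^ 2 ∧ ∀ y, (∀ i ∈ C, y i = x i) → f y = f x := by
  obtain ⟨𝓑, hdisj, hmin, hmax⟩ :=
    exists_maximal_disjoint_family (Minimal fun β ↦ f (flipOn x β) ≠ f x)
  refine ⟨𝓑.biUnion id, ?_, fun y hy ↦ ?_⟩
  · calc (𝓑.biUnion id).card ≤ 𝓑.card * blockBound D :=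
          Finset.card_biUnion_le_card_mul _ _ _ fun β hβ ↦
            (hf.card_lt_of_minimal_flipOn_ne (hmin β hβ)).le
      _ ≤ blockBound D ^ 2 := by
          rw [sq]
          gcongr
          exact (hf.card_lt_of_flipOn_ne hdisj fun β hβ ↦ (hmin β hβ).prop).le
  · by_contra hne
    have hsens : f (flipOn x {i | y i ≠ x i}) ≠ f x := by rwa [flipOn_filter_ne]
    obtain ⟨β, hβ_sub, hβ⟩ :=
      exists_minimal_le_of_wellFoundedLT (fun β ↦ f (flipOn x β) ≠ f x) _ hsens
    have hβ_nonempty : β.Nonempty := by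
      rw [Finset.nonempty_iff_ne_empty]
      rintro rfl
      exact hβ.prop (by rw [flipOn_empty])
    refine hmax β hβ hβ_nonempty (Finset.disjoint_left.2 fun i hi hi𝓑 ↦ ?_)
    exact (Finset.mem_filter.1 (hβ_sub hi)).2 (hy i hi𝓑)

end Certificates

/-! ### Hashing the variables into few buckets -/

section Hashing

variable {V κ Ω : Type*}

lemma prob_exists_le_sum [Fintype Ω] {w : Ω → ℝ} (hw : w ∈ stdSimplex ℝ Ω) (s : Finset κ)
    (p : κ → Ω → Prop) : prob w (fun ω ↦ ∃ k ∈ s, p k ω) ≤ ∑ k ∈ s, prob w (p k) := by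
  simp only [prob_eq_expect, ← expect_sum]
  refine expect_mono hw fun ω ↦ ?_
  split_ifs with h
  · obtain ⟨k, hk, hpk⟩ := h
    simpa [hpk] using Finset.single_le_sum (f := fun k ↦ if p k ω then (1 : ℝ) else 0)
      (fun k _ ↦ by positivity) hk
  · positivity

variable [Fintype V] [Fintype κ] [Nonempty κ]

section Probability

variable [DecidableEq V]

lemma prob_apply_eq (i : V) (z : κ) :
    prob (prodWeight (uniformWeight κ)) (fun h : V → κ ↦ h i = z) = (Fintype.card κ : ℝ)⁻¹ := by
  rw [prob_eq_expect, expect_prodWeight_resample uniformWeight_mem_stdSimplex _ i]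
  simp only [Function.update_self]
  rw [expect_const (prodWeight_mem_stdSimplex uniformWeight_mem_stdSimplex)]
  simp [expect, uniformWeight]

lemma prob_apply_eq_and_apply_eq_apply (i : V) (z : κ) {u v : V} (huv : u ≠ v) :
    prob (prodWeight (uniformWeight κ)) (fun h : V → κ ↦ h i = z ∧ h u = h v) =
      (Fintype.card κ : ℝ)⁻¹ ^ 2 := by
  wlog hv : v ≠ i generalizing u v
  · simpa only [eq_comm] using this huv.symm fun hu ↦ huv (hu.trans (not_not.1 hv).symm)
  rw [prob_eq_expect, expect_prodWeight_resample uniformWeight_mem_stdSimplex _ v]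
  simp only [Function.update_self, Function.update_of_ne huv, Function.update_of_ne hv.symm,
    ite_and]
  have resampled : ∀ h : V → κ, (expect (uniformWeight κ) fun o ↦
      if h i = z then if h u = o then (1 : ℝ) else 0 else 0) =
        (if h i = z then 1 else 0) * (Fintype.card κ : ℝ)⁻¹ := by
    intro h
    by_cases hz : h i = z <;> simp [expect, uniformWeight, hz]
  simp only [resampled]
  rw [expect_mul_right, ← prob_eq_expect, prob_apply_eq, sq]

lemma inv_two_mul_card_le_prob_injOn {T : Finset V} (hT : 2 * T.card ^ 2 ≤ Fintype.card κ) (i : V)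
    (z : κ) : (2 * Fintype.card κ : ℝ)⁻¹ ≤
      prob (prodWeight (uniformWeight κ)) fun h ↦ h i = z ∧ Set.InjOn h T := by
  set m : ℝ := (Fintype.card κ : ℝ) with hm
  have hw : prodWeight (uniformWeight κ) ∈ stdSimplex ℝ (V → κ) :=
    prodWeight_mem_stdSimplex uniformWeight_mem_stdSimplex
  have collision : prob (prodWeight (uniformWeight κ))
      (fun h ↦ ∃ p ∈ T.offDiag, h i = z ∧ h p.1 = h p.2) ≤ m / 2 * m⁻¹ ^ 2 := by
    calc _ ≤ ∑ p ∈ T.offDiag, m⁻¹ ^ 2 := by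
          refine (prob_exists_le_sum hw _ _).trans_eq (Finset.sum_congr rfl fun p hp ↦ ?_)
          exact prob_apply_eq_and_apply_eq_apply i z (Finset.mem_offDiag.1 hp).2.2
      _ ≤ m / 2 * m⁻¹ ^ 2 := by
          rw [Finset.sum_const, nsmul_eq_mul]
          gcongr
          rw [le_div_iff₀ zero_lt_two, hm]
          norm_cast
          rw [Finset.offDiag_card, ← sq]
          omega
  have split := prob_le_prob_add_prob hw (p := fun h : V → κ ↦ h i = z)
    (q := fun h ↦ h i = z ∧ Set.InjOn h T)
    (r := fun h ↦ ∃ p ∈ T.offDiag, h i = z ∧ h p.1 = h p.2) fun h hz ↦ by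
      by_cases hinj : Set.InjOn h T
      · exact .inl ⟨hz, hinj⟩
      · simp only [Set.InjOn] at hinj
        push Not at hinj
        obtain ⟨u, hu, v, hv, heq, hne⟩ := hinj
        exact .inr ⟨(u, v), Finset.mem_offDiag.2 ⟨hu, hv, hne⟩, hz, heq⟩
  rw [prob_apply_eq, ← hm] at split
  have hm_pos : 0 < m := by positivity
  have : m / 2 * m⁻¹ ^ 2 = m⁻¹ - (2 * m)⁻¹ := by
    field_simp
    norm_num
  linarith

end Probability

/-- A random hash function sends `i` to `z` and is injective on `T i` with probability at least
`1 / (2 * card κ)`. -/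
lemma exists_card_le_mul_card_injOn (T : V → Finset V)
    (hT : ∀ i, 2 * (T i).card ^ 2 ≤ Fintype.card κ) (z : κ) :
    ∃ h : V → κ, Fintype.card V ≤
      2 * Fintype.card κ * ({i | h i = z ∧ Set.InjOn h (T i)} : Finset V).card := by
  let N (h : V → κ) : ℝ := ({i | h i = z ∧ Set.InjOn h (T i)} : Finset V).card
  have expect_N : Fintype.card V * (2 * Fintype.card κ : ℝ)⁻¹ ≤
      expect (prodWeight (uniformWeight κ)) N := by
    calc _ = ∑ i : V, (2 * Fintype.card κ : ℝ)⁻¹ := by simp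
      _ ≤ ∑ i, prob (prodWeight (uniformWeight κ)) fun h ↦ h i = z ∧ Set.InjOn h (T i) :=
          Finset.sum_le_sum fun i _ ↦ inv_two_mul_card_le_prob_injOn (hT i) i z
      _ = expect (prodWeight (uniformWeight κ)) N := by
          simp only [prob_eq_expect, ← expect_sum, Finset.sum_boole, N]
  obtain ⟨h, hh⟩ := exists_le_expect
    (prodWeight_mem_stdSimplex (V := V) (uniformWeight_mem_stdSimplex (Ω := κ))) fun h ↦ -1 * N h
  rw [expect_mul_left] at hh
  have hN : Fintype.card V * (2 * Fintype.card κ : ℝ)⁻¹ ≤ N h := by linarith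
  rw [← div_eq_mul_inv, div_le_iff₀ (by positivity), mul_comm] at hN
  refine ⟨h, ?_⟩
  simp only [N] at hN
  exact_mod_cast hN

end Hashing

/-! ### Boolean vectors close to a subspace -/

section BooleanVectors

variable {κ : Type*}

lemma exists_card_le_finrank_forall_eq_zero {K : Type*} [Field K] [Finite κ]
    (W : Submodule K (κ → K)) : ∃ J : Finset κ, J.card ≤ Module.finrank K W ∧
      ∀ x ∈ W, (∀ j ∈ J, x j = 0) → x = 0 := by
  classical
  induction hd : Module.finrank K W using Nat.strong_induction_on generalizing W with
  | _ d ih =>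
    by_cases hW : W = ⊥
    · exact ⟨∅, by simp, fun x hx _ ↦ by simpa [hW] using hx⟩
    · obtain ⟨w, hwW, hw⟩ := Submodule.exists_mem_ne_zero_of_ne_bot hW
      obtain ⟨i, hi⟩ := Function.ne_iff.1 hw
      let W' := W ⊓ (LinearMap.proj i : (κ → K) →ₗ[K] K).ker
      have hlt : Module.finrank K W' < d := by
        rw [← hd]
        refine Submodule.finrank_lt_finrank_of_lt (inf_le_left.lt_of_ne fun h ↦ hi ?_)
        have hwW' : w ∈ W' := h.ge hwW
        simpa using hwW'.2
      obtain ⟨J, hJ, hJW'⟩ := ih _ hlt W' rfl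
      refine ⟨insert i J, (Finset.card_insert_le _ _).trans (by omega), fun x hx hxJ ↦ ?_⟩
      refine hJW' x ⟨hx, by simpa using hxJ i (by simp)⟩ fun j hj ↦ hxJ j (by simp [hj])

lemma boolBit_injective : Function.Injective boolBit := fun a b h ↦ by
  cases a <;> cases b <;> simp_all

lemma card_le_two_pow_finrank [Finite κ] {W : Submodule ℝ (κ → ℝ)} {𝓢 : Finset (κ → Bool)}
    (h𝓢 : ∀ x ∈ 𝓢, bits x ∈ W) : 𝓢.card ≤ 2 ^ Module.finrank ℝ W := by
  obtain ⟨J, hJ, hJW⟩ := exists_card_le_finrank_forall_eq_zero W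
  calc 𝓢.card ≤ (Finset.univ : Finset (J → Bool)).card := by
        refine Finset.card_le_card_of_injOn (fun x j ↦ x j) (by simp) fun x hx y hy hxy ↦ ?_
        have hsub := hJW _ (W.sub_mem (h𝓢 x hx) (h𝓢 y hy)) fun j hj ↦ by
          simp [bits, show x j = y j from congrFun hxy ⟨j, hj⟩]
        exact funext fun i ↦ boolBit_injective (congrFun (sub_eq_zero.1 hsub) i)
    _ = 2 ^ J.card := by simp
    _ ≤ 2 ^ Module.finrank ℝ W := by gcongr; norm_num

variable [Fintype κ]

lemma card_le_two_pow_of_exists_filter_ne_eq {W : Submodule ℝ (κ → ℝ)} {𝓢 : Finset (κ → Bool)}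
    {E : Finset κ} (h𝓢 : ∀ x ∈ 𝓢, ∃ v ∈ W, ({i | v i ≠ bits x i} : Finset κ) = E) :
    𝓢.card ≤ 2 ^ (Module.finrank ℝ W + E.card) := by
  let W' := W ⊔ Submodule.span ℝ (E.image fun i ↦ Pi.single i (1 : ℝ) : Set (κ → ℝ))
  have hW' : ∀ x ∈ 𝓢, bits x ∈ W' := by
    intro x hx
    obtain ⟨v, hv, hE⟩ := h𝓢 x hx
    have correction : bits x = v + ∑ i ∈ E, (bits x i - v i) • Pi.single i (1 : ℝ) := by
      ext i
      by_cases hi : v i = bits x i <;> simp [← hE, Pi.single_apply, hi]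
    rw [correction]
    exact add_mem (Submodule.mem_sup_left hv) <| Submodule.sum_mem _ fun i hi ↦
      Submodule.smul_mem _ _ <| Submodule.mem_sup_right <| Submodule.subset_span <|
        Finset.mem_coe.2 (Finset.mem_image_of_mem _ hi)
  refine (card_le_two_pow_finrank hW').trans (Nat.pow_le_pow_right two_pos ?_)
  exact (Submodule.finrank_add_le_finrank_add_finrank _ _).trans
    (add_le_add_right ((finrank_span_finset_le_card _).trans Finset.card_image_le) _)

lemma card_le_sum_two_pow {W : Submodule ℝ (κ → ℝ)} {𝓢 : Finset (κ → Bool)} {t : ℕ}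
    (h𝓢 : ∀ x ∈ 𝓢, ∃ v ∈ W, ({i | v i ≠ bits x i} : Finset κ).card ≤ t) :
    𝓢.card ≤ ∑ E : Finset κ with E.card ≤ t, 2 ^ (Module.finrank ℝ W + E.card) := by
  choose! v hvW hvt using h𝓢
  rw [Finset.card_eq_sum_card_fiberwise (f := fun x ↦ ({i | v x i ≠ bits x i} : Finset κ))
    (t := {E : Finset κ | E.card ≤ t}) fun x hx ↦ by simpa using hvt x hx]
  refine Finset.sum_le_sum fun E _ ↦ card_le_two_pow_of_exists_filter_ne_eq fun x hx ↦ ?_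
  obtain ⟨hx𝓢, hxE⟩ := Finset.mem_filter.1 hx
  exact ⟨v x, hvW x hx𝓢, hxE⟩

lemma sum_two_pow_card_mul_le (t : ℕ) :
    (∑ E : Finset κ with E.card ≤ t, 2 ^ E.card) * 32 ^ Fintype.card κ ≤
      64 ^ t * 33 ^ Fintype.card κ := by
  have binomial := Fintype.sum_pow_mul_eq_add_pow κ 1 32
  norm_num at binomial
  rw [← binomial, Finset.mul_sum, Finset.sum_mul]
  refine (Finset.sum_le_sum fun E hE ↦ ?_).trans
    (Finset.sum_le_sum_of_subset (Finset.filter_subset (fun E : Finset κ ↦ E.card ≤ t) _))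
  calc 2 ^ E.card * 32 ^ Fintype.card κ = 64 ^ E.card * 32 ^ (Fintype.card κ - E.card) := by
        rw [← Nat.add_sub_of_le (Finset.card_le_univ E), pow_add, ← mul_assoc, ← mul_pow,
          Nat.add_sub_cancel_left]
        norm_num
    _ ≤ 64 ^ t * 32 ^ (Fintype.card κ - E.card) := by
        gcongr
        · norm_num
        · exact (Finset.mem_filter.1 hE).2

lemma le_two_mul_add_two_of_pow_mul_pow_le {q r t : ℕ} (ht : 24 * t ≤ q)
    (h : 2 ^ q * 32 ^ q ≤ 2 ^ (r + 1) * (64 ^ t * 33 ^ q)) : q ≤ 2 * r + 2 := by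
  have pow_33 : 33 ^ (4 * q) ≤ 2 ^ q * 32 ^ (4 * q) := by
    rw [pow_mul, pow_mul, ← mul_pow]
    gcongr
    norm_num
  have pow_64 : 64 ^ (4 * t) ≤ 2 ^ q := by
    rw [show 64 = 2 ^ 6 from rfl, ← pow_mul]
    exact Nat.pow_le_pow_right two_pos (by omega)
  have fourth_powers : 2 ^ (4 * q) * 32 ^ (4 * q) ≤ 2 ^ (4 * (r + 1) + 2 * q) * 32 ^ (4 * q) :=
    calc 2 ^ (4 * q) * 32 ^ (4 * q) = (2 ^ q * 32 ^ q) ^ 4 := by ring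
      _ ≤ (2 ^ (r + 1) * (64 ^ t * 33 ^ q)) ^ 4 := by gcongr
      _ = 2 ^ (4 * (r + 1)) * (64 ^ (4 * t) * 33 ^ (4 * q)) := by ring
      _ ≤ 2 ^ (4 * (r + 1)) * (2 ^ q * (2 ^ q * 32 ^ (4 * q))) := by gcongr
      _ = _ := by ring
  have := (Nat.pow_le_pow_iff_right one_lt_two).1
    (Nat.le_of_mul_le_mul_right fourth_powers (by positivity))
  omega

variable [DecidableEq κ]

lemma prob_cubeWeight (p : (κ → Bool) → Prop) [DecidablePred p] :
    prob (cubeWeight κ) p =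
      ({y | p y} : Finset (κ → Bool)).card * (2 ^ Fintype.card κ : ℝ)⁻¹ := by
  simp only [prob, prodWeight, uniformWeight, Finset.prod_const, Finset.sum_const, nsmul_eq_mul,
    Fintype.card_bool, Nat.cast_ofNat, Finset.card_univ, inv_pow]
  congr!

lemma two_pow_le_two_mul_card [Nonempty κ] {v : (κ → Bool) → κ → ℝ} {b : (κ → Bool) → κ → Bool}
    (herr : ∑ i, prob (cubeWeight κ) (fun y ↦ v y i ≠ boolBit (b y i)) ≤
      Fintype.card κ * (1 / 100)) :
    2 ^ Fintype.card κ ≤ 2 * ({y | ({i | v y i ≠ bits (b y) i} : Finset κ).card ≤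
      Fintype.card κ / 50} : Finset (κ → Bool)).card := by
  set q := Fintype.card κ
  have hq : (0 : ℝ) < q := mod_cast Fintype.card_pos
  let err (y : κ → Bool) : ℕ := ({i | v y i ≠ bits (b y) i} : Finset κ).card
  have expect_err : expect (cubeWeight κ) (fun y ↦ (err y : ℝ)) ≤ q * (1 / 100) := by
    refine le_of_eq_of_le ?_ herr
    simp only [prob_eq_expect, ← expect_sum, Finset.sum_boole]
    rfl
  have markov := mul_prob_le_expect cubeWeight_mem_stdSimplex (fun y ↦ (err y).cast_nonneg)
    (q / 50 : ℝ)
  have prob_bad : prob (cubeWeight κ) (fun y ↦ (q / 50 : ℝ) ≤ err y) ≤ 1 / 2 := by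
    refine le_of_mul_le_mul_left (markov.trans (expect_err.trans_eq ?_)) (div_pos hq (by norm_num))
    ring
  have prob_good : 1 / 2 ≤ prob (cubeWeight κ) fun y ↦ err y ≤ q / 50 := by
    calc 1 / 2 ≤ prob (cubeWeight κ) fun y ↦ ¬(q / 50 : ℝ) ≤ err y := by
          rw [prob_not cubeWeight_mem_stdSimplex]
          linarith
      _ ≤ _ := prob_mono cubeWeight_mem_stdSimplex fun y hy ↦ by
          rw [Nat.le_div_iff_mul_le (by norm_num)]
          rw [not_le, lt_div_iff₀ (by norm_num)] at hy
          exact_mod_cast hy.le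
  rw [prob_cubeWeight, ← div_eq_mul_inv, div_le_div_iff₀ two_pos (by positivity), one_mul,
    mul_comm] at prob_good
  exact_mod_cast prob_good

/-- An injective map `b` on the Boolean cube has no approximation within a subspace of dimension
well below half of the ambient one, since too few Boolean vectors are close to such a subspace. -/
lemma card_le_of_sum_prob_le {W : Submodule ℝ (κ → ℝ)} {b : (κ → Bool) → κ → Bool}
    (hb : Function.Injective b) {v : (κ → Bool) → κ → ℝ} (hv : ∀ y, v y ∈ W)
    (herr : ∑ i, prob (cubeWeight κ) (fun y ↦ v y i ≠ boolBit (b y i)) ≤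
      Fintype.card κ * (1 / 100)) : Fintype.card κ ≤ 2 * Module.finrank ℝ W + 2 := by
  obtain _ | _ := isEmpty_or_nonempty κ
  · simp
  set r := Module.finrank ℝ W
  set q := Fintype.card κ
  refine le_two_mul_add_two_of_pow_mul_pow_le (t := q / 50) (by omega) ?_
  let good : Finset (κ → Bool) := {y | ({i | v y i ≠ bits (b y) i} : Finset κ).card ≤ q / 50}
  calc 2 ^ q * 32 ^ q ≤ 2 * (good.image b).card * 32 ^ q := by
        rw [Finset.card_image_of_injective _ hb]
        gcongr
        exact two_pow_le_two_mul_card herr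
    _ ≤ 2 * (∑ E : Finset κ with E.card ≤ q / 50, 2 ^ (r + E.card)) * 32 ^ q := by
        gcongr
        refine card_le_sum_two_pow fun x hx ↦ ?_
        obtain ⟨y, hy, rfl⟩ := Finset.mem_image.1 hx
        exact ⟨v y, hv y, (Finset.mem_filter.1 hy).2⟩
    _ = 2 ^ (r + 1) * ((∑ E : Finset κ with E.card ≤ q / 50, 2 ^ E.card) * 32 ^ q) := by
        simp only [pow_add, ← Finset.mul_sum]
        ring
    _ ≤ 2 ^ (r + 1) * (64 ^ (q / 50) * 33 ^ q) :=
        Nat.mul_le_mul_left _ (sum_two_pow_card_mul_le _)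

end BooleanVectors

/-! ### The number of variables of an approximable function -/

lemma card_filter_card_le_le {κ : Type*} [Fintype κ] [Nonempty κ] (D : ℕ) :
    ({T : Finset κ | T.card ≤ D} : Finset (Finset κ)).card ≤ (D + 1) * Fintype.card κ ^ D := by
  calc ({T : Finset κ | T.card ≤ D} : Finset (Finset κ)).card
      ≤ ((Finset.range (D + 1)).biUnion fun k ↦ Finset.powersetCard k Finset.univ).card :=
        Finset.card_le_card fun T hT ↦ by simpa [Nat.lt_succ_iff] using hT
    _ ≤ (Finset.range (D + 1)).card * Fintype.card κ ^ D := by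
        refine Finset.card_biUnion_le_card_mul _ _ _ fun k hk ↦ ?_
        rw [Finset.card_powersetCard, Finset.card_univ]
        exact (Nat.choose_le_pow _ _).trans <|
          Nat.pow_le_pow_right Fintype.card_pos (Nat.lt_succ_iff.1 (Finset.mem_range.1 hk))
    _ = (D + 1) * Fintype.card κ ^ D := by rw [Finset.card_range]

lemma finrank_lowDegree_le {κ : Type*} [Fintype κ] [Nonempty κ] (D : ℕ) :
    Module.finrank ℝ (lowDegree κ D) ≤ (D + 1) * Fintype.card κ ^ D := by
  have span_eq : lowDegree κ D = Submodule.span ℝ (({T : Finset κ | T.card ≤ D} :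
      Finset (Finset κ)).image fun (T : Finset κ) (z : κ → Bool) ↦ ∏ i ∈ T, boolBit (z i)) := by
    rw [lowDegree]
    congr 1
    ext F
    simp [eq_comm]
  rw [span_eq]
  exact (finrank_span_finset_le_card _).trans
    (Finset.card_image_le.trans (card_filter_card_le_le D))

section Buckets

variable {V κ : Type*} [DecidableEq κ] {f : (V → Bool) → Bool} {D : ℕ}

/-- The point that agrees with `y` on the bucket of `z` under the hash function `h`, and is constant
on all other buckets, with values prescribed by `ζ`. -/
def bucketPoint (h : V → κ) (z : κ) (y : V → Bool) (ζ : κ → Bool) : V → Bool :=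
  fun v ↦ if h v = z then y v else ζ (h v)

lemma boolBit_bucketPoint_mem_lowDegree (h : V → κ) (z : κ) (y : V → Bool) (v : V) :
    (fun ζ ↦ boolBit (bucketPoint h z y ζ v)) ∈ lowDegree κ 1 := by
  by_cases hv : h v = z
  · simpa [bucketPoint, hv] using const_mem_lowDegree _
  · simpa [bucketPoint, hv] using boolBit_mem_lowDegree (h v)

variable [Fintype V] [DecidableEq V]

/-- Fixing the bits in certificates at `a` and at its neighbour leaves only the `i`-th bit. -/
lemma IsApproximable.exists_forall_eq_xor (hf : IsApproximable f D (1 / 100)) {i : V}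
    {a : V → Bool} (ha : f (Function.update a i (!a i)) ≠ f a) :
    ∃ (A : Finset V) (c : Bool), A.card ≤ 2 * blockBound D ^ 2 ∧ i ∉ A ∧
      ∀ y, (∀ v ∈ A, y v = a v) → f y = xor (y i) c := by
  obtain ⟨C, hC, hfC⟩ := hf.exists_certificate a
  obtain ⟨C', hC', hfC'⟩ := hf.exists_certificate (Function.update a i (!a i))
  refine ⟨(C ∪ C').erase i, xor (a i) (f a), ?_, Finset.notMem_erase _ _, fun y hy ↦ ?_⟩
  · have := (C ∪ C').card_erase_le (a := i)
    have := Finset.card_union_le C C'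
    omega
  · simp only [Finset.mem_erase, Finset.mem_union, and_imp] at hy
    obtain hyi | hyi : y i = a i ∨ y i = !a i := by cases y i <;> cases a i <;> simp
    · rw [hfC y fun v hv ↦ ?_, hyi]
      · cases a i <;> simp
      by_cases hvi : v = i
      · rw [hvi, hyi]
      · exact hy v hvi (.inl hv)
    · rw [hfC' y fun v hv ↦ ?_, hyi, Bool.eq_not_of_ne ha]
      · simp
      by_cases hvi : v = i
      · rw [hvi, hyi, Function.update_self]
      · rw [Function.update_of_ne hvi]
        exact hy v hvi (.inr hv)

lemma IsApproximable.exists_forall_injOn_eq_xor (hf : IsApproximable f D (1 / 100)) {i : V}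
    (hi : ∃ a, f (Function.update a i (!a i)) ≠ f a) :
    ∃ T : Finset V, T.card ≤ 2 * blockBound D ^ 2 + 1 ∧ ∀ h : V → κ, Set.InjOn h T →
      ∃ (ζ : κ → Bool) (c : Bool), ∀ y, f (bucketPoint h (h i) y ζ) = xor (y i) c := by
  obtain ⟨a, ha⟩ := hi
  obtain ⟨A, c, hA, hiA, hfA⟩ := hf.exists_forall_eq_xor ha
  have : Nonempty V := ⟨i⟩
  refine ⟨insert i A, (Finset.card_insert_le _ _).trans (by omega), fun h hinj ↦
    ⟨a ∘ Function.invFunOn h A, c, fun y ↦ ?_⟩⟩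
  rw [Finset.coe_insert] at hinj
  rw [hfA _ fun v hv ↦ ?_]
  · simp [bucketPoint]
  · have hne : h v ≠ h i := hinj.ne (.inr hv) (.inl rfl) (ne_of_mem_of_not_mem hv hiA)
    rw [bucketPoint, if_neg hne, Function.comp_apply,
      (hinj.mono (Set.subset_insert _ _)).leftInvOn_invFunOn hv]

/-- For each `y` the values of an approximation at the points `bucketPoint h z y (ζ i)` form a
vector in the image of `lowDegree κ D`, whose dimension does not depend on `V`. -/
lemma IsApproximable.card_le_of_bucketPoint_eq_xor [Fintype κ] [Nonempty κ]
    (hf : IsApproximable f D (1 / 100)) {h : V → κ} {z : κ} {I : Finset V}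
    (hI : ∀ i ∈ I, ∃ (ζ : κ → Bool) (c : Bool), ∀ y, f (bucketPoint h z y ζ) = xor (y i) c) :
    I.card ≤ 2 * ((D + 1) * Fintype.card κ ^ D) + 2 := by
  choose ζ c hζ using fun i : I ↦ hI i i.2
  let extend (y : I → Bool) (v : V) : Bool := if hv : v ∈ I then y ⟨v, hv⟩ else false
  let point (i : I) (y : I → Bool) : V → Bool := bucketPoint h z (extend y) (ζ i)
  have f_point : ∀ i y, f (point i y) = xor (y i) (c i) := fun i y ↦ by
    simp [point, hζ, extend]
  obtain ⟨P, hP, hPf⟩ := hf.exists_sum_prob_le (cubeWeight_mem_stdSimplex (V := I)) point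
  let W : Submodule ℝ (I → ℝ) := (lowDegree κ D).map (LinearMap.funLeft ℝ ℝ ζ)
  have card_le : Fintype.card I ≤ 2 * Module.finrank ℝ W + 2 := by
    refine card_le_of_sum_prob_le (b := fun y i ↦ f (point i y)) (v := fun y i ↦ P (point i y))
      (fun y y' hyy' ↦ funext fun i ↦ ?_) (fun y ↦ ?_) hPf
    · simpa [f_point] using congrFun hyy' i
    · exact ⟨P ∘ bucketPoint h z (extend y),
        comp_mem_lowDegree hP (boolBit_bucketPoint_mem_lowDegree h z _), rfl⟩
  have finrank_le : Module.finrank ℝ W ≤ (D + 1) * Fintype.card κ ^ D :=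
    (Submodule.finrank_map_le _ _).trans (finrank_lowDegree_le D)
  rw [Fintype.card_coe] at card_le
  omega

end Buckets

/-- A number of buckets for which a random hash function is injective on a certificate of an
approximable function with probability at least `1 / 2`. -/
def bucketCount (D : ℕ) : ℕ := 2 * (2 * blockBound D ^ 2 + 1) ^ 2

lemma IsApproximable.card_le {V : Type} [Fintype V] [DecidableEq V] {f : (V → Bool) → Bool}
    {D : ℕ} (hf : IsApproximable f D (1 / 100)) (htruly : TrulyVariate f) :
    Fintype.card V ≤ 2 * bucketCount D * (2 * ((D + 1) * bucketCount D ^ D) + 2) := by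
  have : NeZero (bucketCount D) := ⟨by simp [bucketCount]⟩
  choose T hT hfT using fun i ↦
    hf.exists_forall_injOn_eq_xor (κ := Fin (bucketCount D)) (by convert htruly i)
  obtain ⟨h, hh⟩ := exists_card_le_mul_card_injOn (κ := Fin (bucketCount D)) T (fun i ↦ by
    rw [Fintype.card_fin, bucketCount]
    gcongr
    exact hT i) 0
  rw [Fintype.card_fin] at hh
  refine hh.trans (Nat.mul_le_mul_left _ ?_)
  refine (hf.card_le_of_bucketPoint_eq_xor (h := h) (z := 0) fun i hi ↦ ?_).trans_eq
    (by rw [Fintype.card_fin])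
  simp only [Finset.mem_filter_univ] at hi
  obtain ⟨hi0, hinj⟩ := hi
  simpa [hi0] using hfT i h hinj

/-! ### Numerical bounds -/

/-- A number of whose powers all constants of the argument are bounded by. -/
def powerBase (D : ℕ) : ℕ := 20000 * (D + 1)

lemma powerBase_pos (D : ℕ) : 0 < powerBase D := by
  unfold powerBase
  omega

lemma nine_le_powerBase (D : ℕ) : 9 ≤ powerBase D := by
  unfold powerBase
  omega

lemma self_le_powerBase (D : ℕ) : D ≤ powerBase D := by
  unfold powerBase
  omega

lemma nodeScale_le (D : ℕ) : nodeScale D ≤ powerBase D ^ 2 := by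
  calc 20000 * D ^ 2 ≤ 20000 ^ 2 * (D + 1) ^ 2 := by
        gcongr <;> omega
    _ = powerBase D ^ 2 := (mul_pow _ _ _).symm

lemma interpolationConst_le (D : ℕ) : interpolationConst D ≤ powerBase D ^ (4 * D + 1) := by
  calc 40 * (2 * D + 1) * nodeScale D ^ (2 * D) ≤ powerBase D * (powerBase D ^ 2) ^ (2 * D) := by
        gcongr
        · unfold powerBase
          omega
        · exact nodeScale_le D
    _ = powerBase D ^ (4 * D + 1) := by ring

lemma lindebergConst_le (D : ℕ) : lindebergConst D ≤ powerBase D ^ (13 * D + 4) := by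
  calc 2000 * (D + 1) * 9 ^ D * interpolationConst D ^ 3
      ≤ powerBase D * powerBase D ^ D * (powerBase D ^ (4 * D + 1)) ^ 3 := by
        gcongr
        · unfold powerBase
          omega
        · exact nine_le_powerBase D
        · exact interpolationConst_le D
    _ = powerBase D ^ (13 * D + 4) := by ring

lemma regularityConst_le (D : ℕ) : regularityConst D ≤ powerBase D ^ (27 * D + 8) := by
  calc lindebergConst D ^ 2 * 9 ^ D ≤ (powerBase D ^ (13 * D + 4)) ^ 2 * powerBase D ^ D := by
        gcongr
        · exact lindebergConst_le D
        · exact nine_le_powerBase D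
    _ = powerBase D ^ (27 * D + 8) := by ring

lemma influentialBound_le (D : ℕ) : influentialBound D ≤ powerBase D ^ (30 * D + 12) := by
  calc D * (10240 * 9 ^ (3 * D) * D ^ 2 * regularityConst D)
      ≤ powerBase D * (powerBase D * powerBase D ^ (3 * D) * powerBase D ^ 2 *
          powerBase D ^ (27 * D + 8)) := by
        gcongr
        · exact self_le_powerBase D
        · unfold powerBase
          omega
        · exact nine_le_powerBase D
        · exact self_le_powerBase D
        · exact regularityConst_le D
    _ = powerBase D ^ (30 * D + 12) := by ring

lemma monomialBound_le (D : ℕ) : monomialBound D ≤ powerBase D ^ (31 * D + 13) := by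
  have one_le : 1 ≤ powerBase D ^ (31 * D + 12) := Nat.one_le_pow _ _ (powerBase_pos D)
  calc 16 * 9 ^ D * influentialBound D + 1
      ≤ 16 * powerBase D ^ D * powerBase D ^ (30 * D + 12) + powerBase D ^ (31 * D + 12) := by
        gcongr
        · exact nine_le_powerBase D
        · exact influentialBound_le D
    _ = 17 * powerBase D ^ (31 * D + 12) := by ring
    _ ≤ powerBase D * powerBase D ^ (31 * D + 12) := by
        gcongr
        unfold powerBase
        omega
    _ = powerBase D ^ (31 * D + 13) := by ring

lemma blockBound_le (D : ℕ) : blockBound D ≤ powerBase D ^ (62 * (D + 1) ^ 2) := by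
  have one_le : 1 ≤ powerBase D ^ (31 * D + 13) := Nat.one_le_pow _ _ (powerBase_pos D)
  have block_size_le : 4 * (D * monomialBound D) + 1 ≤ powerBase D ^ (31 * D + 14) := by
    calc 4 * (D * monomialBound D) + 1
        ≤ 4 * (D * powerBase D ^ (31 * D + 13)) + powerBase D ^ (31 * D + 13) := by
          gcongr
          exact monomialBound_le D
      _ = (4 * D + 1) * powerBase D ^ (31 * D + 13) := by ring
      _ ≤ powerBase D * powerBase D ^ (31 * D + 13) := by
          gcongr
          unfold powerBase
          omega
      _ = powerBase D ^ (31 * D + 14) := by ring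
  calc (4 * (D * monomialBound D) + 1) ^ (2 * D + 2)
      ≤ (powerBase D ^ (31 * D + 14)) ^ (2 * D + 2) := by gcongr
    _ = powerBase D ^ ((31 * D + 14) * (2 * D + 2)) := (pow_mul _ _ _).symm
    _ ≤ powerBase D ^ (62 * (D + 1) ^ 2) :=
        Nat.pow_le_pow_right (powerBase_pos D) (by nlinarith)

lemma bucketCount_le (D : ℕ) : bucketCount D ≤ powerBase D ^ (249 * (D + 1) ^ 2) := by
  set B := powerBase D ^ (62 * (D + 1) ^ 2) with hB
  have one_le : 1 ≤ B ^ 2 := Nat.one_le_pow _ _ (pow_pos (powerBase_pos D) _)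
  calc 2 * (2 * blockBound D ^ 2 + 1) ^ 2 ≤ 2 * (2 * B ^ 2 + B ^ 2) ^ 2 := by
        gcongr
        exact blockBound_le D
    _ = 18 * B ^ 4 := by ring
    _ ≤ powerBase D * B ^ 4 := by
        gcongr
        unfold powerBase
        omega
    _ = powerBase D ^ (248 * (D + 1) ^ 2 + 1) := by
        rw [hB, ← pow_mul, ← pow_succ', mul_right_comm]
        norm_num only
    _ ≤ powerBase D ^ (249 * (D + 1) ^ 2) :=
        Nat.pow_le_pow_right (powerBase_pos D) (by nlinarith [Nat.one_le_pow 2 (D + 1) (by omega)])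

lemma IsApproximable.card_le_powerBase_pow {V : Type} [Fintype V] [DecidableEq V]
    {f : (V → Bool) → Bool} {D : ℕ} (hf : IsApproximable f D (1 / 100))
    (htruly : TrulyVariate f) : Fintype.card V ≤ powerBase D ^ (250 * (D + 1) ^ 3) := by
  set M := powerBase D ^ (249 * (D + 1) ^ 2) with hM
  have one_le : 1 ≤ M ^ D := Nat.one_le_pow _ _ (pow_pos (powerBase_pos D) _)
  calc Fintype.card V ≤ 2 * bucketCount D * (2 * ((D + 1) * bucketCount D ^ D) + 2) :=
        hf.card_le htruly
    _ ≤ 2 * M * (2 * ((D + 1) * M ^ D) + 2 * ((D + 1) * M ^ D)) := by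
        gcongr 2 * ?_ * (2 * ((D + 1) * ?_ ^ D) + ?_)
        · exact bucketCount_le D
        · exact bucketCount_le D
        · nlinarith
    _ = 8 * (D + 1) * M ^ (D + 1) := by ring
    _ ≤ powerBase D * M ^ (D + 1) := by
        gcongr
        unfold powerBase
        omega
    _ = powerBase D ^ (249 * (D + 1) ^ 3 + 1) := by
        rw [hM, ← pow_mul, ← pow_succ', mul_assoc, ← pow_succ]
    _ ≤ powerBase D ^ (250 * (D + 1) ^ 3) :=
        Nat.pow_le_pow_right (powerBase_pos D) (by nlinarith [Nat.one_le_pow 3 (D + 1) (by omega)])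

lemma HasProbPoly.logb_card_le {V : Type} [Fintype V] [Nonempty V] {f : (V → Bool) → Bool} {d : ℕ}
    (hf : HasProbPoly f (1 / 3) d) (htruly : TrulyVariate f) :
    Real.logb 2 (Fintype.card V) ≤
      250 * 80 ^ 3 * ((d : ℝ) + 1) ^ 3 * Real.logb 2 (1600000 * ((d : ℝ) + 1)) := by
  have card_le : (Fintype.card V : ℝ) ≤ powerBase (80 * d) ^ (250 * (80 * d + 1) ^ 3) := by
    exact_mod_cast hf.isApproximable.card_le_powerBase_pow htruly
  have base_le : (powerBase (80 * d) : ℝ) ≤ 1600000 * (d + 1) := by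
    push_cast [powerBase]
    linarith
  have one_le_base : (1 : ℝ) ≤ powerBase (80 * d) := by exact_mod_cast powerBase_pos _
  calc Real.logb 2 (Fintype.card V)
      ≤ Real.logb 2 (powerBase (80 * d) ^ (250 * (80 * d + 1) ^ 3)) :=
        Real.logb_le_logb_of_le one_lt_two (by positivity) card_le
    _ = 250 * (80 * d + 1) ^ 3 * Real.logb 2 (powerBase (80 * d)) := by
        rw [Real.logb_pow]
        push_cast
        rfl
    _ ≤ 250 * (80 * (d + 1)) ^ 3 * Real.logb 2 (1600000 * ((d : ℝ) + 1)) := by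
        gcongr
        · exact Real.logb_nonneg one_lt_two one_le_base
        · linarith
        · exact one_lt_two
    _ = _ := by ring

/-! ### The probabilistic degree -/

lemma exists_evalBool_eq {V : Type} [Finite V] (f : (V → Bool) → Bool) :
    ∃ P : MvPolynomial V ℝ, ∀ a, evalBool a P = if f a then (1 : ℝ) else 0 := by
  have := Fintype.ofFinite V
  refine ⟨∑ b : V → Bool, MvPolynomial.C (if f b then (1 : ℝ) else 0) *
    ∏ i, if b i then MvPolynomial.X i else 1 - MvPolynomial.X i, fun a ↦ ?_⟩
  simp only [evalBool, map_sum, map_mul, map_prod, MvPolynomial.eval_C]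
  rw [Finset.sum_eq_single_of_mem a (Finset.mem_univ a) fun b _ hba ↦ ?_]
  · rw [Finset.prod_eq_one, mul_one]
    intro i _
    cases ha : a i <;> simp [ha]
  · obtain ⟨i, hi⟩ := Function.ne_iff.1 hba
    rw [Finset.prod_eq_zero (Finset.mem_univ i), mul_zero]
    cases ha : a i <;> cases hb : b i <;> simp_all

lemma hasProbPoly_pdeg {V : Type} [Finite V] {ε : ℝ} (hε : 0 ≤ ε) (f : (V → Bool) → Bool) :
    HasProbPoly f ε (pdeg ε f) := by
  obtain ⟨P, hP⟩ := exists_evalBool_eq f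
  exact Nat.sInf_mem (s := {d | HasProbPoly f ε d}) ⟨P.totalDegree, 1, fun _ ↦ 1, fun _ ↦ P,
    fun _ ↦ zero_le_one, by simp, fun _ ↦ le_rfl, fun a ↦ by simpa [hP] using hε⟩

lemma eventually_mul_logb_lt_rpow {δ : ℝ} (hδ : 0 < δ) (A : ℝ) {B : ℝ} (hB : 0 < B) :
    ∀ᶠ x : ℝ in Filter.atTop, A * Real.logb 2 (B * x) < x ^ δ := by
  have log_isLittleO : (fun x : ℝ ↦ A / Real.log 2 * Real.log (B * x)) =o[Filter.atTop]
      fun x ↦ (B * x) ^ δ :=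
    ((isLittleO_log_rpow_atTop hδ).comp_tendsto
      (Filter.tendsto_id.const_mul_atTop hB)).const_mul_left _
  filter_upwards [log_isLittleO.bound (c := (2 * B ^ δ)⁻¹) (by positivity),
    Filter.eventually_gt_atTop 0] with x hx hx0
  calc A * Real.logb 2 (B * x) = A / Real.log 2 * Real.log (B * x) := by
        rw [Real.logb]
        ring
    _ ≤ (2 * B ^ δ)⁻¹ * (B * x) ^ δ := by
        rw [Real.norm_of_nonneg (by positivity : 0 ≤ (B * x) ^ δ)] at hx
        exact (le_abs_self _).trans hx
    _ = x ^ δ / 2 := by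
        rw [Real.mul_rpow hB.le hx0.le]
        field_simp
    _ < x ^ δ := half_lt_self (by positivity)

lemma eventually_rpow_le_of_le_pow_mul_logb {ε : ℝ} (hε : 0 < ε) {A B : ℝ} (hA : 0 ≤ A)
    (hB : 1 ≤ B) : ∀ᶠ x : ℝ in Filter.atTop, ∀ d : ℝ, 0 ≤ d →
      x ≤ A * (d + 1) ^ 3 * Real.logb 2 (B * (d + 1)) → x ^ (1 / 3 - ε) ≤ d := by
  set δ := min ε (1 / 3)
  have hδ0 : 0 < δ := by positivity
  have hδ3 : δ ≤ 1 / 3 := min_le_right _ _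
  filter_upwards [eventually_mul_logb_lt_rpow (δ := 3 * δ) (by positivity) (8 * A)
    (B := 2 * B) (by positivity), Filter.eventually_ge_atTop 1] with x hx hx1 d hd hxd
  by_contra! hlt
  set s := x ^ (1 / 3 - δ)
  have hs1 : 1 ≤ s := Real.one_le_rpow hx1 (by linarith)
  have hds : d + 1 ≤ 2 * s := by
    have : d ≤ s := hlt.le.trans
      (Real.rpow_le_rpow_of_exponent_le hx1 (by linarith [min_le_left ε (1 / 3)]))
    linarith
  have hsx : s ≤ x :=
    (Real.rpow_le_rpow_of_exponent_le hx1 (by linarith)).trans_eq (Real.rpow_one x)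
  have pow_mul_rpow : s ^ 3 * x ^ (3 * δ) = x := by
    rw [← Real.rpow_natCast, ← Real.rpow_mul (by positivity), ← Real.rpow_add (by positivity)]
    ring_nf
    exact Real.rpow_one x
  refine lt_irrefl x ?_
  calc x ≤ A * (d + 1) ^ 3 * Real.logb 2 (B * (d + 1)) := hxd
    _ ≤ A * (2 * s) ^ 3 * Real.logb 2 (B * (2 * x)) := by
        gcongr
        · exact Real.logb_nonneg one_lt_two (by nlinarith)
        · exact one_lt_two
        · linarith
    _ = s ^ 3 * (8 * A * Real.logb 2 (2 * B * x)) := by ring_nf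
    _ < s ^ 3 * x ^ (3 * δ) := by gcongr
    _ = x := pow_mul_rpow

theorem unconditional_lower_bound_general {ε : ℝ} (hε : 0 < ε) :
    ∃ N : ℕ, ∀ (V : Type) [Fintype V], N ≤ Fintype.card V →
      ∀ f : (V → Bool) → Bool, TrulyVariate f →
        Real.logb 2 (Fintype.card V) ^ ((1 : ℝ) / 3 - ε) ≤ pdeg (1 / 3) f := by
  have tendsto_logb : Filter.Tendsto (fun n : ℕ ↦ Real.logb 2 n) Filter.atTop Filter.atTop :=
    (Real.tendsto_logb_atTop one_lt_two).comp tendsto_natCast_atTop_atTop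
  obtain ⟨N, hN⟩ := Filter.eventually_atTop.1 <| (tendsto_logb.eventually <|
    eventually_rpow_le_of_le_pow_mul_logb hε (A := 250 * 80 ^ 3) (B := 1600000) (by norm_num)
      (by norm_num)).and (Filter.eventually_gt_atTop 0)
  refine ⟨N, fun V _ hV f htruly ↦ ?_⟩
  obtain ⟨hlog, hcard⟩ := hN _ hV
  have : Nonempty V := Fintype.card_pos_iff.1 hcard
  exact hlog _ (by positivity) ((hasProbPoly_pdeg (by norm_num) f).logb_card_le htruly)

theorem unconditional_lower_bound :
    ∀ ε : ℝ, 0 < ε → ∃ N : ℕ, ∀ n : ℕ, N ≤ n →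
      ∀ f : (Fin n → Bool) → Bool, TrulyVariate f →
        (Real.logb 2 n) ^ ((1:ℝ)/3 - ε) ≤ (pdeg (1/3) f : ℝ) := by
  intro ε hε
  obtain ⟨N, hN⟩ := unconditional_lower_bound_general hε
  exact ⟨N, fun n hn ↦ by simpa using hN (Fin n) (by simpa using hn)⟩
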